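/- Let Q be a finite quiver and d ∈ ℕ^{Q₀} ∖ {0} such that (Q,d) has property (P). Set D := Σ_{i∈Q₀} d_i² − 1 + 2(1 − ⟨d,d⟩), where ⟨d,d⟩ := Σ_i d_i² − Σ_{a∈Q₁} d_{s(a)} d_{t(a)}. Then there is a finite set S of primes such that for every prime p ∉ S and every power q of p, the sequence n ↦ q^{−nD} · #{ (x,y) : x_a ∈ M_{d_{t(a)} × d_{s(a)}}(𝔽_q[t]/(t^n)), y_a ∈ M_{d_{s(a)} × d_{t(a)}}(𝔽_q[t]/(t^n)) for a ∈ Q₁, and Σ_{a : t(a)=i} x_a y_a − Σ_{a : s(a)=i} y_a x_a = 0 for every i ∈ Q₀ } converges as n → ∞. -/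

import Mathlib

/-- A finite quiver (equivalently, a finite multigraph with a chosen orientation of each
edge): finitely many vertices and arrows, with source and target maps. -/
structure FinQuiver where
  V : Type
  E : Type
  [fintypeV : Fintype V]
  [fintypeE : Fintype E]
  [decEqV : DecidableEq V]
  s : E → V
  t : E → V

attribute [instance] FinQuiver.fintypeV FinQuiver.fintypeE FinQuiver.decEqV

namespace FinQuiver

/-- The adjacency (simple) graph of the underlying multigraph: two vertices are adjacent
if some edge joins them.  Connectivity of the multigraph only depends on this graph. -/
def adjGraph (G : FinQuiver) : SimpleGraph G.V :=
  SimpleGraph.fromRel fun a b => ∃ e : G.E, G.s e = a ∧ G.t e = b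

/-- The number of connected components of the underlying multigraph. -/
noncomputable def c (G : FinQuiver) : ℕ :=
  Nat.card G.adjGraph.ConnectedComponent

/-- The Betti number `b(Q) = c(Q) - #Q₀ + #Q₁` of the underlying multigraph. -/
noncomputable def betti (G : FinQuiver) : ℤ :=
  (G.c : ℤ) - Fintype.card G.V + Fintype.card G.E

/-- The underlying multigraph is connected. -/
def Connected (G : FinQuiver) : Prop := G.adjGraph.Connected

/-- Deletion of the edge `e`. -/
noncomputable def deleteEdge (G : FinQuiver) (e : G.E) : FinQuiver :=
  letI : DecidableEq G.E := Classical.decEq _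
  { V := G.V, E := {e' : G.E // e' ≠ e}, s := fun e' => G.s e'.1, t := fun e' => G.t e'.1 }

/-- The underlying multigraph is 2-connected: it is connected and stays connected after
deleting any single edge. -/
def TwoConnected (G : FinQuiver) : Prop :=
  G.Connected ∧ ∀ e : G.E, (G.deleteEdge e).Connected

/-- Restriction `Q|_I` to a subset `I` of the vertices (full sub(multi)graph). -/
noncomputable def restrictV (G : FinQuiver) (I : Set G.V) : FinQuiver :=
  letI : DecidablePred (· ∈ I) := Classical.decPred _
  { V := ↥I
    E := {e : G.E // G.s e ∈ I ∧ G.t e ∈ I}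
    s := fun e => ⟨G.s e.1, e.2.1⟩
    t := fun e => ⟨G.t e.1, e.2.2⟩ }

/-- Restriction `Q|_J` to a subset `J` of the edges (keeping all vertices). -/
noncomputable def restrictE (G : FinQuiver) (J : Set G.E) : FinQuiver :=
  letI : DecidablePred (· ∈ J) := Classical.decPred _
  { V := G.V
    E := ↥J
    s := fun e => G.s e.1
    t := fun e => G.t e.1 }

end FinQuiver

/-- The ring of truncated polynomials `F[t]/(t^α)`. -/
abbrev TruncRing (F : Type) [CommRing F] (α : ℕ) : Type :=
  Polynomial F ⧸ Ideal.span {(Polynomial.X : Polynomial F) ^ α}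

/-- The image of `t` in `F[t]/(t^α)`. -/
noncomputable def tvar (F : Type) [CommRing F] (α : ℕ) : TruncRing F α :=
  Ideal.Quotient.mk _ (Polynomial.X : Polynomial F)
/-- A locally free representation of rank `r` of the quiver `G` over `R`: a matrix
`x_a` of size `r_{t(a)} × r_{s(a)}` for every arrow `a`. -/
abbrev QRep (G : FinQuiver) (R : Type) [CommRing R] (r : G.V → ℕ) : Type :=
  ∀ a : G.E, Matrix (Fin (r (G.t a))) (Fin (r (G.s a))) R

/-- The second component of a pair in the doubled quiver: a matrix `y_a` of size
`r_{s(a)} × r_{t(a)}` for every arrow `a`. -/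
abbrev QCoRep (G : FinQuiver) (R : Type) [CommRing R] (r : G.V → ℕ) : Type :=
  ∀ a : G.E, Matrix (Fin (r (G.s a))) (Fin (r (G.t a))) R

/-- The moment map of the quiver `G`:
`μ(x,y)_i := Σ_{a : t(a)=i} x_a y_a − Σ_{a : s(a)=i} y_a x_a`. -/
noncomputable def momentMap (G : FinQuiver) {R : Type} [CommRing R] {r : G.V → ℕ}
    (x : QRep G R r) (y : QCoRep G R r) (i : G.V) : Matrix (Fin (r i)) (Fin (r i)) R :=
  (∑ a : G.E, if h : G.t a = i then
      cast (congrArg (fun v => Matrix (Fin (r v)) (Fin (r v)) R) h) (x a * y a) else 0)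
  - ∑ a : G.E, if h : G.s a = i then
      cast (congrArg (fun v => Matrix (Fin (r v)) (Fin (r v)) R) h) (y a * x a) else 0

/-- The Euler form `⟨r,r'⟩ := Σ_{i∈Q₀} r_i r'_i − Σ_{a∈Q₁} r_{s(a)} r'_{t(a)}` of `G`. -/
def eulerForm (G : FinQuiver) (r r' : G.V → ℕ) : ℤ :=
  ∑ i : G.V, (r i : ℤ) * (r' i : ℤ) - ∑ a : G.E, (r (G.s a) : ℤ) * (r' (G.t a) : ℤ)

/-- The change-of-basis action of `GL_{α,r} = ∏_i GL_{r_i}(R)` on representations: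
`(g·x)_a := g_{t(a)} x_a g_{s(a)}⁻¹`. -/
def glAct (G : FinQuiver) {R : Type} [CommRing R] {r : G.V → ℕ}
    (g : ∀ i : G.V, (Matrix (Fin (r i)) (Fin (r i)) R)ˣ) (x : QRep G R r) : QRep G R r :=
  fun a => (g (G.t a) : Matrix (Fin (r (G.t a))) (Fin (r (G.t a))) R) * x a *
    (((g (G.s a))⁻¹ : (Matrix (Fin (r (G.s a))) (Fin (r (G.s a))) R)ˣ) :
      Matrix (Fin (r (G.s a))) (Fin (r (G.s a))) R)

/-- `A` is block-diagonal for the splittings `m = m' + (m − m')`, `n = n' + (n − n')`: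
all entries `A k l` with `(k < m') ↮ (l < n')` vanish. -/
def IsBlockDiag {R : Type} [CommRing R] {m n : ℕ} (m' n' : ℕ)
    (A : Matrix (Fin m) (Fin n) R) : Prop :=
  ∀ (k : Fin m) (l : Fin n), ¬ ((k : ℕ) < m' ↔ (l : ℕ) < n') → A k l = 0

/-- `r'` is the rank vector of a direct summand of the representation `x`: for some
complementary rank vector `r''` with `r' + r'' = r`, some change of basis `g` makes all
matrices of `x` block-diagonal with diagonal blocks of sizes prescribed by `r'`, `r''`.
(In particular `r' = 0` and `r' = r` always qualify.) -/
def IsSummandRank (G : FinQuiver) {R : Type} [CommRing R] {r : G.V → ℕ}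
    (x : QRep G R r) (r' : G.V → ℕ) : Prop :=
  ∃ r'' : G.V → ℕ, (∀ i, r' i + r'' i = r i) ∧
    ∃ g : ∀ i : G.V, (Matrix (Fin (r i)) (Fin (r i)) R)ˣ,
      ∀ a : G.E, IsBlockDiag (r' (G.t a)) (r' (G.s a)) (glAct G g x a)

/-- `x` is decomposable: it is a direct sum of two representations of nonzero ranks. -/
def Decomposable (G : FinQuiver) {R : Type} [CommRing R] {r : G.V → ℕ}
    (x : QRep G R r) : Prop :=
  ∃ r' r'' : G.V → ℕ, (∀ i, r' i + r'' i = r i) ∧ r' ≠ 0 ∧ r'' ≠ 0 ∧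
    ∃ g : ∀ i : G.V, (Matrix (Fin (r i)) (Fin (r i)) R)ˣ,
      ∀ a : G.E, IsBlockDiag (r' (G.t a)) (r' (G.s a)) (glAct G g x a)
/-- `Q` is totally negative: every vertex carries at least two loops, and every pair of
distinct vertices is joined by at least one arrow. -/
def TotallyNegative (G : FinQuiver) : Prop :=
  (∀ i : G.V, 2 ≤ (Finset.univ.filter fun a : G.E => G.s a = i ∧ G.t a = i).card) ∧
  (∀ i j : G.V, i ≠ j → ∃ a : G.E, (G.s a = i ∧ G.t a = j) ∨ (G.s a = j ∧ G.t a = i))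

/-- `(Q,d)` has property (P): `Q` is totally negative, and it is not the case that the
support of `d` consists of exactly two vertices `i ≠ j` joined by exactly one arrow of
`Q` with `d_i = d_j = 1`. -/
def PropertyP (G : FinQuiver) (d : G.V → ℕ) : Prop :=
  TotallyNegative G ∧
  ¬ ∃ i j : G.V, i ≠ j ∧ {v : G.V | d v ≠ 0} = ({i, j} : Set G.V) ∧
      (Finset.univ.filter fun a : G.E =>
        (G.s a = i ∧ G.t a = j) ∨ (G.s a = j ∧ G.t a = i)).card = 1 ∧
      d i = 1 ∧ d j = 1

open Module

section LinearAlgebra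

variable {K A P Q : Type*} [Field K] [AddCommGroup A] [Module K A] [AddCommGroup P] [Module K P]
  [AddCommGroup Q] [Module K Q]

theorem finrank_map_add_finrank_inf_ker [FiniteDimensional K A] (f : A →ₗ[K] P)
    (S : Submodule K A) :
    finrank K (S.map f) + finrank K (S ⊓ LinearMap.ker f : Submodule K A) = finrank K S := by
  have h := LinearMap.finrank_range_add_finrank_ker (f.domRestrict S)
  rw [LinearMap.range_domRestrict, LinearMap.ker_domRestrict] at h
  rw [← h, ← Submodule.map_comap_subtype]
  congr 1
  rw [Submodule.finrank_map_subtype_eq]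

theorem finrank_map_eq_add_of_ker_le [FiniteDimensional K A] (f : A →ₗ[K] P) (g : A →ₗ[K] Q)
    (h : LinearMap.ker f ≤ LinearMap.ker g) (S : Submodule K A) :
    finrank K (S.map f) = finrank K (S.map g)
      + finrank K ((S ⊓ LinearMap.ker g : Submodule K A).map f) := by
  have h1 := finrank_map_add_finrank_inf_ker f S
  have h2 := finrank_map_add_finrank_inf_ker g S
  have h3 := finrank_map_add_finrank_inf_ker f (S ⊓ LinearMap.ker g)
  rw [inf_assoc, inf_eq_right.2 h] at h3
  omega

theorem finrank_iSup_le_sum {ι : Type*} [Fintype ι] [FiniteDimensional K A]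
    (S : ι → Submodule K A) :
    finrank K (⨆ i, S i : Submodule K A) ≤ ∑ i, finrank K (S i) := by
  classical
  rw [← Finset.sup_univ_eq_iSup]
  induction (Finset.univ : Finset ι) using Finset.induction_on with
  | empty => simp
  | insert i s hi ih =>
    rw [Finset.sup_insert, Finset.sum_insert hi]
    exact (Submodule.finrank_add_le_finrank_add_finrank _ _).trans (by omega)

theorem finrank_le_of_range_le_of_le_ker [FiniteDimensional K A] [FiniteDimensional K P]
    (S : Submodule K (A →ₗ[K] P)) (Y : Submodule K P) (Z : Submodule K A)
    (hY : ∀ f ∈ S, LinearMap.range f ≤ Y) (hZ : ∀ f ∈ S, Z ≤ LinearMap.ker f) :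
    finrank K S ≤ finrank K Y * (finrank K A - finrank K Z) := by
  have hq : finrank K (A ⧸ Z) = finrank K A - finrank K Z := by
    have := Submodule.finrank_quotient_add_finrank Z; omega
  let Φ : ((A ⧸ Z) →ₗ[K] Y) →ₗ[K] (A →ₗ[K] P) :=
    (LinearMap.lcomp K P Z.mkQ).comp (LinearMap.llcomp K (A ⧸ Z) Y P Y.subtype)
  have hS : S ≤ LinearMap.range Φ := by
    intro f hf
    refine ⟨Z.liftQ (f.codRestrict Y fun x => hY f hf ⟨x, rfl⟩) ?_, ?_⟩
    · intro x hx
      have := hZ f hf hx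
      simpa [Subtype.ext_iff] using this
    · ext x
      simp [Φ]
  calc finrank K S ≤ finrank K (LinearMap.range Φ) := Submodule.finrank_mono hS
    _ ≤ finrank K ((A ⧸ Z) →ₗ[K] Y) := LinearMap.finrank_range_le Φ
    _ = _ := by rw [Module.finrank_linearMap, hq, mul_comm]

end LinearAlgebra

theorem exists_smul_eq_of_isSimpleModule {K A M : Type*} [Field K] [IsAlgClosed K] [Ring A]
    [Algebra K A] [AddCommGroup M] [Module K M] [Module A M] [IsScalarTower K A M]
    [FiniteDimensional K M] [IsSimpleModule A M] (f : M →ₗ[K] M) :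
    ∃ a : A, ∀ m : M, a • m = f m := by
  have hs := (IsSimpleModule.algebraMap_end_bijective_of_isAlgClosed (A := A) (V := M) K).2
  let f' : End (End A M) M :=
    { toFun := f
      map_add' := map_add f
      map_smul' := by
        intro g m
        obtain ⟨c, rfl⟩ := hs g
        simp }
  obtain ⟨s, hs'⟩ := Module.Finite.fg_top (R := K) (M := M)
  obtain ⟨r, hr⟩ := jacobson_density (R := A) f' s
  refine ⟨r, fun m => ?_⟩
  have : m ∈ Submodule.span K (s : Set M) := by rw [hs']; trivial
  induction this using Submodule.span_induction with
  | mem m hm => exact (hr m hm).symm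
  | zero => simp
  | add _ _ _ _ h₁ h₂ => simp [h₁, h₂]
  | smul c x _ h => rw [smul_comm, h, map_smul]

section Rep

variable (K : Type*) {A : Type*} (U : Type*) [Field K] [Ring A] [Algebra K A]
  [AddCommGroup U] [Module K U] [Module A U] [IsScalarTower K A U]

/-- The action of an algebra on a module, as a linear map to endomorphisms. -/
def actEnd : A →ₗ[K] End K U := (Algebra.lsmul K K U).toLinearMap

@[simp] theorem actEnd_apply (a : A) (u : U) : actEnd K U a u = a • u := rfl

/-- The dimension of the space of operators on `U` induced by `S`. -/
noncomputable def actRank (S : Submodule K A) : ℕ := finrank K (S.map (actEnd K U))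

variable {U} in
/-- The dimension of `eX`. -/
noncomputable def peirceDim (e : A) (X : Submodule K U) : ℕ := finrank K (X.map (actEnd K U e))

/-- The Peirce component `f A e`. -/
def peirceBlock (e f : A) : Submodule K A := LinearMap.range (LinearMap.mulLeftRight K (f, e))

/-- The span of all commutators. -/
def commSpan (A : Type*) [Ring A] [Algebra K A] : Submodule K A :=
  Submodule.span K {x | ∃ a b : A, x = a * b - b * a}

variable {U}

/-- The elements acting by zero on the quotient by `U'`. -/
def quotAnn (U' : Submodule A U) : Submodule K A := LinearMap.ker (actEnd K (U ⧸ U'))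

variable {K}

theorem mem_quotAnn {U' : Submodule A U} {a : A} : a ∈ quotAnn K U' ↔ ∀ u : U, a • u ∈ U' := by
  rw [quotAnn, LinearMap.mem_ker, LinearMap.ext_iff]
  constructor
  · intro h u
    have := h (Submodule.Quotient.mk u)
    rwa [actEnd_apply, ← Submodule.Quotient.mk_smul, LinearMap.zero_apply,
      Submodule.Quotient.mk_eq_zero] at this
  · intro h u
    obtain ⟨u, rfl⟩ := Submodule.Quotient.mk_surjective _ u
    rw [actEnd_apply, ← Submodule.Quotient.mk_smul, LinearMap.zero_apply,
      Submodule.Quotient.mk_eq_zero]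
    exact h u

theorem mul_mem_quotAnn_left {U' : Submodule A U} (a : A) {b : A} (hb : b ∈ quotAnn K U') :
    a * b ∈ quotAnn K U' := by
  rw [mem_quotAnn] at *
  intro u
  rw [mul_smul]
  exact U'.smul_mem _ (hb u)

theorem mul_mem_quotAnn_right {U' : Submodule A U} {a : A} (b : A) (ha : a ∈ quotAnn K U') :
    a * b ∈ quotAnn K U' := by
  rw [mem_quotAnn] at *
  intro u
  rw [mul_smul]
  exact ha _

theorem comm_mem_commSpan (a b : A) : a * b - b * a ∈ commSpan K A :=
  Submodule.subset_span ⟨a, b, rfl⟩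

theorem actRank_eq_add [FiniteDimensional K A] (U' : Submodule A U) (S : Submodule K A) :
    actRank K U S = actRank K (U ⧸ U') S + actRank K U (S ⊓ quotAnn K U') := by
  refine finrank_map_eq_add_of_ker_le _ _ ?_ S
  intro a ha
  refine mem_quotAnn.2 fun u => ?_
  have := LinearMap.congr_fun (LinearMap.mem_ker.1 ha) u
  rw [actEnd_apply] at this
  rw [this]
  exact U'.zero_mem

/-- Elements of `quotAnn` are, up to commutators, concentrated on a rank one corner. -/
theorem actRank_quotAnn_le [IsAlgClosed K] [FiniteDimensional K A] [FiniteDimensional K U]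
    (U' : Submodule A U) [IsSimpleModule A U'] (p : A) (u₀ : U') (φ : U' →ₗ[K] K)
    (hφ : φ u₀ = 1) (hp : ∀ u : U', p • u = φ u • u₀) :
    actRank K U (quotAnn K U') ≤ actRank K U (commSpan K A ⊓ quotAnn K U')
      + actRank K U ((quotAnn K U').map (LinearMap.mulLeftRight K (p, p))) := by
  have : FiniteDimensional K U' :=
    FiniteDimensional.of_injective (U'.subtype.restrictScalars K) U'.injective_subtype
  set N := quotAnn K U' with hN
  have key : N ≤ (commSpan K A ⊓ N) ⊔ N.map (LinearMap.mulLeftRight K (p, p)) ⊔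
      LinearMap.ker (actEnd K U) := by
    intro n hn
    let b := Module.finBasis K U'
    have ht : ∀ k, ∃ t : A, ∀ u : U', t • u = b.coord k u • u₀ := fun k =>
      exists_smul_eq_of_isSimpleModule ((b.coord k).smulRight u₀)
    have hs : ∀ k, ∃ s : A, ∀ u : U', s • u = φ u • b k := fun k =>
      exists_smul_eq_of_isSimpleModule (φ.smulRight (b k))
    choose t ht using ht
    choose s hs using hs
    set T := (commSpan K A ⊓ N) ⊔ N.map (LinearMap.mulLeftRight K (p, p)) ⊔
      LinearMap.ker (actEnd K U) with hT
    have hcomm : ∀ a c : A, c ∈ N → a * c - c * a ∈ T := fun a c hc =>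
      le_sup_left (a := (commSpan K A ⊓ N) ⊔ N.map (LinearMap.mulLeftRight K (p, p)))
        (Submodule.mem_sup_left ⟨comm_mem_commSpan a c, sub_mem (mul_mem_quotAnn_left a hc)
          (mul_mem_quotAnn_right a hc)⟩)
    have hker : ∀ a : A, (∀ u : U, a • u = 0) → a ∈ T := fun a ha =>
      Submodule.mem_sup_right (LinearMap.mem_ker.2 (LinearMap.ext ha))
    have h1 : n - ∑ k, s k * (p * (t k * n)) ∈ T := by
      refine hker _ fun u => ?_
      have hnu : n • u ∈ U' := mem_quotAnn.1 hn u
      have : ∀ k, (s k * (p * (t k * n))) • u = ((b.coord k ⟨n • u, hnu⟩ • b k : U') : U) := by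
        intro k
        have e1 := ht k ⟨n • u, hnu⟩
        have e2 := hp u₀
        have e3 := hs k u₀
        rw [hφ, one_smul] at e2 e3
        have : (s k) • (p • (t k • (⟨n • u, hnu⟩ : U'))) = b.coord k ⟨n • u, hnu⟩ • b k := by
          rw [e1, smul_comm p, e2, smul_comm (s k), e3]
        rw [← this]
        simp [mul_smul]
      rw [sub_smul, Finset.sum_smul, Finset.sum_congr rfl fun k _ => this k,
        ← Submodule.coe_sum]
      simp only [Basis.coord_apply, b.sum_repr, sub_self]
    have h2 : ∀ m ∈ N, p * m ∈ T := by
      intro m hm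
      have e1 : p * m - p * (p * m) ∈ T := by
        refine hker _ fun u => ?_
        have hmu : m • u ∈ U' := mem_quotAnn.1 hm u
        have : p • (⟨m • u, hmu⟩ : U') = p • (p • (⟨m • u, hmu⟩ : U')) := by
          rw [hp, smul_comm p, hp u₀, hφ, one_smul]
        rw [sub_smul, sub_eq_zero, mul_smul, mul_smul, mul_smul]
        exact congrArg Subtype.val this
      have e2 := hcomm p (p * m) (mul_mem_quotAnn_left p hm)
      have e3 : p * m * p ∈ T := by
        refine le_sup_left (a := (commSpan K A ⊓ N) ⊔ N.map (LinearMap.mulLeftRight K (p, p)))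
          (Submodule.mem_sup_right ⟨m, hm, ?_⟩)
        simp
      have := add_mem (add_mem e1 e2) e3
      convert this using 1
      abel
    have h3 : ∑ k, s k * (p * (t k * n)) ∈ T := by
      refine sum_mem fun k _ => ?_
      have hm : t k * n ∈ N := mul_mem_quotAnn_left _ hn
      have e1 := hcomm (s k) (p * (t k * n)) (mul_mem_quotAnn_left p hm)
      have e2 := h2 (t k * n * s k) (mul_mem_quotAnn_right _ hm)
      have := add_mem e1 e2
      convert this using 1
      simp only [mul_assoc]
      abel
    simpa using add_mem h1 h3
  have h4 := Submodule.map_mono (f := actEnd K U) key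
  have h5 : (LinearMap.ker (actEnd K U : A →ₗ[K] End K U)).map (actEnd K U) = ⊥ := by
    rw [← le_bot_iff, Submodule.map_le_iff_le_comap]; rfl
  rw [Submodule.map_sup, Submodule.map_sup, h5, sup_bot_eq] at h4
  exact (Submodule.finrank_mono h4).trans (Submodule.finrank_add_le_finrank_add_finrank _ _)

end Rep

section Peirce

variable {K A U V : Type*} [Field K] [Ring A] [Algebra K A] [AddCommGroup U] [Module K U]
  [Module A U] [IsScalarTower K A U] [FiniteDimensional K U] [Fintype V]

theorem peirceDim_mono (e : A) {X Y : Submodule K U} (h : X ≤ Y) :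
    peirceDim K e X ≤ peirceDim K e Y :=
  Submodule.finrank_mono (Submodule.map_mono h)

theorem peirceDim_top_eq_add {e : A} (he : IsIdempotentElem e) (U' : Submodule A U) :
    peirceDim K e (⊤ : Submodule K U) = peirceDim K e (U'.restrictScalars K)
      + peirceDim K e (⊤ : Submodule K (U ⧸ U')) := by
  have h := finrank_map_add_finrank_inf_ker (U'.mkQ.restrictScalars K)
    ((⊤ : Submodule K U).map (actEnd K U e))
  have h1 : ((⊤ : Submodule K U).map (actEnd K U e)).map (U'.mkQ.restrictScalars K) =
      (⊤ : Submodule K (U ⧸ U')).map (actEnd K (U ⧸ U') e) := by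
    ext x
    constructor
    · rintro ⟨_, ⟨y, -, rfl⟩, rfl⟩
      exact ⟨U'.mkQ y, trivial, by simp⟩
    · rintro ⟨y, -, rfl⟩
      obtain ⟨y, rfl⟩ := Submodule.mkQ_surjective _ y
      exact ⟨_, ⟨y, trivial, rfl⟩, by simp⟩
  have h2 : (⊤ : Submodule K U).map (actEnd K U e) ⊓
      LinearMap.ker (U'.mkQ.restrictScalars K) = (U'.restrictScalars K).map (actEnd K U e) := by
    ext x
    constructor
    · rintro ⟨⟨y, -, rfl⟩, hx⟩
      have hx' : e • y ∈ U' := by simpa using hx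
      refine ⟨e • y, hx', ?_⟩
      rw [actEnd_apply, actEnd_apply, smul_smul, he.eq]
    · rintro ⟨y, hy, rfl⟩
      refine ⟨⟨y, trivial, rfl⟩, ?_⟩
      have : e • y ∈ U' := U'.smul_mem e hy
      simpa using this
  rw [h1, h2] at h
  unfold peirceDim
  omega

theorem finrank_le_sum_peirceDim {e : V → A} (he : ∑ i, e i = 1) (X : Submodule K U) :
    finrank K X ≤ ∑ i, peirceDim K (e i) X := by
  refine le_trans (Submodule.finrank_mono ?_) (finrank_iSup_le_sum _)
  intro x hx
  have : x = ∑ i, e i • x := by rw [← Finset.sum_smul, he, one_smul]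
  rw [this]
  exact sum_mem fun i _ => Submodule.mem_iSup_of_mem i ⟨x, hx, rfl⟩

theorem finrank_sup_ker_add {e : A} (X : Submodule K U) :
    finrank K (LinearMap.ker (actEnd K U e) ⊔ X : Submodule K U) + peirceDim K e (⊤ : Submodule K U)
      = finrank K U + peirceDim K e X := by
  have h1 := finrank_map_add_finrank_inf_ker (actEnd K U e) X
  have h2 := finrank_map_add_finrank_inf_ker (actEnd K U e) ⊤
  have h3 := Submodule.finrank_sup_add_finrank_inf_eq (LinearMap.ker (actEnd K U e)) X
  rw [top_inf_eq, finrank_top] at h2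
  rw [inf_comm] at h3
  unfold peirceDim
  omega

/-- Operators in a Peirce block that map into `U'` and kill `X`. -/
theorem actRank_peirceBlock_le {e f : A} (hf : IsIdempotentElem f)
    (U' : Submodule A U) (X : Submodule K U)
    (hX : ∀ n ∈ quotAnn K U', ∀ x ∈ X, n • x = 0) :
    (actRank K U (peirceBlock K e f ⊓ quotAnn K U') : ℤ) ≤
      peirceDim K f (U'.restrictScalars K) * (peirceDim K e (⊤ : Submodule K U) -
        peirceDim K e X) := by
  have h := finrank_le_of_range_le_of_le_ker
    ((peirceBlock K e f ⊓ quotAnn K U').map (actEnd K U))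
    ((U'.restrictScalars K).map (actEnd K U f)) (LinearMap.ker (actEnd K U e) ⊔ X) ?_ ?_
  · have h2 := finrank_sup_ker_add (e := e) X
    have h3 := peirceDim_mono e (le_top : X ≤ ⊤)
    have h4 : finrank K U - finrank K (LinearMap.ker (actEnd K U e) ⊔ X : Submodule K U)
      = peirceDim K e (⊤ : Submodule K U) - peirceDim K e X := by omega
    rw [h4] at h
    rw [← Nat.cast_sub h3]
    exact_mod_cast h
  · rintro _ ⟨a, ⟨⟨b, rfl⟩, ha⟩, rfl⟩ _ ⟨u, rfl⟩
    refine ⟨_, mem_quotAnn.1 ha u, ?_⟩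
    simp [smul_smul, ← mul_assoc, hf.eq]
  · rintro _ ⟨a, ⟨⟨b, rfl⟩, ha⟩, rfl⟩
    refine sup_le ?_ ?_
    · intro u hu
      have hu' : e • u = 0 := hu
      simp [mul_smul, hu']
    · intro u hu
      exact hX _ ha _ hu

/-- The bilinear form with coefficients `w`. -/
def weightForm (w : V → V → ℕ) (u v : V → ℕ) : ℤ := ∑ i, ∑ j, (w i j : ℤ) * (u i * v j)

theorem sum_mul_sum_le_weightForm {w : V → V → ℕ} (hw : ∀ i j, 1 ≤ w i j) (u v : V → ℕ) :
    ((∑ i, u i : ℕ) : ℤ) * (∑ i, v i : ℕ) ≤ weightForm w u v := by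
  push_cast
  rw [Finset.sum_mul_sum]
  refine Finset.sum_le_sum fun i _ => Finset.sum_le_sum fun j _ => ?_
  have : (1 : ℤ) ≤ w i j := by exact_mod_cast hw i j
  nlinarith [mul_nonneg (Nat.cast_nonneg (α := ℤ) (u i)) (Nat.cast_nonneg (α := ℤ) (v j))]

theorem mul_le_weightForm (w : V → V → ℕ) (u v : V → ℕ) (i j : V) :
    (w i j : ℤ) * (u i * v j) ≤ weightForm w u v := by
  refine le_trans ?_ (Finset.single_le_sum (f := fun i => ∑ j, (w i j : ℤ) * (u i * v j))
    (fun i _ => Finset.sum_nonneg fun j _ => by positivity) (Finset.mem_univ i))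
  exact Finset.single_le_sum (f := fun j => (w i j : ℤ) * (u i * v j))
    (fun j _ => by positivity) (Finset.mem_univ j)

theorem weightForm_nonneg (w : V → V → ℕ) (u v : V → ℕ) : 0 ≤ weightForm w u v :=
  Finset.sum_nonneg fun i _ => Finset.sum_nonneg fun j _ => by positivity

theorem weightForm_mono_right (w : V → V → ℕ) (u : V → ℕ) {v v' : V → ℕ} (h : ∀ i, v i ≤ v' i) :
    weightForm w u v ≤ weightForm w u v' := by
  refine Finset.sum_le_sum fun i _ => Finset.sum_le_sum fun j _ => ?_
  have := h j
  gcongr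

variable (K U) in
/-- The weighted codimension of the Peirce blocks minus twice the dimension of the
abelianization. -/
noncomputable def peircePsi (w : V → V → ℕ) (e : V → A) : ℤ :=
  ∑ i, ∑ j, (w i j : ℤ) * ((peirceDim K (e i) (⊤ : Submodule K U) : ℤ) *
      peirceDim K (e j) (⊤ : Submodule K U) - actRank K U (peirceBlock K (e i) (e j)))
    - 2 * ((actRank K U (⊤ : Submodule K A) : ℤ) - actRank K U (commSpan K A))

theorem peircePsi_ge [FiniteDimensional K A] {w : V → V → ℕ}
    (hsymm : ∀ i j, w i j = w j i) {e : V → A}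
    (he : ∀ i, IsIdempotentElem (e i)) (U' : Submodule A U) (X : Submodule K U)
    (hX : ∀ n ∈ quotAnn K U', ∀ x ∈ X, n • x = 0) {k : ℕ}
    (hk : actRank K U (quotAnn K U') ≤ actRank K U (commSpan K A ⊓ quotAnn K U') + k) :
    peircePsi K (U ⧸ U') w e
      + weightForm w (fun i => peirceDim K (e i) (U'.restrictScalars K))
          (fun i => peirceDim K (e i) (⊤ : Submodule K (U ⧸ U')))
      + weightForm w (fun i => peirceDim K (e i) (U'.restrictScalars K))
          (fun i => peirceDim K (e i) X) - 2 * k ≤ peircePsi K U w e := by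
  have h1 := actRank_eq_add U' (⊤ : Submodule K A)
  have h2 := actRank_eq_add U' (commSpan K A)
  rw [top_inf_eq] at h1
  have h3 : weightForm w (fun i => peirceDim K (e i) (U'.restrictScalars K))
      (fun i => peirceDim K (e i) X) = ∑ i, ∑ j, (w i j : ℤ) *
        (peirceDim K (e j) (U'.restrictScalars K) * peirceDim K (e i) X) := by
    rw [weightForm, Finset.sum_comm]
    exact Finset.sum_congr rfl fun i _ => Finset.sum_congr rfl fun j _ => by rw [hsymm j i]
  rw [h3]
  unfold peircePsi weightForm
  have h4 : ∀ i j, (w i j : ℤ) * ((peirceDim K (e i) (⊤ : Submodule K (U ⧸ U')) : ℤ) *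
      peirceDim K (e j) (⊤ : Submodule K (U ⧸ U'))
        - actRank K (U ⧸ U') (peirceBlock K (e i) (e j))) + (w i j : ℤ) *
        (peirceDim K (e i) (U'.restrictScalars K) *
          peirceDim K (e j) (⊤ : Submodule K (U ⧸ U'))) + (w i j : ℤ) *
        (peirceDim K (e j) (U'.restrictScalars K) * peirceDim K (e i) X) ≤
      (w i j : ℤ) * ((peirceDim K (e i) (⊤ : Submodule K U) : ℤ) *
      peirceDim K (e j) (⊤ : Submodule K U) - actRank K U (peirceBlock K (e i) (e j))) := by
    intro i j
    rw [← mul_add, ← mul_add]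
    refine mul_le_mul_of_nonneg_left ?_ (Nat.cast_nonneg _)
    rw [actRank_eq_add U' (peirceBlock K (e i) (e j))]
    have h5 := actRank_peirceBlock_le (e := e i) (he j) U' X hX
    rw [peirceDim_top_eq_add (he i) U'] at h5 ⊢
    rw [peirceDim_top_eq_add (he j) U']
    push_cast at h5 ⊢
    nlinarith
  have h6 := Finset.sum_le_sum fun i (_ : i ∈ Finset.univ) =>
    Finset.sum_le_sum fun j (_ : j ∈ Finset.univ) => h4 i j
  simp only [Finset.sum_add_distrib] at h6
  zify at h1 h2 hk
  linarith

end Peirce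

theorem finiteDimensional_of_submodule {K A U : Type*} [Field K] [Ring A] [Algebra K A]
    [AddCommGroup U] [Module K U] [Module A U] [IsScalarTower K A U] [FiniteDimensional K U]
    (U' : Submodule A U) : FiniteDimensional K U' :=
  FiniteDimensional.of_injective (U'.subtype.restrictScalars K) U'.injective_subtype

theorem exists_dual_eq_one {K M : Type*} [Field K] [AddCommGroup M] [Module K M] {u : M}
    (hu : u ≠ 0) : ∃ φ : M →ₗ[K] K, φ u = 1 := by
  by_contra! h
  refine hu ((Module.forall_dual_apply_eq_zero_iff K u).1 fun f => ?_)
  by_contra hf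
  exact h ((f u)⁻¹ • f) (by simp [hf])

theorem finrank_span_singleton_le_one {K M : Type*} [Field K] [AddCommGroup M] [Module K M]
    (u : M) : finrank K (Submodule.span K {u}) ≤ 1 :=
  (finrank_span_le_card {u}).trans (by simp)

section Cases

variable {K A U V : Type*} [Field K] [IsAlgClosed K] [Ring A] [Algebra K A]
  [FiniteDimensional K A] [AddCommGroup U] [Module K U] [Module A U] [IsScalarTower K A U]
  [FiniteDimensional K U]

theorem exists_rank_one_mem_quotAnn (U' : Submodule A U) [IsSimpleModule A U']
    {n : A} (hn : n ∈ quotAnn K U') {u₁ : U} (hu₁ : u₁ ∈ U') (hne : n • u₁ ≠ 0) :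
    ∃ (p : A) (u₀ : U'), p ∈ quotAnn K U' ∧ p • u₀ = u₀ ∧ u₀ ≠ 0 ∧
      (∀ u : U, ∃ c : K, p • u = c • (u₀ : U)) ∧
      actRank K U (quotAnn K U') ≤ actRank K U (commSpan K A ⊓ quotAnn K U') + 1 := by
  have := finiteDimensional_of_submodule (K := K) U'
  set v₁ : U' := ⟨n • u₁, U'.smul_mem n hu₁⟩ with hv₁
  have hv : v₁ ≠ 0 := fun h => hne (congrArg Subtype.val h)
  obtain ⟨φ, hφ⟩ := exists_dual_eq_one (K := K) hv
  obtain ⟨s, hs⟩ := exists_smul_eq_of_isSimpleModule (A := A)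
    (φ.smulRight (⟨u₁, hu₁⟩ : U'))
  obtain ⟨t, ht⟩ := exists_smul_eq_of_isSimpleModule (A := A) (φ.smulRight v₁)
  have hp : t * (n * s) ∈ quotAnn K U' :=
    mul_mem_quotAnn_left _ (mul_mem_quotAnn_right _ hn)
  have hpu : ∀ u : U', (t * (n * s)) • u = φ u • v₁ := by
    intro u
    rw [mul_smul, mul_smul, hs, LinearMap.smulRight_apply, smul_comm n, smul_comm t]
    have : n • (⟨u₁, hu₁⟩ : U') = v₁ := rfl
    rw [this, ht, LinearMap.smulRight_apply, hφ, one_smul]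
  have hr : ∀ u : U, ∃ c : K, (t * (n * s)) • u = c • (v₁ : U) := by
    intro u
    refine ⟨φ ⟨n • s • u, mem_quotAnn.1 hn _⟩, ?_⟩
    have := congrArg Subtype.val (ht ⟨n • s • u, mem_quotAnn.1 hn _⟩)
    simpa [mul_smul] using this
  refine ⟨t * (n * s), v₁, hp, by rw [hpu, hφ, one_smul], hv, hr, ?_⟩
  refine (actRank_quotAnn_le U' _ v₁ φ hφ hpu).trans (Nat.add_le_add_left ?_ _)
  set p := t * (n * s) with hpdef
  have hle : ((quotAnn K U').map (LinearMap.mulLeftRight K (p, p))).map (actEnd K U) ≤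
      Submodule.span K {actEnd K U p} := by
    rintro _ ⟨_, ⟨m, hm, rfl⟩, rfl⟩
    refine Submodule.mem_span_singleton.2 ⟨φ ⟨m • (v₁ : U), mem_quotAnn.1 hm _⟩, ?_⟩
    ext u
    obtain ⟨c, hc⟩ := hr u
    have := congrArg Subtype.val (hpu ⟨m • (v₁ : U), mem_quotAnn.1 hm _⟩)
    simp only [SetLike.val_smul] at this
    simp only [LinearMap.smul_apply, actEnd_apply, LinearMap.mulLeftRight_apply, mul_smul, hc]
    rw [smul_comm m c, smul_comm p c, this]
    exact smul_comm _ _ _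
  exact (Submodule.finrank_mono hle).trans (finrank_span_singleton_le_one _)

theorem exists_vertex_of_quotAnn_smul_eq_zero [Fintype V] {e : V → A}
    (he : ∀ i, IsIdempotentElem (e i)) (hsum : ∑ i, e i = 1)
    (U' : Submodule A U) [IsSimpleModule A U']
    (h0 : ∀ n ∈ quotAnn K U', ∀ u ∈ U', n • u = 0) :
    ∃ i, 1 ≤ peirceDim K (e i) (U'.restrictScalars K) ∧
      actRank K U (quotAnn K U') ≤ actRank K U (commSpan K A ⊓ quotAnn K U')
        + peirceDim K (e i) (⊤ : Submodule K (U ⧸ U')) := by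
  have := finiteDimensional_of_submodule (K := K) U'
  have := IsSimpleModule.nontrivial A U'
  obtain ⟨v, hv⟩ := exists_ne (0 : U')
  obtain ⟨i, hi⟩ : ∃ i, e i • v ≠ 0 := by
    by_contra! h
    apply hv
    rw [← one_smul A v, ← hsum, Finset.sum_smul]
    exact Finset.sum_eq_zero fun i _ => h i
  obtain ⟨φ₀, hφ₀⟩ := exists_dual_eq_one (K := K) hi
  set u₀ := e i • v with hu₀
  have heu : e i • u₀ = u₀ := by rw [hu₀, smul_smul, (he i).eq]
  let φ : U' →ₗ[K] K := φ₀.comp (actEnd K U' (e i))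
  have hφ : φ u₀ = 1 := by simp [φ, heu, hφ₀]
  obtain ⟨p, hp⟩ := exists_smul_eq_of_isSimpleModule (A := A) (φ.smulRight u₀)
  have hpu : ∀ u : U', (e i * p * e i) • u = φ u • u₀ := by
    intro u
    rw [mul_smul, mul_smul, hp, LinearMap.smulRight_apply, smul_comm (e i) (φ _), heu]
    congr 1
    simp [φ, smul_smul, (he i).eq]
  refine ⟨i, ?_, (actRank_quotAnn_le U' _ u₀ φ hφ hpu).trans (Nat.add_le_add_left ?_ _)⟩
  · refine Submodule.one_le_finrank_iff.2 fun h => hi ?_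
    have : (u₀ : U) ∈ (U'.restrictScalars K).map (actEnd K U (e i)) := ⟨v, v.2, rfl⟩
    rw [h] at this
    exact Subtype.ext this
  · set p' := e i * p * e i with hp'
    have h := finrank_le_of_range_le_of_le_ker
      (((quotAnn K U').map (LinearMap.mulLeftRight K (p', p'))).map (actEnd K U))
      (Submodule.span K {(u₀ : U)}) (LinearMap.ker (actEnd K U (e i)) ⊔ U'.restrictScalars K)
      ?_ ?_
    · have h2 := finrank_sup_ker_add (K := K) (e := e i) (U'.restrictScalars K)
      have h3 := peirceDim_top_eq_add (K := K) (he i) U'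
      have h4 : finrank K (Submodule.span K {(u₀ : U)}) ≤ 1 := finrank_span_singleton_le_one _
      refine h.trans ((Nat.mul_le_mul_right _ h4).trans ?_)
      omega
    · rintro _ ⟨_, ⟨m, hm, rfl⟩, rfl⟩ _ ⟨u, rfl⟩
      refine Submodule.mem_span_singleton.2 ⟨φ ⟨m • p' • u, mem_quotAnn.1 hm _⟩, ?_⟩
      have := congrArg Subtype.val (hpu ⟨m • p' • u, mem_quotAnn.1 hm _⟩)
      simpa [mul_smul] using this.symm
    · rintro _ ⟨_, ⟨m, hm, rfl⟩, rfl⟩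
      refine sup_le ?_ ?_
      · intro u hu
        have hu' : e i • u = 0 := hu
        simp [hp', mul_smul, hu']
      · intro u hu
        have := h0 m hm (p' • u) (U'.smul_mem p' hu)
        simp [mul_smul, this]

end Cases

section Bounds

universe u

variable {K A V : Type*} [Field K] [Ring A] [Algebra K A] [Fintype V]

theorem exists_isSimpleModule_submodule (K : Type*) {A U : Type*} [Field K] [Ring A] [Algebra K A]
    [AddCommGroup U] [Module K U] [Module A U] [IsScalarTower K A U] [FiniteDimensional K U]
    (h : 0 < finrank K U) : ∃ U' : Submodule A U, IsSimpleModule A U' := by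
  have : IsArtinian A U := isArtinian_of_tower K inferInstance
  have : Nontrivial U := Module.nontrivial_of_finrank_pos h
  obtain ⟨U', hU'⟩ := IsAtomic.exists_atom (Submodule A U)
  exact ⟨U', isSimpleModule_iff_isAtom.2 hU'⟩

theorem finrank_pos_of_isSimpleModule {U : Type*}
    [AddCommGroup U] [Module K U] [Module A U] [IsScalarTower K A U] [FiniteDimensional K U]
    (U' : Submodule A U) [IsSimpleModule A U'] : 1 ≤ finrank K (U'.restrictScalars K) := by
  have := IsSimpleModule.nontrivial A U'
  refine Submodule.one_le_finrank_iff.2 fun h => ?_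
  obtain ⟨v, hv⟩ := exists_ne (0 : U')
  have : (v : U) ∈ U'.restrictScalars K := v.2
  rw [h] at this
  exact hv (Subtype.ext this)

theorem finrank_eq_add_quotient {U : Type*}
    [AddCommGroup U] [Module K U] [Module A U] [IsScalarTower K A U] [FiniteDimensional K U]
    (U' : Submodule A U) :
    finrank K U = finrank K (U'.restrictScalars K) + finrank K (U ⧸ U') := by
  have := Submodule.finrank_quotient_add_finrank (U'.restrictScalars K)
  have h2 : finrank K (U ⧸ U') = finrank K (U ⧸ U'.restrictScalars K) :=
    (Submodule.Quotient.restrictScalarsEquiv K U').symm.finrank_eq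
  omega

theorem finrank_mul_le_weightForm {w : V → V → ℕ} (hw : ∀ i j, 1 ≤ w i j) {e : V → A}
    (hsum : ∑ i, e i = 1) {U U₂ : Type*} [AddCommGroup U] [Module K U] [Module A U]
    [IsScalarTower K A U] [FiniteDimensional K U] [AddCommGroup U₂] [Module K U₂] [Module A U₂]
    [IsScalarTower K A U₂] [FiniteDimensional K U₂] (X : Submodule K U) (Y : Submodule K U₂) :
    (finrank K X : ℤ) * finrank K Y ≤
      weightForm w (fun i => peirceDim K (e i) X) (fun i => peirceDim K (e i) Y) := by
  refine le_trans ?_ (sum_mul_sum_le_weightForm hw _ _)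
  have h1 := finrank_le_sum_peirceDim hsum X
  have h2 := finrank_le_sum_peirceDim hsum Y
  exact_mod_cast Nat.mul_le_mul h1 h2

theorem peircePsi_eq_zero {w : V → V → ℕ} {e : V → A}
    {U : Type*} [AddCommGroup U] [Module K U] [Module A U] [IsScalarTower K A U]
    [FiniteDimensional K U] (h : finrank K U = 0) : peircePsi K U w e = 0 := by
  have hs : Subsingleton U := Module.finrank_zero_iff.1 h
  have h1 : ∀ S : Submodule K A, actRank K U S = 0 := fun S => by
    have := Submodule.finrank_le (S.map (actEnd K U))
    rw [Module.finrank_linearMap, h] at this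
    unfold actRank
    omega
  have h2 : ∀ (a : A) (X : Submodule K U), peirceDim K a X = 0 := fun a X => by
    have := Submodule.finrank_le (X.map (actEnd K U a))
    unfold peirceDim
    omega
  simp [peircePsi, h1, h2]

theorem exists_eq_smul_of_finrank_le_one {U : Type*} [AddCommGroup U] [Module K U]
    [FiniteDimensional K U] (h : finrank K U ≤ 1) (z : U →ₗ[K] U) :
    ∃ c : K, ∀ u, z u = c • u := by
  by_cases h0 : ∀ u : U, u = 0
  · exact ⟨0, fun u => by rw [h0 (z u), zero_smul]⟩
  push Not at h0
  obtain ⟨v, hv⟩ := h0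
  obtain ⟨v', hv'⟩ := finrank_le_one_iff.1 h
  obtain ⟨a, ha⟩ := hv' (z v')
  refine ⟨a, fun u => ?_⟩
  obtain ⟨b, rfl⟩ := hv' u
  rw [map_smul, ← ha, smul_comm]

theorem exists_eq_ite_of_sum_le_one [DecidableEq V] {u : V → ℕ} (h1 : ∑ i, u i = 1) :
    ∃ i, ∀ j, u j = if j = i then 1 else 0 := by
  obtain ⟨i, hi⟩ : ∃ i, u i ≠ 0 := by
    by_contra! h
    simp [h] at h1
  have h2 := Finset.add_sum_erase Finset.univ u (Finset.mem_univ i)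
  refine ⟨i, fun j => ?_⟩
  split_ifs with h
  · subst h; omega
  · have := Finset.single_le_sum (f := u) (fun _ _ => Nat.zero_le _)
      (Finset.mem_erase.2 ⟨h, Finset.mem_univ j⟩)
    omega

variable [IsAlgClosed K] [FiniteDimensional K A]

theorem peircePsi_ge_of_quotAnn_smul_eq_zero {w : V → V → ℕ} (hsymm : ∀ i j, w i j = w j i)
    (hw2 : ∀ i, 2 ≤ w i i) {e : V → A} (he : ∀ i, IsIdempotentElem (e i)) (hsum : ∑ i, e i = 1)
    {U : Type*} [AddCommGroup U] [Module K U] [Module A U] [IsScalarTower K A U]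
    [FiniteDimensional K U] (U' : Submodule A U) [IsSimpleModule A U']
    (h0 : ∀ n ∈ quotAnn K U', ∀ u ∈ U', n • u = 0) :
    peircePsi K (U ⧸ U') w e + 2 ≤ peircePsi K U w e := by
  obtain ⟨i, hi, hk⟩ := exists_vertex_of_quotAnn_smul_eq_zero (K := K) he hsum U' h0
  have h := peircePsi_ge hsymm he U' (U'.restrictScalars K) h0 hk
  have h1 := mul_le_weightForm w (fun i => peirceDim K (e i) (U'.restrictScalars K))
    (fun i => peirceDim K (e i) (⊤ : Submodule K (U ⧸ U'))) i i
  have h2 := mul_le_weightForm w (fun i => peirceDim K (e i) (U'.restrictScalars K))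
    (fun i => peirceDim K (e i) (U'.restrictScalars K)) i i
  have h3 : (2 : ℤ) ≤ w i i := by exact_mod_cast hw2 i
  have h4 : (1 : ℤ) ≤ peirceDim K (e i) (U'.restrictScalars K) := by exact_mod_cast hi
  have h5 : (0 : ℤ) ≤ peirceDim K (e i) (⊤ : Submodule K (U ⧸ U')) := by positivity
  generalize (peirceDim K (e i) (U'.restrictScalars K) : ℤ) = a at *
  generalize (peirceDim K (e i) (⊤ : Submodule K (U ⧸ U')) : ℤ) = b at *
  generalize (w i i : ℤ) = c at *
  have h6 : 2 * b ≤ c * (a * b) := by nlinarith [mul_le_mul h3 h4 (by norm_num) (by linarith)]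
  have h7 : 2 ≤ c * (a * a) := by nlinarith [mul_le_mul h3 h4 (by norm_num) (by linarith)]
  linarith

theorem neg_three_le_peircePsi {w : V → V → ℕ} (hsymm : ∀ i j, w i j = w j i)
    (hw2 : ∀ i, 2 ≤ w i i) (hw : ∀ i j, 1 ≤ w i j) {e : V → A}
    (he : ∀ i, IsIdempotentElem (e i)) (hsum : ∑ i, e i = 1) (n : ℕ) :
    ∀ (U : Type u) [AddCommGroup U] [Module K U] [Module A U] [IsScalarTower K A U]
      [FiniteDimensional K U], finrank K U = n →
      -3 ≤ peircePsi K U w e ∧ (n ≤ 1 → -2 ≤ peircePsi K U w e) := by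
  induction n using Nat.strong_induction_on with
  | _ n ih =>
  intro U _ _ _ _ _ hn
  rcases Nat.eq_zero_or_pos n with rfl | hpos
  · rw [peircePsi_eq_zero hn]; norm_num
  obtain ⟨U', hU'⟩ := exists_isSimpleModule_submodule K (A := A) (U := U) (hn ▸ hpos)
  have hf1 := finrank_pos_of_isSimpleModule (K := K) U'
  have hf2 := finrank_eq_add_quotient (K := K) U'
  obtain ⟨ih3, ih2⟩ := ih (finrank K (U ⧸ U')) (by omega) (U ⧸ U') rfl
  by_cases h0 : ∀ n ∈ quotAnn K U', ∀ u ∈ U', n • u = 0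
  · have := peircePsi_ge_of_quotAnn_smul_eq_zero hsymm hw2 he hsum U' h0
    constructor
    · linarith
    · intro; linarith
  · push Not at h0
    obtain ⟨m, hm, u₁, hu₁, hne⟩ := h0
    obtain ⟨p, u₀, -, -, -, -, hk⟩ := exists_rank_one_mem_quotAnn U' hm hu₁ hne
    have h := peircePsi_ge hsymm he U' ⊥ (by simp) hk
    have h1 := finrank_mul_le_weightForm hw hsum (U'.restrictScalars K)
      (⊤ : Submodule K (U ⧸ U'))
    have h2 := weightForm_nonneg w (fun i => peirceDim K (e i) (U'.restrictScalars K))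
      (fun i => peirceDim K (e i) (⊥ : Submodule K U))
    rw [finrank_top] at h1
    have hf1' : (1 : ℤ) ≤ finrank K (U'.restrictScalars K) := by exact_mod_cast hf1
    have h3 : (finrank K (U ⧸ U') : ℤ) ≤
      finrank K (U'.restrictScalars K) * finrank K (U ⧸ U') := by nlinarith
    push_cast at h
    rcases Nat.lt_or_ge (finrank K (U ⧸ U')) 1 with hc | hc
    · have : finrank K (U ⧸ U') = 0 := by omega
      have h5 := peircePsi_eq_zero (K := K) (w := w) (e := e) (U := U ⧸ U') this
      constructor
      · linarith
      · intro; linarith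
    · refine ⟨?_, fun hle => ?_⟩
      · rcases Nat.lt_or_ge (finrank K (U ⧸ U')) 2 with hc2 | hc2
        · have := ih2 (by omega)
          have : (1 : ℤ) ≤ finrank K (U ⧸ U') := by exact_mod_cast hc
          linarith
        · have : (2 : ℤ) ≤ finrank K (U ⧸ U') := by exact_mod_cast hc2
          linarith
      · omega

theorem neg_two_le_peircePsi [DecidableEq V] {w : V → V → ℕ} (hsymm : ∀ i j, w i j = w j i)
    (hw2 : ∀ i, 2 ≤ w i i) (hw : ∀ i j, 1 ≤ w i j) {e : V → A}
    (he : ∀ i, IsIdempotentElem (e i)) (hsum : ∑ i, e i = 1) (n : ℕ) :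
    ∀ (U : Type u) [AddCommGroup U] [Module K U] [Module A U] [IsScalarTower K A U]
      [FiniteDimensional K U] (z : U →ₗ[A] U), finrank K U = n →
      (∀ c : K, ∃ u, z u ≠ c • u) →
      -2 ≤ peircePsi K U w e ∧ (-1 ≤ peircePsi K U w e ∨ ∃ i j, i ≠ j ∧ w i j = 1 ∧
        ∀ k, peirceDim K (e k) (⊤ : Submodule K U) =
          (if k = i then 1 else 0) + (if k = j then 1 else 0)) := by
  induction n using Nat.strong_induction_on with
  | _ n ih =>
  intro U _ _ _ _ _ z hn hz
  have hpos : 0 < n := by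
    by_contra hc
    have hs : Subsingleton U := (Module.finrank_zero_iff (R := K)).1 (by omega)
    obtain ⟨u, hu⟩ := hz 0
    exact hu (Subsingleton.elim _ _)
  obtain ⟨U', hU'⟩ := exists_isSimpleModule_submodule K (A := A) (U := U) (hn ▸ hpos)
  have hf1 := finrank_pos_of_isSimpleModule (K := K) U'
  have hf2 := finrank_eq_add_quotient (K := K) U'
  have hl1 := neg_three_le_peircePsi (K := K) hsymm hw2 hw he hsum _ (U ⧸ U') rfl
  have hconc : -1 ≤ peircePsi K U w e → (-2 ≤ peircePsi K U w e ∧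
      (-1 ≤ peircePsi K U w e ∨ ∃ i j, i ≠ j ∧ w i j = 1 ∧
        ∀ k, peirceDim K (e k) (⊤ : Submodule K U) =
          (if k = i then 1 else 0) + (if k = j then 1 else 0))) := fun h =>
    ⟨by linarith, Or.inl h⟩
  by_cases h0 : ∀ n ∈ quotAnn K U', ∀ u ∈ U', n • u = 0
  · have := peircePsi_ge_of_quotAnn_smul_eq_zero hsymm hw2 he hsum U' h0
    exact hconc (by linarith [hl1.1])
  push Not at h0
  obtain ⟨m, hm, u₁, hu₁, hne⟩ := h0
  obtain ⟨p, u₀, hpN, hpu₀, hu₀, hpr, hk⟩ := exists_rank_one_mem_quotAnn U' hm hu₁ hne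
  have hpu₀' : p • (u₀ : U) = u₀ := congrArg Subtype.val hpu₀
  obtain ⟨l, hl⟩ : ∃ l : K, z u₀ = l • (u₀ : U) := by
    obtain ⟨c, hc⟩ := hpr (z u₀)
    refine ⟨c, ?_⟩
    rw [← hc, ← map_smul, hpu₀']
  have hfd := finiteDimensional_of_submodule (K := K) U'
  let y : U →ₗ[A] U := z - algebraMap K (End A U) l
  have hyz : ∀ u, y u = z u - l • u := fun u => by simp [y]
  have hyU' : ∀ u ∈ U', y u = 0 := by
    intro u hu
    obtain ⟨φ, hφ⟩ := exists_dual_eq_one (K := K) hu₀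
    obtain ⟨a, ha⟩ := exists_smul_eq_of_isSimpleModule (A := A) (φ.smulRight (⟨u, hu⟩ : U'))
    have h1 := congrArg Subtype.val (ha u₀)
    have h2 : a • (u₀ : U) = u := by simpa [hφ] using h1
    rw [← h2, map_smul, hyz, hl, sub_self, smul_zero]
  have hXN : ∀ n ∈ quotAnn K U', ∀ x ∈ (LinearMap.range y).restrictScalars K, n • x = 0 := by
    rintro n hn _ ⟨u, rfl⟩
    rw [← map_smul]
    exact hyU' _ (mem_quotAnn.1 hn u)
  have hmain := peircePsi_ge hsymm he U' _ hXN hk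
  set X := (LinearMap.range y).restrictScalars K with hX
  have hX1 : 1 ≤ finrank K X := by
    refine Submodule.one_le_finrank_iff.2 fun h => ?_
    obtain ⟨u, hu⟩ := hz l
    have : y u ∈ X := ⟨u, rfl⟩
    rw [h] at this
    rw [Submodule.mem_bot, hyz, sub_eq_zero] at this
    exact hu this
  have hB1 := finrank_mul_le_weightForm hw hsum (U'.restrictScalars K)
      (⊤ : Submodule K (U ⧸ U'))
  have hB2 := finrank_mul_le_weightForm hw hsum (U'.restrictScalars K) X
  rw [finrank_top] at hB1
  have hf1' : (1 : ℤ) ≤ finrank K (U'.restrictScalars K) := by exact_mod_cast hf1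
  have hX1' : (1 : ℤ) ≤ finrank K X := by exact_mod_cast hX1
  have hB1' : (finrank K (U ⧸ U') : ℤ) ≤
      finrank K (U'.restrictScalars K) * finrank K (U ⧸ U') := by nlinarith
  have hB2' : (1 : ℤ) ≤ finrank K (U'.restrictScalars K) * finrank K X := by nlinarith
  have hq1 : 1 ≤ finrank K (U ⧸ U') := by
    by_contra hc
    have hs : Subsingleton (U ⧸ U') := (Module.finrank_zero_iff (R := K)).1 (by omega)
    have htop := Submodule.Quotient.subsingleton_iff.1 hs
    obtain ⟨u, hu⟩ := hz l
    refine hu (sub_eq_zero.1 ?_)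
    rw [← hyz]
    exact hyU' u (htop ▸ Submodule.mem_top)
  push_cast at hmain
  let y' : (U ⧸ U') →ₗ[A] (U ⧸ U') := U'.mapQ U' y fun u hu => by
    rw [Submodule.mem_comap, hyU' u hu]; exact U'.zero_mem
  by_cases hsc : ∀ c : K, ∃ u, y' u ≠ c • u
  · have h2 : 2 ≤ finrank K (U ⧸ U') := by
      by_contra hc
      obtain ⟨c, hc⟩ := exists_eq_smul_of_finrank_le_one (K := K) (by omega)
        (y'.restrictScalars K)
      obtain ⟨u, hu⟩ := hsc c
      exact hu (hc u)
    have h2' : (2 : ℤ) ≤ finrank K (U ⧸ U') := by exact_mod_cast h2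
    have := (ih (finrank K (U ⧸ U')) (by omega) (U ⧸ U') y' rfl hsc).1
    exact hconc (by linarith)
  push Not at hsc
  obtain ⟨c, hc⟩ := hsc
  by_cases hc0 : c = 0
  · have hXU : X = U'.restrictScalars K := by
      have hle : LinearMap.range y ≤ U' := by
        rintro _ ⟨u, rfl⟩
        have := hc (Submodule.Quotient.mk u)
        rw [hc0, zero_smul] at this
        exact (Submodule.Quotient.mk_eq_zero U').1 this
      have hne : LinearMap.range y ≠ ⊥ := by
        intro hbot
        have : X = ⊥ := by rw [hX, hbot]; rfl
        rw [this] at hX1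
        simp at hX1
      rw [hX, ((isSimpleModule_iff_isAtom.1 hU').le_iff_eq hne).1 hle]
    obtain ⟨i, hi⟩ : ∃ i, 1 ≤ peirceDim K (e i) (U'.restrictScalars K) := by
      by_contra! hcon
      have h1 := finrank_le_sum_peirceDim hsum (U'.restrictScalars K)
      rw [Finset.sum_eq_zero fun i _ => Nat.lt_one_iff.1 (hcon i)] at h1
      omega
    have h3 := mul_le_weightForm w (fun i => peirceDim K (e i) (U'.restrictScalars K))
      (fun i => peirceDim K (e i) X) i i
    rw [hXU] at h3 hmain
    have h4 : (2 : ℤ) ≤ w i i := by exact_mod_cast hw2 i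
    have h5 : (1 : ℤ) ≤ peirceDim K (e i) (U'.restrictScalars K) := by exact_mod_cast hi
    have h6 : (2 : ℤ) ≤ w i i * (peirceDim K (e i) (U'.restrictScalars K) *
        peirceDim K (e i) (U'.restrictScalars K)) := by
      nlinarith [mul_le_mul h4 h5 (by norm_num) (by linarith)]
    rcases Nat.lt_or_ge (finrank K (U ⧸ U')) 2 with hc2 | hc2
    · have h7 := hl1.2 (by omega)
      have : (1 : ℤ) ≤ finrank K (U ⧸ U') := by exact_mod_cast hq1
      exact hconc (by linarith)
    · have : (2 : ℤ) ≤ finrank K (U ⧸ U') := by exact_mod_cast hc2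
      exact hconc (by linarith [hl1.1])
  · have hXd : ∀ i, peirceDim K (e i) (⊤ : Submodule K (U ⧸ U')) ≤ peirceDim K (e i) X := by
      intro i
      have h1 : (⊤ : Submodule K (U ⧸ U')).map (actEnd K (U ⧸ U') (e i)) ≤
          (X.map (actEnd K U (e i))).map (U'.mkQ.restrictScalars K) := by
        rintro _ ⟨v, -, rfl⟩
        obtain ⟨u, rfl⟩ := Submodule.Quotient.mk_surjective _ v
        refine ⟨e i • y (c⁻¹ • u), ⟨y (c⁻¹ • u), ⟨_, rfl⟩, rfl⟩, ?_⟩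
        have h2 := hc (Submodule.Quotient.mk (c⁻¹ • u))
        have h3 : U'.mkQ (y (c⁻¹ • u)) = Submodule.Quotient.mk u := by
          rw [Submodule.Quotient.mk_smul, smul_smul, mul_inv_cancel₀ hc0, one_smul] at h2
          exact h2
        rw [actEnd_apply, LinearMap.restrictScalars_apply, map_smul, h3]
      exact (Submodule.finrank_mono h1).trans (Submodule.finrank_map_le _ _)
    have h3 := weightForm_mono_right w
      (fun i => peirceDim K (e i) (U'.restrictScalars K)) hXd
    rcases Nat.lt_or_ge (finrank K (U ⧸ U')) 2 with hc2 | hc2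
    · have h7 := hl1.2 (by omega)
      have : (1 : ℤ) ≤ finrank K (U ⧸ U') := by exact_mod_cast hq1
      refine ⟨by linarith, ?_⟩
      rcases le_or_gt 2 (weightForm w (fun i => peirceDim K (e i) (U'.restrictScalars K))
          (fun i => peirceDim K (e i) (⊤ : Submodule K (U ⧸ U')))) with hb | hb
      · left; linarith
      · right
        have hs := sum_mul_sum_le_weightForm hw
          (fun i => peirceDim K (e i) (U'.restrictScalars K))
          (fun i => peirceDim K (e i) (⊤ : Submodule K (U ⧸ U')))
        have hs1 := finrank_le_sum_peirceDim hsum (U'.restrictScalars K)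
        have hs2 := finrank_le_sum_peirceDim hsum (⊤ : Submodule K (U ⧸ U'))
        rw [finrank_top] at hs2
        have hs3 : (∑ i, peirceDim K (e i) (U'.restrictScalars K)) *
          (∑ i, peirceDim K (e i) (⊤ : Submodule K (U ⧸ U'))) ≤ 1 := by
          have := lt_of_le_of_lt hs hb
          have h9 : (∑ i, peirceDim K (e i) (U'.restrictScalars K)) *
            (∑ i, peirceDim K (e i) (⊤ : Submodule K (U ⧸ U'))) < 2 := by exact_mod_cast this
          omega
        have hs4 : (∑ i, peirceDim K (e i) (U'.restrictScalars K)) = 1 := by nlinarith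
        have hs5 : (∑ i, peirceDim K (e i) (⊤ : Submodule K (U ⧸ U'))) = 1 := by nlinarith
        obtain ⟨i, hi⟩ := exists_eq_ite_of_sum_le_one hs4
        obtain ⟨j, hj⟩ := exists_eq_ite_of_sum_le_one hs5
        have h10 := mul_le_weightForm w (fun i => peirceDim K (e i) (U'.restrictScalars K))
          (fun i => peirceDim K (e i) (⊤ : Submodule K (U ⧸ U'))) i j
        simp only [hi, hj, if_true, Nat.cast_one, mul_one] at h10 hb
        have h11 : (w i j : ℤ) < 2 := lt_of_le_of_lt h10 hb
        have h12 : w i j < 2 := by exact_mod_cast h11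
        refine ⟨i, j, ?_, ?_, fun k => ?_⟩
        · rintro rfl
          have := hw2 i
          omega
        · have := hw i j
          omega
        · rw [peirceDim_top_eq_add (he k) U', hi, hj]
    · have : (2 : ℤ) ≤ finrank K (U ⧸ U') := by exact_mod_cast hc2
      exact hconc (by linarith [hl1.1])

end Bounds

theorem finrank_le_finrank_of_le {K M : Type*} [Field K] [AddCommGroup M] [Module K M]
    [FiniteDimensional K M] {S T : Submodule K M} (h : S ≤ T) : finrank K S ≤ finrank K T :=
  Submodule.finrank_mono h

section BaseChange

variable {F V I : Type*} [Field F] [DecidableEq V] [Fintype I] [DecidableEq I]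

/-- The diagonal idempotent supported on the basis vectors of colour `i`. -/
def colorIdem (F : Type*) [Field F] (c : I → V) (i : V) : Matrix I I F :=
  Matrix.diagonal fun x => if c x = i then 1 else 0

/-- The block `E_j A E_i` of an algebra of matrices. -/
def matBlock (c : I → V) (A : Subalgebra F (Matrix I I F)) (i j : V) :
    Submodule F (Matrix I I F) :=
  (Subalgebra.toSubmodule A).map (LinearMap.mulLeftRight F (colorIdem F c j, colorIdem F c i))

/-- The span of the commutators of elements of `A`. -/
def matComm (A : Subalgebra F (Matrix I I F)) : Submodule F (Matrix I I F) :=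
  Submodule.span F {x | ∃ a ∈ A, ∃ b ∈ A, x = a * b - b * a}

/-- The number of basis vectors of colour `i`. -/
def colorCard (c : I → V) (i : V) : ℕ := Fintype.card {x // c x = i}

/-- Matrices over `F` acting on column vectors over an extension field. -/
noncomputable def matExt (F K I : Type*) [Field F] [Field K] [Algebra F K] [Fintype I]
    [DecidableEq I] : Matrix I I F →ₐ[F] End K (I → K) :=
  ((Matrix.toLinAlgEquiv' (R := K) (n := I)).toAlgHom.restrictScalars F).comp
    (Algebra.ofId F K).mapMatrix

variable (K : Type*) [Field K] [Algebra F K]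

theorem matExt_apply (M : Matrix I I F) (v : I → K) :
    matExt F K I M v = (M.map (algebraMap F K)).mulVec v := rfl

theorem matExt_apply_single (M : Matrix I I F) (x y : I) :
    matExt F K I M (Pi.single y 1) x = algebraMap F K (M x y) := by
  rw [matExt_apply, Matrix.mulVec_single_one]
  rfl

theorem finrank_le_finrank_span_matExt (S : Submodule F (Matrix I I F)) :
    finrank F S ≤ finrank K (Submodule.span K (matExt F K I '' S)) := by
  let b := Module.finBasis F S
  have hv : LinearIndependent K fun k => matExt F K I (b k) := by
    refine Fintype.linearIndependent_iff.2 ?_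
    intro g hg k
    have hg' : ∀ x y, ∑ k, g k * algebraMap F K ((b k : Matrix I I F) x y) = 0 := by
      intro x y
      have h2 := congrFun (LinearMap.congr_fun hg (Pi.single y 1)) x
      simpa [matExt_apply_single] using h2
    refine (Module.forall_dual_apply_eq_zero_iff F (g k)).1 fun f => ?_
    have hf : ∑ k, f (g k) • b k = 0 := by
      ext x y
      have h3 := congrArg f (hg' x y)
      simp only [map_sum, mul_comm (g _), ← Algebra.smul_def, map_smul, map_zero] at h3
      simpa [Matrix.sum_apply, mul_comm] using h3
    exact Fintype.linearIndependent_iff.1 b.linearIndependent _ hf k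
  rw [← Fintype.card_fin (finrank F S), ← finrank_span_eq_card hv]
  refine Submodule.finrank_mono (Submodule.span_mono ?_)
  rintro _ ⟨k, rfl⟩
  exact ⟨b k, (b k).2, rfl⟩

theorem finrank_span_matExt_le (S : Submodule F (Matrix I I F)) :
    finrank K (Submodule.span K (matExt F K I '' S)) ≤ finrank F S := by
  let b := Module.finBasis F S
  have h : Submodule.span K (matExt F K I '' S) ≤
      Submodule.span K (Set.range fun k => matExt F K I (b k)) := by
    rw [Submodule.span_le]
    rintro _ ⟨x, hx, rfl⟩
    have hx' : x = ∑ k, b.repr ⟨x, hx⟩ k • (b k : Matrix I I F) := by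
      have := congrArg S.subtype (b.sum_repr ⟨x, hx⟩).symm
      rwa [map_sum] at this
    rw [hx', map_sum]
    refine sum_mem fun k _ => ?_
    rw [map_smul, ← algebraMap_smul K]
    exact Submodule.smul_mem _ _ (Submodule.subset_span ⟨k, rfl⟩)
  refine (Submodule.finrank_mono h).trans ((finrank_range_le_card _).trans ?_)
  simp

/-- The `K`-span of a subalgebra of matrices over `F`. -/
noncomputable def extAlg (A : Subalgebra F (Matrix I I F)) : Subalgebra K (End K (I → K)) :=
  Algebra.adjoin K (matExt F K I '' A)

theorem extAlg_toSubmodule (A : Subalgebra F (Matrix I I F)) :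
    Subalgebra.toSubmodule (extAlg K A) = Submodule.span K (matExt F K I '' A) := by
  rw [extAlg, Algebra.adjoin_eq_span]
  congr 1
  have : matExt F K I '' A = ((A.map (matExt F K I)).toSubmonoid : Set (End K (I → K))) := rfl
  rw [this, Submonoid.closure_eq]

theorem matExt_mem_extAlg {A : Subalgebra F (Matrix I I F)} {a : Matrix I I F} (ha : a ∈ A) :
    matExt F K I a ∈ extAlg K A :=
  Algebra.subset_adjoin ⟨a, ha, rfl⟩

theorem map_actEnd_eq (A : Subalgebra F (Matrix I I F)) (S : Submodule K (extAlg K A)) :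
    S.map (actEnd (A := extAlg K A) K (I → K)) = S.map (extAlg K A).val.toLinearMap := by
  congr 1

theorem finrank_le_actRank {A : Subalgebra F (Matrix I I F)} (S₀ : Submodule F (Matrix I I F))
    (S : Submodule K (extAlg K A)) (h : ∀ x ∈ S₀, ∃ s ∈ S, (s : End K (I → K)) = matExt F K I x) :
    finrank F S₀ ≤ actRank (A := extAlg K A) K (I → K) S := by
  refine (finrank_le_finrank_span_matExt K S₀).trans ?_
  rw [actRank, map_actEnd_eq]
  refine finrank_le_finrank_of_le ?_
  rw [Submodule.span_le]
  rintro _ ⟨a, ha, rfl⟩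
  exact h a ha

theorem finrank_le_actRank_top (A : Subalgebra F (Matrix I I F)) :
    finrank F A ≤ actRank (A := extAlg K A) K (I → K) (⊤ : Submodule K (extAlg K A)) :=
  finrank_le_actRank K (Subalgebra.toSubmodule A) ⊤ fun _ hx =>
    ⟨⟨_, matExt_mem_extAlg K hx⟩, trivial, rfl⟩

/-- The colour idempotents in the extended algebra. -/
noncomputable def extIdem {c : I → V} {A : Subalgebra F (Matrix I I F)}
    (hA : ∀ i, colorIdem F c i ∈ A) (i : V) : extAlg K A :=
  ⟨matExt F K I (colorIdem F c i), matExt_mem_extAlg K (hA i)⟩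

theorem finrank_matBlock_le {c : I → V} {A : Subalgebra F (Matrix I I F)}
    (hA : ∀ i, colorIdem F c i ∈ A) (i j : V) :
    finrank F (matBlock c A i j) ≤
      actRank K (I → K) (peirceBlock K (extIdem K hA i) (extIdem K hA j)) := by
  refine finrank_le_actRank K _ (peirceBlock K (extIdem K hA i) (extIdem K hA j)) ?_
  rintro _ ⟨a, ha, rfl⟩
  refine ⟨_, ⟨⟨_, matExt_mem_extAlg K ha⟩, rfl⟩, ?_⟩
  simp [extIdem]

theorem actRank_commSpan_le (A : Subalgebra F (Matrix I I F)) :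
    actRank K (I → K) (commSpan K (extAlg K A)) ≤ finrank F (matComm A) := by
  refine le_trans ?_ (finrank_span_matExt_le K _)
  rw [actRank, map_actEnd_eq]
  refine finrank_le_finrank_of_le ?_
  rw [Submodule.map_le_iff_le_comap, commSpan, Submodule.span_le]
  rintro _ ⟨⟨a, ha⟩, ⟨b, hb⟩, rfl⟩
  change a * b - b * a ∈ Submodule.span K (matExt F K I '' (matComm A))
  have ha' : a ∈ Submodule.span K (matExt F K I '' A) := by
    rw [← extAlg_toSubmodule]; exact ha
  have hb' : b ∈ Submodule.span K (matExt F K I '' A) := by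
    rw [← extAlg_toSubmodule]; exact hb
  clear ha hb
  induction ha' using Submodule.span_induction with
  | zero => simp
  | add x y _ _ hx hy =>
    have := add_mem hx hy
    convert this using 1
    noncomm_ring
  | smul k x _ hx =>
    have := Submodule.smul_mem _ k hx
    convert this using 1
    rw [smul_sub, smul_mul_assoc, mul_smul_comm]
  | mem x hx =>
    obtain ⟨x, hx, rfl⟩ := hx
    induction hb' using Submodule.span_induction with
    | zero => simp
    | add u y _ _ hu hy =>
      have := add_mem hu hy
      convert this using 1
      noncomm_ring
    | smul k u _ hu =>
      have := Submodule.smul_mem _ k hu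
      convert this using 1
      rw [smul_sub, smul_mul_assoc, mul_smul_comm]
    | mem y hy =>
      obtain ⟨y, hy, rfl⟩ := hy
      refine Submodule.subset_span ⟨x * y - y * x, Submodule.subset_span ⟨x, hx, y, hy, rfl⟩, ?_⟩
      simp

theorem peirceDim_extIdem {c : I → V} {A : Subalgebra F (Matrix I I F)}
    (hA : ∀ i, colorIdem F c i ∈ A) (i : V) :
    peirceDim K (extIdem K hA i) (⊤ : Submodule K (I → K)) = colorCard c i := by
  classical
  have h : actEnd K (I → K) (extIdem K hA i) =
      (Matrix.diagonal fun x => if c x = i then (1 : K) else 0).mulVecLin := by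
    ext x y
    simp [extIdem, matExt_apply, colorIdem, Matrix.diagonal_map, Subalgebra.smul_def, apply_ite]
  rw [peirceDim, h, Submodule.map_top]
  have := Matrix.rank_diagonal fun x => if c x = i then (1 : K) else 0
  rw [Matrix.rank] at this
  rw [this, colorCard]
  exact Fintype.card_congr (Equiv.subtypeEquivRight fun x => by simp)

theorem isIdempotentElem_colorIdem (c : I → V) (i : V) : IsIdempotentElem (colorIdem F c i) := by
  rw [IsIdempotentElem, colorIdem, Matrix.diagonal_mul_diagonal]
  congr 1
  ext x
  split_ifs <;> simp

end BaseChange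

theorem sum_colorIdem {F V I : Type*} [Field F] [Fintype V] [DecidableEq V] [DecidableEq I]
    (c : I → V) : ∑ i, colorIdem F c i = 1 := by
  ext x y
  rw [Matrix.sum_apply]
  simp only [colorIdem, Matrix.diagonal_apply, Matrix.one_apply]
  split_ifs <;> simp

section Commuting

variable {F I : Type*} [Field F] [Fintype I] [DecidableEq I] (K : Type*) [Field K] [Algebra F K]

theorem matExt_apply_of_commute {A : Subalgebra F (Matrix I I F)} {ξ : Matrix I I F}
    (hξ : ∀ a ∈ A, a * ξ = ξ * a) {a : End K (I → K)} (ha : a ∈ extAlg K A) (v : I → K) :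
    matExt F K I ξ (a v) = a (matExt F K I ξ v) := by
  have ha' : a ∈ Submodule.span K (matExt F K I '' A) := by
    rw [← extAlg_toSubmodule]; exact ha
  clear ha
  induction ha' using Submodule.span_induction with
  | zero => simp
  | add x y _ _ hx hy => simp [hx, hy]
  | smul k x _ hx => simp [hx]
  | mem x hx =>
    obtain ⟨x, hx, rfl⟩ := hx
    rw [← Module.End.mul_apply, ← Module.End.mul_apply, ← map_mul, ← map_mul, hξ x hx]

/-- A matrix commuting with `A` as an endomorphism over the extended algebra. -/
noncomputable def extCommuting {A : Subalgebra F (Matrix I I F)} {ξ : Matrix I I F}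
    (hξ : ∀ a ∈ A, a * ξ = ξ * a) : (I → K) →ₗ[extAlg K A] (I → K) where
  toFun := matExt F K I ξ
  map_add' := map_add _
  map_smul' a v := matExt_apply_of_commute K hξ a.2 v

theorem extCommuting_nonscalar {A : Subalgebra F (Matrix I I F)} {ξ : Matrix I I F}
    (hξ : ∀ a ∈ A, a * ξ = ξ * a) (hns : ∀ k : F, ξ ≠ Matrix.scalar I k) (k : K) :
    ∃ u, extCommuting K hξ u ≠ k • u := by
  by_contra! h
  have h1 : ∀ x y, algebraMap F K (ξ x y) = k * (Pi.single y 1 : I → K) x := by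
    intro x y
    rw [← matExt_apply_single]
    exact congrFun (h (Pi.single y 1)) x
  rcases isEmpty_or_nonempty I with hI | ⟨⟨x₀⟩⟩
  · exact hns 0 (by ext x; exact hI.elim x)
  · apply hns (ξ x₀ x₀)
    ext x y
    apply (algebraMap F K).injective
    rw [h1, Matrix.scalar_apply, Matrix.diagonal_apply]
    split_ifs with hxy
    · subst hxy; rw [h1]; simp
    · rw [Pi.single_eq_of_ne hxy]; simp

end Commuting

theorem isIdempotentElem_extIdem {F V I : Type*} [Field F] [DecidableEq V]
    [Fintype I] [DecidableEq I] (K : Type*) [Field K] [Algebra F K] {c : I → V}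
    {A : Subalgebra F (Matrix I I F)} (hA : ∀ i, colorIdem F c i ∈ A) (i : V) :
    IsIdempotentElem (extIdem K hA i) := by
  have := (isIdempotentElem_colorIdem (F := F) c i).map (matExt F K I)
  exact Subtype.ext this.eq

theorem sum_extIdem {F V I : Type*} [Field F] [Fintype V] [DecidableEq V]
    [Fintype I] [DecidableEq I] (K : Type*) [Field K] [Algebra F K] {c : I → V}
    {A : Subalgebra F (Matrix I I F)} (hA : ∀ i, colorIdem F c i ∈ A) :
    ∑ i, extIdem K hA i = 1 := by
  apply Subtype.ext
  have h := congrArg (matExt F K I) (sum_colorIdem (F := F) c)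
  rw [map_sum, map_one] at h
  rw [AddSubmonoidClass.coe_finsetSum]
  exact h

theorem peircePsi_extIdem_le {F V I : Type*} [Field F] [Fintype V] [DecidableEq V]
    [Fintype I] [DecidableEq I] (K : Type*) [Field K] [Algebra F K] {c : I → V}
    {A : Subalgebra F (Matrix I I F)} (hA : ∀ i, colorIdem F c i ∈ A) (w : V → V → ℕ) :
    peircePsi K (I → K) w (extIdem K hA) ≤ ∑ i, ∑ j, (w i j : ℤ) *
      ((colorCard c i : ℤ) * colorCard c j - finrank F (matBlock c A i j))
        - 2 * ((finrank F A : ℤ) - finrank F (matComm A)) := by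
  have h1 := finrank_le_actRank_top K A
  have h2 := actRank_commSpan_le K A
  unfold peircePsi
  zify at h1 h2
  refine sub_le_sub (Finset.sum_le_sum fun i _ => Finset.sum_le_sum fun j _ =>
      mul_le_mul_of_nonneg_left ?_ (Nat.cast_nonneg _)) (by linarith)
  have h3 := finrank_matBlock_le K hA i j
  rw [peirceDim_extIdem, peirceDim_extIdem]
  zify at h3
  linarith

/-- The weighted dimension inequality for an algebra of matrices with a nonscalar commuting
matrix. -/
theorem neg_one_le_of_commuting_nonscalar_of_isAlgClosed (K : Type*) {F V I : Type*} [Field F]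
    [Field K] [Algebra F K] [IsAlgClosed K] [Fintype V] [DecidableEq V] [Fintype I] [DecidableEq I]
    {c : I → V} {A : Subalgebra F (Matrix I I F)}
    (hA : ∀ i, colorIdem F c i ∈ A) {w : V → V → ℕ} (hsymm : ∀ i j, w i j = w j i)
    (hw2 : ∀ i, 2 ≤ w i i) (hw : ∀ i j, 1 ≤ w i j) {ξ : Matrix I I F}
    (hξ : ∀ a ∈ A, a * ξ = ξ * a) (hns : ∀ k : F, ξ ≠ Matrix.scalar I k) :
    -1 ≤ ∑ i, ∑ j, (w i j : ℤ) * ((colorCard c i : ℤ) * colorCard c j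
        - finrank F (matBlock c A i j)) - 2 * ((finrank F A : ℤ) - finrank F (matComm A)) ∨
      ∃ i j, i ≠ j ∧ w i j = 1 ∧
        ∀ k, colorCard c k = (if k = i then 1 else 0) + (if k = j then 1 else 0) := by
  have hfd : FiniteDimensional K (extAlg K A) :=
    FiniteDimensional.finiteDimensional_submodule (Subalgebra.toSubmodule (extAlg K A))
  have h0 := neg_two_le_peircePsi (K := K) (A := extAlg K A) hsymm hw2 hw
    (isIdempotentElem_extIdem K hA) (sum_extIdem K hA) (finrank K (I → K)) (I → K)
  have h := (h0 (extCommuting K hξ) rfl (extCommuting_nonscalar K hξ hns)).2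
  rcases h with h | ⟨i, j, hij, hwij, h⟩
  · exact Or.inl (h.trans (peircePsi_extIdem_le K hA w))
  · exact Or.inr ⟨i, j, hij, hwij, fun k => by rw [← h k, peirceDim_extIdem]⟩

theorem neg_one_le_of_commuting_nonscalar {F V I : Type*} [Field F] [Fintype V] [DecidableEq V]
    [Fintype I] [DecidableEq I] {c : I → V} {A : Subalgebra F (Matrix I I F)}
    (hA : ∀ i, colorIdem F c i ∈ A) {w : V → V → ℕ} (hsymm : ∀ i j, w i j = w j i)
    (hw2 : ∀ i, 2 ≤ w i i) (hw : ∀ i j, 1 ≤ w i j) {ξ : Matrix I I F}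
    (hξ : ∀ a ∈ A, a * ξ = ξ * a) (hns : ∀ k : F, ξ ≠ Matrix.scalar I k) :
    -1 ≤ ∑ i, ∑ j, (w i j : ℤ) * ((colorCard c i : ℤ) * colorCard c j
        - finrank F (matBlock c A i j)) - 2 * ((finrank F A : ℤ) - finrank F (matComm A)) ∨
      ∃ i j, i ≠ j ∧ w i j = 1 ∧
        ∀ k, colorCard c k = (if k = i then 1 else 0) + (if k = j then 1 else 0) :=
  neg_one_le_of_commuting_nonscalar_of_isAlgClosed (AlgebraicClosure F) hA hsymm hw2 hw hξ hns

section QuiverWeight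

variable (G : FinQuiver)

/-- The number of arrows from `i` to `j`. -/
def FinQuiver.arrowCount (i j : G.V) : ℕ :=
  (Finset.univ.filter fun a : G.E => G.s a = i ∧ G.t a = j).card

/-- The symmetrised number of arrows minus twice the identity. -/
def FinQuiver.cartanWeight (i j : G.V) : ℕ :=
  G.arrowCount i j + G.arrowCount j i - if i = j then 2 else 0

variable {G}

theorem arrowCount_self_ge (hG : TotallyNegative G) (i : G.V) : 2 ≤ G.arrowCount i i :=
  hG.1 i

theorem cartanWeight_cast (hG : TotallyNegative G) (i j : G.V) :
    (G.cartanWeight i j : ℤ) =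
      G.arrowCount i j + G.arrowCount j i - if i = j then 2 else 0 := by
  rw [FinQuiver.cartanWeight]
  split_ifs with h
  · subst h
    have := arrowCount_self_ge hG i
    rw [Nat.cast_sub (by omega)]
    push_cast
    ring
  · simp

theorem cartanWeight_symm (i j : G.V) : G.cartanWeight i j = G.cartanWeight j i := by
  simp only [FinQuiver.cartanWeight, add_comm, eq_comm]

theorem two_le_cartanWeight_self (hG : TotallyNegative G) (i : G.V) :
    2 ≤ G.cartanWeight i i := by
  have := arrowCount_self_ge hG i
  simp only [FinQuiver.cartanWeight, if_true]
  omega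

theorem one_le_cartanWeight (hG : TotallyNegative G) (i j : G.V) : 1 ≤ G.cartanWeight i j := by
  by_cases h : i = j
  · subst h
    exact (by norm_num : 1 ≤ 2).trans (two_le_cartanWeight_self hG i)
  · obtain ⟨a, ha⟩ := hG.2 i j h
    simp only [FinQuiver.cartanWeight, if_neg h]
    rcases ha with ha | ha
    · have : 0 < G.arrowCount i j := Finset.card_pos.2 ⟨a, by simp [ha]⟩
      omega
    · have : 0 < G.arrowCount j i := Finset.card_pos.2 ⟨a, by simp [ha]⟩
      omega

theorem sum_arrowCount_mul (X : G.V → G.V → ℤ) :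
    ∑ i, ∑ j, (G.arrowCount i j : ℤ) * X i j = ∑ a : G.E, X (G.s a) (G.t a) := by
  have h : ∀ a : G.E, X (G.s a) (G.t a) =
      ∑ i, ∑ j, if G.s a = i ∧ G.t a = j then X i j else 0 := fun a => by
    simp [ite_and]
  refine Eq.symm ((Finset.sum_congr rfl fun a _ => h a).trans ?_)
  rw [Finset.sum_comm]
  refine Finset.sum_congr rfl fun i _ => ?_
  rw [Finset.sum_comm]
  refine Finset.sum_congr rfl fun j _ => ?_
  rw [← Finset.sum_filter, Finset.sum_const, nsmul_eq_mul]
  rfl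

theorem sum_cartanWeight_mul (hG : TotallyNegative G) {X : G.V → G.V → ℤ}
    (hX : ∀ i j, X i j = X j i) :
    ∑ i, ∑ j, (G.cartanWeight i j : ℤ) * X i j =
      2 * (∑ a : G.E, X (G.s a) (G.t a) - ∑ i, X i i) := by
  have h1 : ∑ i, ∑ j, (G.arrowCount j i : ℤ) * X i j = ∑ a : G.E, X (G.s a) (G.t a) := by
    rw [Finset.sum_comm, ← sum_arrowCount_mul]
    exact Finset.sum_congr rfl fun i _ => Finset.sum_congr rfl fun j _ => by rw [hX]
  simp only [cartanWeight_cast hG, sub_mul, add_mul, Finset.sum_sub_distrib,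
    Finset.sum_add_distrib, sum_arrowCount_mul, h1]
  simp only [ite_mul, zero_mul, Finset.sum_ite_eq, Finset.mem_univ, if_true, ← Finset.mul_sum]
  ring

theorem not_exceptional {d : G.V → ℕ} (hP : PropertyP G d) :
    ¬ ∃ i j, i ≠ j ∧ G.cartanWeight i j = 1 ∧
      ∀ k, d k = (if k = i then 1 else 0) + (if k = j then 1 else 0) := by
  classical
  rintro ⟨i, j, hij, hw, hd⟩
  refine hP.2 ⟨i, j, hij, ?_, ?_, ?_, ?_⟩
  · ext k
    simp only [Set.mem_ofPred_eq, Set.mem_insert_iff, Set.mem_singleton_iff, hd k]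
    by_cases h1 : k = i <;> by_cases h2 : k = j <;> simp [h1, h2]
  · rw [FinQuiver.cartanWeight, if_neg hij, Nat.sub_zero] at hw
    rw [← hw, Finset.filter_or, Finset.card_union_of_disjoint]
    · rfl
    · rw [Finset.disjoint_filter]
      rintro a - ⟨h1, -⟩ ⟨h2, -⟩
      exact hij (h1.symm.trans h2)
  · simp [hd, hij]
  · simp [hd, hij.symm]

theorem colorCard_sigma_fst {V : Type*} [DecidableEq V] (d : V → ℕ) [Fintype V] (i : V) :
    colorCard (Sigma.fst : (Σ i, Fin (d i)) → V) i = d i := by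
  rw [colorCard, Fintype.card_congr (Equiv.sigmaSubtype i)]
  simp

/-- The dimension estimate driving the convergence. -/
theorem finrank_commuting_estimate {d : G.V → ℕ} (hP : PropertyP G d) {F : Type*} [Field F]
    {A : Subalgebra F (Matrix (Σ i, Fin (d i)) (Σ i, Fin (d i)) F)}
    (hA : ∀ i, colorIdem F Sigma.fst i ∈ A)
    (hsymm : ∀ i j, finrank F (matBlock Sigma.fst A i j) = finrank F (matBlock Sigma.fst A j i))
    {ξ : Matrix (Σ i, Fin (d i)) (Σ i, Fin (d i)) F} (hξ : ∀ a ∈ A, a * ξ = ξ * a)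
    (hns : ∀ k : F, ξ ≠ Matrix.scalar _ k) :
    ∑ i, d i * d i + finrank F A + ∑ a : G.E, finrank F (matBlock Sigma.fst A (G.s a) (G.t a)) ≤
      ∑ a : G.E, d (G.s a) * d (G.t a) + finrank F (matComm A)
        + ∑ i, finrank F (matBlock Sigma.fst A i i) := by
  have h := neg_one_le_of_commuting_nonscalar hA cartanWeight_symm
    (two_le_cartanWeight_self hP.1) (one_le_cartanWeight hP.1) hξ hns
  simp only [colorCard_sigma_fst] at h
  replace h := h.resolve_right (not_exceptional hP)
  rw [sum_cartanWeight_mul hP.1 (fun i j => by rw [hsymm i j, mul_comm])] at h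
  simp only [Finset.sum_sub_distrib] at h
  zify
  omega

end QuiverWeight

section Stage

open PowerSeries

variable {F B : Type*} [Field F] [Ring B] [Algebra F B]

/-- The coefficients of `z` below degree `n` vanish. -/
def VanishTo (n : ℕ) (z : B⟦X⟧) : Prop := ∀ k < n, coeff k z = 0

namespace VanishTo

variable {n m : ℕ} {y z : B⟦X⟧}

theorem mono (h : VanishTo n z) (hm : m ≤ n) : VanishTo m z := fun k hk => h k (hk.trans_le hm)

theorem add (hy : VanishTo n y) (hz : VanishTo n z) : VanishTo n (y + z) := fun k hk => by
  rw [map_add, hy k hk, hz k hk, add_zero]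

theorem sub (hy : VanishTo n y) (hz : VanishTo n z) : VanishTo n (y - z) := fun k hk => by
  rw [map_sub, hy k hk, hz k hk, sub_zero]

theorem mul (hy : VanishTo n y) (hz : VanishTo m z) : VanishTo (n + m) (y * z) := fun k hk => by
  rw [coeff_mul]
  refine Finset.sum_eq_zero fun p hp => ?_
  rw [Finset.HasAntidiagonal.mem_antidiagonal] at hp
  by_cases h : p.1 < n
  · rw [hy _ h, zero_mul]
  · rw [hz _ (by omega), mul_zero]

theorem mul_left (y : B⟦X⟧) (hz : VanishTo n z) : VanishTo n (y * z) := by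
  simpa using mul (n := 0) (y := y) (fun k hk => absurd hk (Nat.not_lt_zero k)) hz

theorem mul_right (y : B⟦X⟧) (hz : VanishTo n z) : VanishTo n (z * y) := by
  simpa using mul hz (m := 0) (z := y) (fun k hk => absurd hk (Nat.not_lt_zero k))

theorem coeff_mul_eq (hy : VanishTo n y) (hz : VanishTo m z) :
    coeff (n + m) (y * z) = coeff n y * coeff m z := by
  rw [coeff_mul, Finset.sum_eq_single (n, m)]
  · rintro ⟨a, b⟩ hab hne
    rw [Finset.HasAntidiagonal.mem_antidiagonal] at hab
    simp only at hab ⊢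
    by_cases h : a < n
    · rw [hy _ h, zero_mul]
    · rw [hz b (by
        by_contra hb
        exact hne (Prod.ext (by simp only; omega) (by simp only; omega))), mul_zero]
  · intro h
    simp at h

theorem coeff_mul_eq_left (y : B⟦X⟧) (hz : VanishTo n z) :
    coeff n (y * z) = coeff 0 y * coeff n z := by
  simpa using coeff_mul_eq (n := 0) (y := y) (fun k hk => absurd hk (Nat.not_lt_zero k)) hz

theorem coeff_mul_eq_right (y : B⟦X⟧) (hz : VanishTo n z) :
    coeff n (z * y) = coeff n z * coeff 0 y := by
  simpa using coeff_mul_eq hz (m := 0) (z := y) (fun k hk => absurd hk (Nat.not_lt_zero k))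

end VanishTo

theorem vanishTo_zero (n : ℕ) : VanishTo n (0 : B⟦X⟧) := fun k _ => by simp

theorem vanishTo_succ_X_mul {n : ℕ} {z : B⟦X⟧} : VanishTo (n + 1) (X * z) ↔ VanishTo n z := by
  refine ⟨fun h k hk => ?_, fun h k hk => ?_⟩
  · rw [← coeff_succ_X_mul]
    exact h (k + 1) (by omega)
  · cases k with
    | zero => simp
    | succ k => rw [coeff_succ_X_mul, h k (by omega)]

/-- The algebra of values at `0` of the series commuting with `Ξ` modulo `X ^ n`. -/
def stage (F : Type*) {B : Type*} [Field F] [Ring B] [Algebra F B] (Ξ : B⟦X⟧) (n : ℕ) :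
    Subalgebra F B where
  carrier := {a | ∃ y, coeff 0 y = a ∧ VanishTo n (Ξ * y - y * Ξ)}
  mul_mem' := by
    rintro _ _ ⟨y, rfl, hy⟩ ⟨z, rfl, hz⟩
    refine ⟨y * z, by simp, ?_⟩
    have : Ξ * (y * z) - y * z * Ξ = (Ξ * y - y * Ξ) * z + y * (Ξ * z - z * Ξ) := by noncomm_ring
    rw [this]
    exact (hy.mul_right z).add (hz.mul_left y)
  add_mem' := by
    rintro _ _ ⟨y, rfl, hy⟩ ⟨z, rfl, hz⟩
    refine ⟨y + z, by simp, ?_⟩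
    have : Ξ * (y + z) - (y + z) * Ξ = (Ξ * y - y * Ξ) + (Ξ * z - z * Ξ) := by noncomm_ring
    rw [this]
    exact hy.add hz
  algebraMap_mem' := fun r => ⟨algebraMap F B⟦X⟧ r, by
    rw [PowerSeries.algebraMap_apply, coeff_zero_C], by
    rw [Algebra.commutes, sub_self]
    exact vanishTo_zero n⟩

theorem mem_stage {Ξ : B⟦X⟧} {n : ℕ} {a : B} :
    a ∈ stage F Ξ n ↔ ∃ y, coeff 0 y = a ∧ VanishTo n (Ξ * y - y * Ξ) := Iff.rfl

theorem stage_zero (Ξ : B⟦X⟧) : stage F Ξ 0 = ⊤ := by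
  refine eq_top_iff.2 fun a _ => ⟨C a, by simp, fun k hk => absurd hk (Nat.not_lt_zero k)⟩

theorem stage_antitone (Ξ : B⟦X⟧) : Antitone (stage F Ξ) := by
  rintro m n h _ ⟨y, rfl, hy⟩
  exact ⟨y, rfl, hy.mono h⟩

theorem stage_congr {Ξ Ξ' : B⟦X⟧} {n : ℕ} (h : VanishTo n (Ξ - Ξ')) :
    stage F Ξ n = stage F Ξ' n := by
  have key : ∀ {Ξ Ξ' : B⟦X⟧}, VanishTo n (Ξ - Ξ') → stage F Ξ n ≤ stage F Ξ' n := by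
    rintro Ξ Ξ' h _ ⟨y, rfl, hy⟩
    refine ⟨y, rfl, ?_⟩
    have : Ξ' * y - y * Ξ' = (Ξ * y - y * Ξ) - ((Ξ - Ξ') * y - y * (Ξ - Ξ')) := by noncomm_ring
    rw [this]
    exact hy.sub ((h.mul_right y).sub (h.mul_left y))
  refine le_antisymm (key h) (key ?_)
  rw [← neg_sub]
  exact fun k hk => by rw [map_neg, h k hk, neg_zero]

theorem commute_of_mem_stage {Ξ : B⟦X⟧} {n : ℕ} {a : B} (h : a ∈ stage F Ξ (n + 1)) :
    a * coeff 0 Ξ = coeff 0 Ξ * a := by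
  obtain ⟨y, rfl, hy⟩ := h
  have := hy 0 (Nat.succ_pos n)
  rw [map_sub, sub_eq_zero] at this
  simpa using this.symm

theorem stage_succ_of_central {Ξ Ξ' : B⟦X⟧} {c : F}
    (h : Ξ = algebraMap F B⟦X⟧ c + X * Ξ') (n : ℕ) :
    stage F Ξ (n + 1) = stage F Ξ' n := by
  ext a
  rw [mem_stage, mem_stage]
  refine exists_congr fun y => and_congr_right fun _ => ?_
  have : Ξ * y - y * Ξ = X * (Ξ' * y - y * Ξ') := by
    rw [h, add_mul, mul_add, Algebra.commutes, ← mul_assoc y, (commute_X y).eq]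
    noncomm_ring
  rw [this, vanishTo_succ_X_mul]

theorem mem_stage_of_commute {Ξ : B⟦X⟧} {a : B} (h : ∀ k, a * coeff k Ξ = coeff k Ξ * a)
    (n : ℕ) : a ∈ stage F Ξ n := by
  refine ⟨C a, by simp, ?_⟩
  intro k _
  rw [map_sub, coeff_mul_C, coeff_C_mul, h, sub_self]

theorem trace_coeff_mul_comm (τ : B →ₗ[F] F) (hτ : ∀ x y, τ (x * y) = τ (y * x)) (n : ℕ)
    (u v : B⟦X⟧) : τ (coeff n (u * v)) = τ (coeff n (v * u)) := by
  rw [coeff_mul, coeff_mul, ← Finset.Nat.sum_antidiagonal_swap, map_sum, map_sum]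
  exact Finset.sum_congr rfl fun p _ => hτ _ _

/-- Two deformations of the same truncated series whose stages share `a` and `b` differ by an
element orthogonal to the commutator of `a` and `b`. -/
theorem trace_sub_mul_commutator_eq_zero (τ : B →ₗ[F] F) (hτ : ∀ x y, τ (x * y) = τ (y * x))
    {n : ℕ} {Ξ Ξ' : B⟦X⟧} (h : VanishTo n (Ξ - Ξ')) {a b : B} (ha : a ∈ stage F Ξ (n + 1))
    (ha' : a ∈ stage F Ξ' (n + 1)) (hb : b ∈ stage F Ξ (n + 1)) :
    τ ((coeff n Ξ - coeff n Ξ') * (a * b - b * a)) = 0 := by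
  obtain ⟨u, hu0, hu⟩ := ha
  obtain ⟨v, hv0, hv⟩ := ha'
  obtain ⟨w, hw0, hw⟩ := hb
  have hδ : Ξ * (u - v) - (u - v) * Ξ = (Ξ * u - u * Ξ) - (Ξ' * v - v * Ξ')
      - ((Ξ - Ξ') * v - v * (Ξ - Ξ')) := by noncomm_ring
  have hv1 : VanishTo n (Ξ * (u - v) - (u - v) * Ξ) := by
    rw [hδ]
    exact ((hu.mono n.le_succ).sub (hv.mono n.le_succ)).sub ((h.mul_right v).sub (h.mul_left v))
  have hc : coeff n (Ξ * (u - v) - (u - v) * Ξ) =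
      -((coeff n Ξ - coeff n Ξ') * a - a * (coeff n Ξ - coeff n Ξ')) := by
    rw [hδ, map_sub, map_sub (coeff n), hu n n.lt_succ_self, hv n n.lt_succ_self, map_sub,
      h.coeff_mul_eq_right, h.coeff_mul_eq_left, hv0, map_sub]
    simp
  have h1 := hv1.coeff_mul_eq_left w
  have h2 : coeff n ((u - v) * (Ξ * w - w * Ξ)) = 0 := hw.mul_left _ n n.lt_succ_self
  have h3 : τ (coeff n (w * (Ξ * (u - v) - (u - v) * Ξ))) =
      -τ (coeff n ((u - v) * (Ξ * w - w * Ξ))) := by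
    have e1 : w * (Ξ * (u - v) - (u - v) * Ξ) = (w * Ξ) * (u - v) - w * ((u - v) * Ξ) := by
      noncomm_ring
    have e2 : (u - v) * (Ξ * w - w * Ξ) = ((u - v) * Ξ) * w - (u - v) * (w * Ξ) := by
      noncomm_ring
    rw [e1, e2]
    simp only [map_sub (coeff n), map_sub τ]
    rw [trace_coeff_mul_comm τ hτ n (w * Ξ), trace_coeff_mul_comm τ hτ n w]
    ring
  rw [h1, h2, map_zero, neg_zero, hw0, hc] at h3
  set ω := coeff n Ξ - coeff n Ξ'
  have e3 : ω * (a * b - b * a) = ω * a * b - ω * (b * a) := by noncomm_ring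
  have e4 : b * -(ω * a - a * ω) = -(b * (ω * a) - (b * a) * ω) := by noncomm_ring
  rw [e4, map_neg, map_sub, neg_eq_zero, hτ b, hτ (b * a)] at h3
  rw [e3, map_sub, h3]

end Stage

section SolSpace

open PowerSeries

variable {F B : Type*} [Field F] [Ring B] [Algebra F B]

/-- The power series with prescribed first coefficients and all others zero. -/
noncomputable def seqPS {n : ℕ} (y : Fin n → B) : B⟦X⟧ :=
  PowerSeries.mk fun k => if h : k < n then y ⟨k, h⟩ else 0

theorem coeff_seqPS {n : ℕ} (y : Fin n → B) (k : Fin n) : coeff (k : ℕ) (seqPS y) = y k := by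
  simp [seqPS]

theorem coeff_seqPS_of_lt {n : ℕ} (y : Fin n → B) {k : ℕ} (h : k < n) :
    coeff k (seqPS y) = y ⟨k, h⟩ := by
  simp [seqPS, h]

theorem coeff_seqPS_of_le {n : ℕ} (y : Fin n → B) {k : ℕ} (h : n ≤ k) :
    coeff k (seqPS y) = 0 := by
  simp [seqPS, h.not_gt]

theorem seqPS_add {n : ℕ} (y z : Fin n → B) : seqPS (y + z) = seqPS y + seqPS z := by
  ext k
  rw [map_add]
  by_cases h : k < n
  · simp only [coeff_seqPS_of_lt _ h, Pi.add_apply]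
  · simp only [coeff_seqPS_of_le _ (not_lt.1 h), add_zero]

theorem seqPS_smul {n : ℕ} (r : F) (y : Fin n → B) : seqPS (r • y) = r • seqPS y := by
  ext k
  rw [PowerSeries.coeff_smul]
  by_cases h : k < n
  · simp only [coeff_seqPS_of_lt _ h, Pi.smul_apply]
  · simp only [coeff_seqPS_of_le _ (not_lt.1 h), smul_zero]

theorem seqPS_cons {n : ℕ} (b : B) (y : Fin n → B) :
    seqPS (Fin.cons b y : Fin (n + 1) → B) = C b + X * seqPS y := by
  ext k
  cases k with
  | zero => rw [coeff_seqPS_of_lt _ n.succ_pos]; simp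
  | succ k =>
    rw [map_add, coeff_succ_C, zero_add, coeff_succ_X_mul]
    by_cases h : k < n
    · rw [coeff_seqPS_of_lt _ h, coeff_seqPS_of_lt _ (Nat.succ_lt_succ h)]
      rfl
    · rw [coeff_seqPS_of_le _ (not_lt.1 h), coeff_seqPS_of_le _ (by omega)]

theorem vanishTo_seqPS_snoc_sub {n : ℕ} (y : Fin n → B) (b : B) :
    VanishTo n (seqPS (Fin.snoc y b : Fin (n + 1) → B) - seqPS y) := by
  intro k hk
  rw [map_sub, coeff_seqPS_of_lt _ hk, coeff_seqPS_of_lt _ (hk.trans n.lt_succ_self)]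
  have : (⟨k, hk.trans n.lt_succ_self⟩ : Fin (n + 1)) = Fin.castSucc ⟨k, hk⟩ := rfl
  rw [this, Fin.snoc_castSucc, sub_self]

theorem coeff_seqPS_snoc {n : ℕ} (y : Fin n → B) (b : B) :
    coeff n (seqPS (Fin.snoc y b : Fin (n + 1) → B)) = b := by
  rw [coeff_seqPS_of_lt _ n.lt_succ_self]
  exact Fin.snoc_last (α := fun _ => B) b y

theorem vanishTo_seqPS_coeff_sub (n : ℕ) (z : B⟦X⟧) :
    VanishTo n (seqPS (fun k : Fin n => coeff (k : ℕ) z) - z) := fun k hk => by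
  rw [map_sub, coeff_seqPS_of_lt _ hk, sub_self]

/-- The truncated series in the block cut out by `e` and `f` that commute with `Ξ`
modulo `X ^ n`. -/
def solSpace (F : Type*) {B : Type*} [Field F] [Ring B] [Algebra F B] (Ξ : B⟦X⟧) (e f : B)
    (n : ℕ) : Submodule F (Fin n → B) where
  carrier := {y | (∀ k, e * y k * f = y k) ∧ VanishTo n (Ξ * seqPS y - seqPS y * Ξ)}
  zero_mem' := by
    refine ⟨by simp, ?_⟩
    have : seqPS (0 : Fin n → B) = 0 := by
      have h := seqPS_smul (0 : F) (0 : Fin n → B)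
      rwa [zero_smul, zero_smul] at h
    rw [this]
    simpa using vanishTo_zero n
  add_mem' := by
    rintro y z ⟨hy, hy'⟩ ⟨hz, hz'⟩
    refine ⟨fun k => by rw [Pi.add_apply, mul_add, add_mul, hy, hz], ?_⟩
    rw [seqPS_add, mul_add, add_mul, add_sub_add_comm]
    exact hy'.add hz'
  smul_mem' := by
    rintro r y ⟨hy, hy'⟩
    refine ⟨fun k => by rw [Pi.smul_apply, mul_smul_comm, smul_mul_assoc, hy], fun k hk => ?_⟩
    rw [seqPS_smul, mul_smul_comm, smul_mul_assoc, ← smul_sub, PowerSeries.coeff_smul, hy' k hk,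
      smul_zero]

/-- The linear inclusion of sequences of length `n` into those of length `n + 1` starting
with zero. -/
def consZero (F B : Type*) [Field F] [Ring B] [Algebra F B] (n : ℕ) :
    (Fin n → B) →ₗ[F] (Fin (n + 1) → B) where
  toFun y := Fin.cons 0 y
  map_add' y z := by
    ext k
    refine Fin.cases (by simp) (fun k => by simp) k
  map_smul' r y := by
    ext k
    refine Fin.cases (by simp) (fun k => by simp) k

theorem solSpace_inf_ker (Ξ : B⟦X⟧) (e f : B) (n : ℕ) :
    solSpace F Ξ e f (n + 1) ⊓ LinearMap.ker (LinearMap.proj (R := F) (φ := fun _ => B) 0) =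
      (solSpace F Ξ e f n).map (consZero F B n) := by
  have key : ∀ y : Fin n → B, Ξ * seqPS (consZero F B n y) - seqPS (consZero F B n y) * Ξ =
      X * (Ξ * seqPS y - seqPS y * Ξ) := by
    intro y
    have : seqPS (consZero F B n y) = X * seqPS y := by
      have := seqPS_cons 0 y
      rwa [map_zero, zero_add] at this
    rw [this, ← mul_assoc, (commute_X Ξ).eq]
    noncomm_ring
  ext y
  constructor
  · rintro ⟨⟨h1, h2⟩, h0⟩
    have hy : consZero F B n (Fin.tail y) = y := by
      have h0' : y 0 = 0 := h0
      change Fin.cons 0 (Fin.tail y) = y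
      rw [← h0', Fin.cons_self_tail]
    refine ⟨Fin.tail y, ⟨fun k => h1 k.succ, ?_⟩, hy⟩
    rw [← hy, key, vanishTo_succ_X_mul] at h2
    exact h2
  · rintro ⟨y, ⟨h1, h2⟩, rfl⟩
    refine ⟨⟨fun k => ?_, ?_⟩, rfl⟩
    · refine Fin.cases ?_ (fun k => ?_) k
      · simp [consZero]
      · exact h1 k
    · rw [key, vanishTo_succ_X_mul]
      exact h2

theorem solSpace_map_proj {Ξ : B⟦X⟧} {e f : B} (he : IsIdempotentElem e) (hf : IsIdempotentElem f)
    (heΞ : ∀ k, e * coeff k Ξ = coeff k Ξ * e) (hfΞ : ∀ k, f * coeff k Ξ = coeff k Ξ * f) (n : ℕ) :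
    (solSpace F Ξ e f (n + 1)).map (LinearMap.proj (R := F) (φ := fun _ => B) 0) =
      (Subalgebra.toSubmodule (stage F Ξ (n + 1))).map (LinearMap.mulLeftRight F (e, f)) := by
  have hC : ∀ {g : B}, (∀ k, g * coeff k Ξ = coeff k Ξ * g) → C g * Ξ = Ξ * C g := by
    intro g hg
    ext k
    rw [coeff_C_mul, coeff_mul_C, hg]
  ext a
  constructor
  · rintro ⟨y, ⟨h1, h2⟩, rfl⟩
    exact ⟨y 0, ⟨seqPS y, coeff_seqPS y 0, h2⟩, h1 0⟩
  · rintro ⟨_, ⟨z, rfl, hz⟩, rfl⟩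
    refine ⟨fun k => coeff (k : ℕ) (C e * z * C f), ⟨fun k => ?_, ?_⟩, ?_⟩
    · simp only [coeff_C_mul, coeff_mul_C]
      rw [mul_assoc, mul_assoc (e * _), hf.eq, ← mul_assoc, ← mul_assoc, he.eq]
    · have h := vanishTo_seqPS_coeff_sub (n + 1) (C e * z * C f)
      set u := seqPS (fun k : Fin (n + 1) => coeff (k : ℕ) (C e * z * C f))
      have hz' : Ξ * (C e * z * C f) - C e * z * C f * Ξ = C e * ((Ξ * z - z * Ξ) * C f) := by
        rw [mul_assoc (C e * z), hC hfΞ, ← mul_assoc, ← mul_assoc, ← hC heΞ]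
        noncomm_ring
      have : Ξ * u - u * Ξ = Ξ * (u - C e * z * C f) - (u - C e * z * C f) * Ξ
          + (Ξ * (C e * z * C f) - C e * z * C f * Ξ) := by noncomm_ring
      rw [this, hz']
      exact ((h.mul_left Ξ).sub (h.mul_right Ξ)).add ((hz.mul_right _).mul_left _)
    · simp

theorem finrank_solSpace [FiniteDimensional F B] {Ξ : B⟦X⟧} {e f : B} (he : IsIdempotentElem e)
    (hf : IsIdempotentElem f) (heΞ : ∀ k, e * coeff k Ξ = coeff k Ξ * e)
    (hfΞ : ∀ k, f * coeff k Ξ = coeff k Ξ * f) (n : ℕ) :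
    finrank F (solSpace F Ξ e f n) = ∑ k ∈ Finset.range n,
      finrank F ((Subalgebra.toSubmodule (stage F Ξ (k + 1))).map
        (LinearMap.mulLeftRight F (e, f))) := by
  induction n with
  | zero =>
    rw [Finset.sum_range_zero]
    exact finrank_zero_of_subsingleton
  | succ n ih =>
    have hinj : Function.Injective (consZero F B n) := fun y z h => by
      have := congrArg Fin.tail h
      exact this
    rw [Finset.sum_range_succ, ← ih, ← finrank_map_add_finrank_inf_ker (LinearMap.proj 0),
      solSpace_inf_ker, solSpace_map_proj he hf heΞ hfΞ, add_comm,
      ← LinearEquiv.finrank_eq (Submodule.equivMapOfInjective _ hinj _)]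

end SolSpace

section Perp

variable {F V I g : Type*} [Field F] [DecidableEq V] [Fintype I] [DecidableEq I]
  [AddCommGroup g] [Module F g]

theorem colorIdem_mul_of_ne (c : I → V) {i j : V} (h : i ≠ j) :
    colorIdem F c i * colorIdem F c j = 0 := by
  rw [colorIdem, colorIdem, Matrix.diagonal_mul_diagonal, ← Matrix.diagonal_zero]
  congr 1
  ext x
  split_ifs with h1 h2
  · exact absurd (h1.symm.trans h2) h
  all_goals simp

/-- The trace pairing between the range of `β` and the commutators of `A`. -/
noncomputable def commPairing (β : g →ₗ[F] Matrix I I F) (A : Subalgebra F (Matrix I I F)) :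
    g →ₗ[F] matComm A →ₗ[F] F :=
  ((LinearMap.mul F (Matrix I I F)).compr₂ (Matrix.traceLinearMap I F F)).compl₁₂ β
    (matComm A).subtype

theorem commPairing_apply (β : g →ₗ[F] Matrix I I F) (A : Subalgebra F (Matrix I I F)) (η : g)
    (z : matComm A) : commPairing β A η z = (β η * z).trace := rfl

theorem finrank_range_flip_le {M N : Type*} [AddCommGroup M] [Module F M] [AddCommGroup N]
    [Module F N] [FiniteDimensional F M] [FiniteDimensional F N] (b : M →ₗ[F] N →ₗ[F] F) :
    finrank F (LinearMap.range b.flip) ≤ finrank F (LinearMap.range b) := by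
  rw [← LinearMap.finrank_range_dualMap_eq_finrank_range b]
  refine Submodule.finrank_mono ?_
  rintro _ ⟨y, rfl⟩
  exact ⟨Dual.eval F N y, rfl⟩

/-- The matrices with zero diagonal blocks. -/
def offBlock (F : Type*) [Field F] (c : I → V) : Submodule F (Matrix I I F) :=
  ⨅ i, LinearMap.ker (LinearMap.mulLeftRight F (colorIdem F c i, colorIdem F c i))

theorem mem_offBlock {c : I → V} {z : Matrix I I F} :
    z ∈ offBlock F c ↔ ∀ i, colorIdem F c i * z * colorIdem F c i = 0 := by
  simp [offBlock, Submodule.mem_iInf]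

theorem matComm_le (A : Subalgebra F (Matrix I I F)) : matComm A ≤ Subalgebra.toSubmodule A := by
  rw [matComm, Submodule.span_le]
  rintro _ ⟨a, ha, b, hb, rfl⟩
  exact A.sub_mem (A.mul_mem ha hb) (A.mul_mem hb ha)

theorem sum_finrank_matBlock_add_le [Fintype V] {c : I → V} {A : Subalgebra F (Matrix I I F)}
    (hA : ∀ i, colorIdem F c i ∈ A) :
    ∑ i, finrank F (matBlock c A i i) +
      finrank F (offBlock F c ⊓ Subalgebra.toSubmodule A : Submodule F _) ≤ finrank F A := by
  let ψ : (∀ i, matBlock c A i i) →ₗ[F] Matrix I I F :=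
    LinearMap.lsum F (fun i => matBlock c A i i) F fun i => (matBlock c A i i).subtype
  have hψ : ∀ s, ψ s = ∑ i, (s i : Matrix I I F) := fun s => by simp [ψ, LinearMap.lsum_apply]
  have hcut : ∀ s k, colorIdem F c k * ψ s * colorIdem F c k = s k := by
    intro s k
    rw [hψ, Finset.mul_sum, Finset.sum_mul, Finset.sum_eq_single k]
    · obtain ⟨a, -, ha⟩ := (s k).2
      rw [← ha, LinearMap.mulLeftRight_apply]
      simp only [mul_assoc, (isIdempotentElem_colorIdem c k).eq]
      simp only [← mul_assoc, (isIdempotentElem_colorIdem c k).eq]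
    · intro b _ hb
      obtain ⟨a, -, ha⟩ := (s b).2
      rw [← ha, LinearMap.mulLeftRight_apply]
      simp only [mul_assoc, colorIdem_mul_of_ne c hb, mul_zero]
    · simp
  have hinj : Function.Injective ψ := by
    intro s s' h
    ext1 k
    exact Subtype.ext (by rw [← hcut, h, hcut])
  have hdisj : LinearMap.range ψ ⊓ (offBlock F c ⊓ Subalgebra.toSubmodule A) = ⊥ := by
    rw [eq_bot_iff]
    rintro _ ⟨⟨s, rfl⟩, h, -⟩
    have : s = 0 := by
      ext1 k
      exact Subtype.ext (by rw [← hcut, mem_offBlock.1 h k]; rfl)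
    rw [this, map_zero]
    exact Submodule.zero_mem _
  have hle : LinearMap.range ψ ⊔ (offBlock F c ⊓ Subalgebra.toSubmodule A) ≤
      Subalgebra.toSubmodule A := by
    refine sup_le ?_ inf_le_right
    rintro _ ⟨s, rfl⟩
    rw [hψ]
    refine sum_mem fun i _ => ?_
    obtain ⟨a, ha, ha'⟩ := (s i).2
    rw [← ha', LinearMap.mulLeftRight_apply]
    exact A.mul_mem (A.mul_mem (hA i) ha) (hA i)
  have h := Submodule.finrank_sup_add_finrank_inf_eq (LinearMap.range ψ)
    (offBlock F c ⊓ Subalgebra.toSubmodule A)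
  rw [hdisj, finrank_bot, add_zero, LinearMap.finrank_range_of_inj hinj,
    Module.finrank_pi_fintype] at h
  rw [← h]
  exact Submodule.finrank_mono hle

theorem finrank_ker_commPairing_add_le [Fintype V] [FiniteDimensional F g] {c : I → V}
    {A : Subalgebra F (Matrix I I F)}
    (hA : ∀ i, colorIdem F c i ∈ A) {β : g →ₗ[F] Matrix I I F}
    (hβ : ∀ i m, colorIdem F c i * m * colorIdem F c i ∈ LinearMap.range β) :
    finrank F (LinearMap.ker (commPairing β A)) + finrank F (matComm A)
      + ∑ i, finrank F (matBlock c A i i) ≤ finrank F g + finrank F A := by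
  have h1 := LinearMap.finrank_range_add_finrank_ker (commPairing β A)
  have h2 := LinearMap.finrank_range_add_finrank_ker (commPairing β A).flip
  have h3 := finrank_range_flip_le (commPairing β A)
  have h4 := sum_finrank_matBlock_add_le hA
  have h5 : finrank F (LinearMap.ker (commPairing β A).flip) ≤
      finrank F (offBlock F c ⊓ Subalgebra.toSubmodule A : Submodule F _) := by
    rw [LinearEquiv.finrank_eq (Submodule.equivMapOfInjective _
      (Submodule.injective_subtype (matComm A)) _)]
    refine Submodule.finrank_mono ?_
    rintro _ ⟨z, hz, rfl⟩
    refine ⟨mem_offBlock.2 fun i => ?_, matComm_le A z.2⟩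
    refine Matrix.ext_iff_trace_mul_left.2 fun m => ?_
    obtain ⟨η, hη⟩ := hβ i m
    have h := LinearMap.congr_fun (LinearMap.mem_ker.1 hz) η
    rw [LinearMap.flip_apply, commPairing_apply, hη] at h
    rw [mul_zero, Matrix.trace_zero]
    change (m * (colorIdem F c i * z * colorIdem F c i)).trace = 0
    rw [← mul_assoc, Matrix.trace_mul_comm]
    simpa only [mul_assoc, LinearMap.zero_apply] using h
  omega

end Perp

section Analysis

theorem summable_of_le_mul_add {u s : ℕ → ℝ} {θ : ℝ} (hu : ∀ n, 0 ≤ u n) (hs : ∀ n, 0 ≤ s n)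
    (hθ : θ < 1) (h : ∀ n, u (n + 1) ≤ θ * u n + s n) (hsum : Summable s) : Summable u := by
  refine summable_of_sum_range_le (c := (u 0 + ∑' n, s n) / (1 - θ)) hu fun n => ?_
  rw [le_div_iff₀ (by linarith)]
  have h1 : ∑ k ∈ Finset.range n, s k ≤ ∑' n, s n := hsum.sum_le_tsum _ fun k _ => hs k
  have h2 : ∑ k ∈ Finset.range n, u (k + 1) ≤
      θ * ∑ k ∈ Finset.range n, u k + ∑ k ∈ Finset.range n, s k := by
    rw [Finset.mul_sum, ← Finset.sum_add_distrib]
    exact Finset.sum_le_sum fun k _ => h k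
  have h3 : ∑ k ∈ Finset.range n, u k ≤ ∑ k ∈ Finset.range n, u (k + 1) + u 0 := by
    rw [← Finset.sum_range_succ']
    rw [Finset.sum_range_succ]
    exact le_add_of_nonneg_right (hu n)
  linarith

theorem summable_of_triangular {α : Type*} [PartialOrder α] [Fintype α] [DecidableLE α]
    {u : ℕ → α → ℝ} {θ : ℝ} (hu : ∀ n a, 0 ≤ u n a) (hθ0 : 0 ≤ θ) (hθ : θ < 1)
    (h : ∀ n a, u (n + 1) a ≤ θ * ∑ b ∈ Finset.univ.filter (a ≤ ·), u n b) (a : α) :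
    Summable fun n => u n a := by
  classical
  induction a using WellFoundedGT.induction with
  | _ a ih =>
  refine summable_of_le_mul_add (s := fun n => θ * ∑ b ∈ Finset.univ.filter (a < ·), u n b)
    (fun n => hu n a) (fun n => mul_nonneg hθ0 (Finset.sum_nonneg fun b _ => hu n b)) hθ
    (fun n => ?_) (Summable.mul_left _ (summable_sum fun b hb => ih b (by simpa using hb)))
  refine (h n a).trans_eq ?_
  have : Finset.univ.filter (a ≤ ·) = insert a (Finset.univ.filter (a < ·)) := by
    ext b
    simp [le_iff_eq_or_lt, eq_comm]
  rw [this, Finset.sum_insert (by simp), mul_add]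

end Analysis

section Recursion

variable {F B g : Type*} [Field F] [Ring B] [Algebra F B] [AddCommGroup g] [Module F g]

/-- The series with coefficients the images of a truncated sequence. -/
noncomputable def jetSeries (β : g →ₗ[F] B) {n : ℕ} (ξ : Fin n → g) : PowerSeries B :=
  seqPS fun k => β (ξ k)

theorem jetSeries_cons (β : g →ₗ[F] B) {n : ℕ} (c : g) (ξ : Fin n → g) :
    jetSeries β (Fin.cons c ξ : Fin (n + 1) → g) =
      PowerSeries.C (β c) + PowerSeries.X * jetSeries β ξ := by
  rw [jetSeries, jetSeries, ← seqPS_cons]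
  congr 1
  ext1 k
  refine Fin.cases rfl (fun k => rfl) k

theorem jetSeries_snoc (β : g →ₗ[F] B) {n : ℕ} (ξ : Fin n → g) (η : g) :
    jetSeries β (Fin.snoc ξ η : Fin (n + 1) → g) =
      seqPS (Fin.snoc (fun k => β (ξ k)) (β η) : Fin (n + 1) → B) := by
  rw [jetSeries]
  congr 1
  ext1 k
  refine Fin.lastCases (by simp) (fun k => by simp) k

theorem vanishTo_jetSeries_snoc_sub (β : g →ₗ[F] B) {n : ℕ} (ξ : Fin n → g) (η : g) :
    VanishTo n (jetSeries β (Fin.snoc ξ η : Fin (n + 1) → g) - jetSeries β ξ) := by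
  rw [jetSeries_snoc]
  exact vanishTo_seqPS_snoc_sub _ _

/-- The total weight of the stages of a truncated sequence. -/
noncomputable def jetWeight (β : g →ₗ[F] B) (α : Subalgebra F B → ℕ) {n : ℕ} (ξ : Fin n → g) : ℕ :=
  ∑ k ∈ Finset.range n, α (stage F (jetSeries β ξ) (k + 1))

theorem stage_jetSeries_snoc (β : g →ₗ[F] B) {n k : ℕ} (hk : k ≤ n) (ξ : Fin n → g) (η : g) :
    stage F (jetSeries β (Fin.snoc ξ η : Fin (n + 1) → g)) k = stage F (jetSeries β ξ) k :=
  stage_congr ((vanishTo_jetSeries_snoc_sub β ξ η).mono hk)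

theorem jetWeight_snoc (β : g →ₗ[F] B) (α : Subalgebra F B → ℕ) {n : ℕ} (ξ : Fin n → g) (η : g) :
    jetWeight β α (Fin.snoc ξ η : Fin (n + 1) → g) =
      jetWeight β α ξ + α (stage F (jetSeries β (Fin.snoc ξ η : Fin (n + 1) → g)) (n + 1)) := by
  rw [jetWeight, Finset.sum_range_succ, jetWeight]
  congr 1
  refine Finset.sum_congr rfl fun k hk => ?_
  rw [stage_jetSeries_snoc β (by simpa using hk)]

theorem jetWeight_cons_of_central (β : g →ₗ[F] B) (α : Subalgebra F B → ℕ) {n : ℕ}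
    (ξ : Fin n → g) {c : g} {z : F} (hc : β c = algebraMap F B z) :
    jetWeight β α (Fin.cons c ξ : Fin (n + 1) → g) = α ⊤ + jetWeight β α ξ := by
  have h : jetSeries β (Fin.cons c ξ : Fin (n + 1) → g) =
      algebraMap F (PowerSeries B) z + PowerSeries.X * jetSeries β ξ := by
    rw [jetSeries_cons, hc, PowerSeries.algebraMap_apply]
  rw [jetWeight, Finset.sum_congr rfl fun k _ => congrArg α (stage_succ_of_central h k),
    Finset.sum_range_succ', stage_zero, add_comm]
  rfl

theorem card_filter_stage_le {I : Type*} [Fintype I] [DecidableEq I] [Fintype F] [Fintype g]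
    (β : g →ₗ[F] Matrix I I F) {n : ℕ} (ξ : Fin n → g) (A : Subalgebra F (Matrix I I F))
    [DecidablePred fun η : g =>
      stage F (jetSeries β (Fin.snoc ξ η : Fin (n + 1) → g)) (n + 1) = A] :
    (Finset.univ.filter fun η : g =>
      stage F (jetSeries β (Fin.snoc ξ η : Fin (n + 1) → g)) (n + 1) = A).card ≤
        Fintype.card F ^ finrank F (LinearMap.ker (commPairing β A)) := by
  classical
  rcases Finset.eq_empty_or_nonempty (Finset.univ.filter fun η : g =>
      stage F (jetSeries β (Fin.snoc ξ η : Fin (n + 1) → g)) (n + 1) = A) with h | ⟨η₀, h₀⟩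
  · simp [h]
  rw [Finset.mem_filter] at h₀
  rw [← Module.card_eq_pow_finrank, ← Finset.card_univ]
  have hmem : ∀ η, stage F (jetSeries β (Fin.snoc ξ η : Fin (n + 1) → g)) (n + 1) = A →
      η - η₀ ∈ LinearMap.ker (commPairing β A) := by
    intro η hη
    have key : matComm A ≤ LinearMap.ker
        ((Matrix.traceLinearMap I F F).comp (LinearMap.mulLeft F (β (η - η₀)))) := by
      rw [matComm, Submodule.span_le]
      rintro _ ⟨a, ha, b, hb, rfl⟩
      have := trace_sub_mul_commutator_eq_zero (Matrix.traceLinearMap I F F)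
        (fun x y => Matrix.trace_mul_comm x y)
        (Ξ := jetSeries β (Fin.snoc ξ η : Fin (n + 1) → g))
        (Ξ' := jetSeries β (Fin.snoc ξ η₀ : Fin (n + 1) → g)) (n := n) (a := a) (b := b)
        (by
          have := (vanishTo_jetSeries_snoc_sub β ξ η).sub (vanishTo_jetSeries_snoc_sub β ξ η₀)
          rwa [sub_sub_sub_cancel_right] at this)
        (by rw [hη]; exact ha) (by rw [h₀.2]; exact ha) (by rw [hη]; exact hb)
      rw [jetSeries_snoc, jetSeries_snoc, coeff_seqPS_snoc, coeff_seqPS_snoc, ← map_sub] at this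
      exact this
    rw [LinearMap.mem_ker]
    ext z
    exact key z.2
  refine Finset.card_le_card_of_injOn
    (fun η => if h : η - η₀ ∈ LinearMap.ker (commPairing β A) then ⟨η - η₀, h⟩ else 0)
    (fun _ _ => Finset.mem_coe.2 (Finset.mem_univ _)) ?_
  intro η hη η' hη' heq
  have h1 := hmem η (Finset.mem_filter.1 hη).2
  have h2 := hmem η' (Finset.mem_filter.1 hη').2
  simp only [dif_pos h1, dif_pos h2, Subtype.mk.injEq] at heq
  exact sub_left_injective heq

end Recursion

section Convergence

variable {F B g : Type*} [Field F] [Ring B] [Algebra F B] [AddCommGroup g] [Module F g]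
  [Fintype g]

/-- The weighted count of the truncated sequences of length `n`. -/
noncomputable def jetSum (q : ℝ) (β : g →ₗ[F] B) (α : Subalgebra F B → ℕ) (n : ℕ) : ℝ :=
  ∑ ξ : Fin n → g, q ^ jetWeight β α ξ

open Classical in
/-- The weighted count of the truncated sequences of length `n + 1` with noncentral first term
and prescribed last stage. -/
noncomputable def stageSum (q : ℝ) (β : g →ₗ[F] B) (α : Subalgebra F B → ℕ) (n : ℕ)
    (A : Subalgebra F B) : ℝ :=
  ∑ ξ : Fin (n + 1) → g,
    if (¬ ∃ z, β (ξ 0) = algebraMap F B z) ∧ stage F (jetSeries β ξ) (n + 1) = A then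
      q ^ jetWeight β α ξ else 0

theorem stageSum_nonneg {q : ℝ} (hq : 0 ≤ q) (β : g →ₗ[F] B) (α : Subalgebra F B → ℕ) (n : ℕ)
    (A : Subalgebra F B) : 0 ≤ stageSum q β α n A :=
  Finset.sum_nonneg fun ξ _ => by split_ifs <;> positivity

open Classical in
theorem jetSum_succ [Fintype (Subalgebra F B)] {q : ℝ} {β : g →ₗ[F] B}
    {α : Subalgebra F B → ℕ} (hc : ((Finset.univ.filter fun c : g =>
      ∃ z, β c = algebraMap F B z).card : ℝ) = q) (n : ℕ) :
    jetSum q β α (n + 1) = q ^ (α ⊤ + 1) * jetSum q β α n + ∑ A, stageSum q β α n A := by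
  have h1 : ∑ A, stageSum q β α n A = ∑ ξ : Fin (n + 1) → g,
      if ¬ ∃ z, β (ξ 0) = algebraMap F B z then q ^ jetWeight β α ξ else 0 := by
    simp only [stageSum]
    rw [Finset.sum_comm]
    refine Finset.sum_congr rfl fun ξ _ => ?_
    simp only [ite_and]
    split_ifs <;> simp
  have h2 : q ^ (α ⊤ + 1) * jetSum q β α n = ∑ ξ : Fin (n + 1) → g,
      if ∃ z, β (ξ 0) = algebraMap F B z then q ^ jetWeight β α ξ else 0 := by
    rw [← (Fin.consEquiv fun _ : Fin (n + 1) => g).sum_comp, Fintype.sum_prod_type]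
    have : ∀ c : g, ∑ ξ : Fin n → g, (if ∃ z, β ((Fin.consEquiv (fun _ : Fin (n + 1) => g)
        (c, ξ)) 0) = algebraMap F B z then
          q ^ jetWeight β α (Fin.consEquiv (fun _ : Fin (n + 1) => g) (c, ξ)) else 0) =
        if ∃ z, β c = algebraMap F B z then q ^ α ⊤ * jetSum q β α n else 0 := by
      intro c
      split_ifs with h
      · rw [jetSum, Finset.mul_sum]
        refine Finset.sum_congr rfl fun ξ _ => ?_
        rw [if_pos (by simpa [Fin.consEquiv] using h), ← pow_add]
        obtain ⟨z, hz⟩ := h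
        rw [← jetWeight_cons_of_central β α ξ hz]
        rfl
      · refine Finset.sum_eq_zero fun ξ _ => ?_
        rw [if_neg (by simpa [Fin.consEquiv] using h)]
    rw [Finset.sum_congr rfl fun c _ => this c, ← Finset.sum_filter, Finset.sum_const,
      nsmul_eq_mul, hc, pow_succ]
    ring
  rw [h1, h2, jetSum, ← Finset.sum_add_distrib]
  refine Finset.sum_congr rfl fun ξ _ => ?_
  split_ifs <;> simp

open Classical in
theorem stageSum_succ_le [Fintype (Subalgebra F B)] {q : ℝ} (hq : 0 ≤ q) {β : g →ₗ[F] B}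
    {α : Subalgebra F B → ℕ} {E : ℕ}
    (hcount : ∀ (n : ℕ) (ξ : Fin (n + 1) → g) (A : Subalgebra F B),
      (¬ ∃ z, β (ξ 0) = algebraMap F B z) →
      ((Finset.univ.filter fun η : g => stage F (jetSeries β (Fin.snoc ξ η : Fin (n + 1 + 1) → g))
        (n + 1 + 1) = A).card : ℝ) * q ^ α A ≤ q ^ E) (n : ℕ) (A : Subalgebra F B) :
    stageSum q β α (n + 1) A ≤
      q ^ E * ∑ A' ∈ Finset.univ.filter (A ≤ ·), stageSum q β α n A' := by
  have h1 : ∑ A' ∈ Finset.univ.filter (A ≤ ·), stageSum q β α n A' = ∑ ξ : Fin (n + 1) → g,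
      if (¬ ∃ z, β (ξ 0) = algebraMap F B z) ∧ A ≤ stage F (jetSeries β ξ) (n + 1) then
        q ^ jetWeight β α ξ else 0 := by
    simp only [stageSum]
    rw [Finset.sum_comm]
    refine Finset.sum_congr rfl fun ξ _ => ?_
    simp only [ite_and]
    split_ifs <;> simp_all
  rw [h1, Finset.mul_sum, stageSum,
    ← (Fin.snocEquiv fun _ : Fin (n + 1 + 1) => g).sum_comp, Fintype.sum_prod_type_right]
  refine Finset.sum_le_sum fun ξ _ => ?_
  have h0 : ∀ η : g, (Fin.snoc ξ η : Fin (n + 1 + 1) → g) 0 = ξ 0 := fun η =>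
    Fin.snoc_castSucc (α := fun _ => g) η ξ 0
  have h2 : ∀ η : g, (if (¬ ∃ z, β ((Fin.snocEquiv (fun _ : Fin (n + 1 + 1) => g) (η, ξ)) 0) =
      algebraMap F B z) ∧ stage F (jetSeries β (Fin.snocEquiv (fun _ : Fin (n + 1 + 1) => g)
        (η, ξ))) (n + 1 + 1) = A then
          q ^ jetWeight β α (Fin.snocEquiv (fun _ : Fin (n + 1 + 1) => g) (η, ξ)) else 0) =
      if stage F (jetSeries β (Fin.snoc ξ η : Fin (n + 1 + 1) → g)) (n + 1 + 1) = A then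
        (if ¬ ∃ z, β (ξ 0) = algebraMap F B z then q ^ α A * q ^ jetWeight β α ξ else 0)
        else 0 := by
    intro η
    change (if (¬ ∃ z, β ((Fin.snoc ξ η : Fin (n + 1 + 1) → g) 0) = algebraMap F B z) ∧
      stage F (jetSeries β (Fin.snoc ξ η : Fin (n + 1 + 1) → g)) (n + 1 + 1) = A then
      q ^ jetWeight β α (Fin.snoc ξ η : Fin (n + 1 + 1) → g) else 0) = _
    rw [h0, jetWeight_snoc]
    by_cases h : stage F (jetSeries β (Fin.snoc ξ η : Fin (n + 1 + 1) → g)) (n + 1 + 1) = A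
    · simp [h, pow_add, mul_comm]
    · simp [h]
  rw [Finset.sum_congr rfl fun η _ => h2 η, ← Finset.sum_filter, Finset.sum_const, nsmul_eq_mul]
  by_cases hz : ∃ z, β (ξ 0) = algebraMap F B z
  · simp [hz]
  · rw [if_pos hz]
    by_cases hA : A ≤ stage F (jetSeries β ξ) (n + 1)
    · rw [if_pos ⟨hz, hA⟩, ← mul_assoc]
      exact mul_le_mul_of_nonneg_right (hcount n ξ A hz) (by positivity)
    · rw [if_neg (fun h => hA h.2), mul_zero]
      refine le_of_eq (mul_eq_zero_of_left ?_ _)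
      rw [Nat.cast_eq_zero, Finset.card_eq_zero, Finset.filter_eq_empty_iff]
      rintro η - rfl
      apply hA
      rw [← stage_jetSeries_snoc β le_rfl ξ η]
      exact stage_antitone _ (Nat.le_succ _)

open Classical in
theorem exists_tendsto_jetSum_div [Finite (Subalgebra F B)] {q : ℝ} (hq : 1 < q)
    {β : g →ₗ[F] B} {α : Subalgebra F B → ℕ}
    (hc : ((Finset.univ.filter fun c : g => ∃ z, β c = algebraMap F B z).card : ℝ) = q)
    (hcount : ∀ (n : ℕ) (ξ : Fin (n + 1) → g) (A : Subalgebra F B),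
      (¬ ∃ z, β (ξ 0) = algebraMap F B z) →
      ((Finset.univ.filter fun η : g => stage F (jetSeries β (Fin.snoc ξ η : Fin (n + 1 + 1) → g))
        (n + 1 + 1) = A).card : ℝ) * q ^ α A ≤ q ^ α ⊤) :
    ∃ L : ℝ, Filter.Tendsto (fun n => jetSum q β α n / (q ^ (α ⊤ + 1)) ^ n)
      Filter.atTop (nhds L) := by
  have := Fintype.ofFinite (Subalgebra F B)
  have hq0 : 0 < q := by linarith
  set Q := q ^ (α ⊤ + 1) with hQ
  have hQ0 : 0 < Q := by positivity
  have hsum : ∀ A, Summable fun n => stageSum q β α n A / Q ^ n := by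
    refine summable_of_triangular (θ := q⁻¹) (u := fun n A => stageSum q β α n A / Q ^ n)
      (fun n A => div_nonneg (stageSum_nonneg hq0.le _ _ _ _) (by positivity)) (by positivity)
      (inv_lt_one_of_one_lt₀ hq) fun n A => ?_
    rw [← Finset.sum_div, div_le_iff₀ (by positivity)]
    refine (stageSum_succ_le hq0.le hcount n A).trans_eq ?_
    rw [pow_succ Q n, hQ]
    field_simp
    ring
  have hstep : ∀ n, jetSum q β α (n + 1) / Q ^ (n + 1) - jetSum q β α n / Q ^ n =
      (∑ A, stageSum q β α n A / Q ^ n) / Q := by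
    intro n
    rw [jetSum_succ hc, ← Finset.sum_div, pow_succ Q n]
    field_simp
    ring
  have hs : Summable fun n => (∑ A, stageSum q β α n A / Q ^ n) / Q :=
    (summable_sum fun A _ => hsum A).div_const Q
  have ht := hs.hasSum.tendsto_sum_nat
  refine ⟨_ + jetSum q β α 0 / Q ^ 0, (ht.add_const (jetSum q β α 0 / Q ^ 0)).congr fun n => ?_⟩
  rw [Finset.sum_congr rfl fun k _ => (hstep k).symm, Finset.sum_range_sub
    (fun n => jetSum q β α n / Q ^ n)]
  ring

end Convergence

section TruncRing

variable {F : Type} [Field F]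

theorem truncRing_mk_eq_mk_iff {n : ℕ} {p r : Polynomial F} :
    (Ideal.Quotient.mk _ p : TruncRing F n) = Ideal.Quotient.mk _ r ↔
      ∀ k < n, p.coeff k = r.coeff k := by
  rw [Ideal.Quotient.eq, Ideal.mem_span_singleton, Polynomial.X_pow_dvd_iff]
  simp only [Polynomial.coeff_sub, sub_eq_zero]

/-- The coefficient of `t ^ k` of an element of `F[t]/(t^n)`, zero for `n ≤ k`. -/
noncomputable def truncCoeff (F : Type) [Field F] (n k : ℕ) : TruncRing F n →ₗ[F] F :=
  if hk : k < n then
    { toFun := fun x => (Quotient.out x : Polynomial F).coeff k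
      map_add' := fun x y => by
        rw [← Polynomial.coeff_add]
        refine truncRing_mk_eq_mk_iff.1 ?_ k hk
        rw [map_add]
        simp only [Ideal.Quotient.mk_out]
      map_smul' := fun r x => by
        rw [RingHom.id_apply, ← Polynomial.coeff_smul]
        refine truncRing_mk_eq_mk_iff.1 ?_ k hk
        rw [Ideal.Quotient.mk_out, Polynomial.smul_eq_C_mul, map_mul, Ideal.Quotient.mk_out]
        obtain ⟨x, rfl⟩ := Ideal.Quotient.mk_surjective x
        rw [← map_mul, ← Polynomial.smul_eq_C_mul]
        rfl }
  else 0

theorem truncCoeff_mk {n k : ℕ} (hk : k < n) (p : Polynomial F) :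
    truncCoeff F n k (Ideal.Quotient.mk _ p) = p.coeff k := by
  rw [truncCoeff, dif_pos hk]
  refine truncRing_mk_eq_mk_iff.1 ?_ k hk
  exact Ideal.Quotient.mk_out _

theorem truncCoeff_of_le {n k : ℕ} (hk : n ≤ k) : truncCoeff F n k = 0 := by
  rw [truncCoeff, dif_neg hk.not_gt]

theorem truncCoeff_mul {n k : ℕ} (hk : k < n) (x y : TruncRing F n) :
    truncCoeff F n k (x * y) = ∑ p ∈ Finset.HasAntidiagonal.antidiagonal k,
      truncCoeff F n p.1 x * truncCoeff F n p.2 y := by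
  obtain ⟨x, rfl⟩ := Ideal.Quotient.mk_surjective x
  obtain ⟨y, rfl⟩ := Ideal.Quotient.mk_surjective y
  rw [← map_mul, truncCoeff_mk hk, Polynomial.coeff_mul]
  refine Finset.sum_congr rfl fun p hp => ?_
  rw [Finset.HasAntidiagonal.mem_antidiagonal] at hp
  rw [truncCoeff_mk (by omega), truncCoeff_mk (by omega)]

/-- The coefficients as a linear equivalence. -/
noncomputable def truncEquiv (F : Type) [Field F] (n : ℕ) : TruncRing F n ≃ₗ[F] (Fin n → F) :=
  LinearEquiv.ofBijective (LinearMap.pi fun k : Fin n => truncCoeff F n k) <| by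
    constructor
    · intro x y h
      obtain ⟨x, rfl⟩ := Ideal.Quotient.mk_surjective x
      obtain ⟨y, rfl⟩ := Ideal.Quotient.mk_surjective y
      refine truncRing_mk_eq_mk_iff.2 fun k hk => ?_
      have := congrFun h ⟨k, hk⟩
      simpa only [LinearMap.pi_apply, truncCoeff_mk hk] using this
    · intro v
      refine ⟨Ideal.Quotient.mk _ (∑ k : Fin n, Polynomial.monomial (k : ℕ) (v k)), ?_⟩
      ext k
      rw [LinearMap.pi_apply, truncCoeff_mk k.2, Polynomial.finsetSum_coeff]
      simp [Polynomial.coeff_monomial, Fin.val_inj]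

theorem truncEquiv_apply (n : ℕ) (x : TruncRing F n) (k : Fin n) :
    truncEquiv F n x k = truncCoeff F n k x := rfl

theorem eq_zero_of_truncCoeff {n : ℕ} {x : TruncRing F n} (h : ∀ k < n, truncCoeff F n k x = 0) :
    x = 0 :=
  (truncEquiv F n).map_eq_zero_iff.1 (funext fun k => h k k.2)

theorem eq_zero_of_truncCoeff_mul {n : ℕ} {x : TruncRing F (n + 1)}
    (h : ∀ y, truncCoeff F (n + 1) n (x * y) = 0) : x = 0 := by
  refine eq_zero_of_truncCoeff fun k hk => ?_
  obtain ⟨x, rfl⟩ := Ideal.Quotient.mk_surjective x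
  have := h (Ideal.Quotient.mk _ (Polynomial.X ^ (n - k)))
  rw [← map_mul, truncCoeff_mk n.lt_succ_self, Polynomial.coeff_mul_X_pow', if_pos (by omega),
    show n - (n - k) = k by omega] at this
  rw [truncCoeff_mk hk, this]

instance truncRing_finite [Finite F] (n : ℕ) : Finite (TruncRing F n) :=
  Finite.of_equiv _ (truncEquiv F n).symm.toEquiv

instance truncRing_finiteDimensional (n : ℕ) : FiniteDimensional F (TruncRing F n) :=
  Module.Finite.equiv (truncEquiv F n).symm

theorem finrank_truncRing (n : ℕ) : finrank F (TruncRing F n) = n := by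
  rw [(truncEquiv F n).finrank_eq]
  simp

end TruncRing

section Duality

variable {F X X' Y Y' : Type*} [Field F] [AddCommGroup X] [Module F X] [AddCommGroup X']
  [Module F X'] [AddCommGroup Y] [Module F Y] [AddCommGroup Y'] [Module F Y']
  [FiniteDimensional F X]

theorem finrank_ker_add_finrank_range_of_adjoint {p : X' →ₗ[F] X →ₗ[F] F}
    {r : Y' →ₗ[F] Y →ₗ[F] F} (hp : Function.Injective p)
    (hr : ∀ y, (∀ y', r y' y = 0) → y = 0) {f : X →ₗ[F] Y} {f' : Y' →ₗ[F] X'}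
    (hadj : ∀ y' x, r y' (f x) = p (f' y') x) :
    finrank F (LinearMap.ker f) + finrank F (LinearMap.range f') = finrank F X := by
  have h : LinearMap.ker f = ((LinearMap.range f').map p).dualCoannihilator := by
    ext x
    rw [LinearMap.mem_ker, Submodule.mem_dualCoannihilator]
    constructor
    · rintro hx _ ⟨_, ⟨y', rfl⟩, rfl⟩
      rw [← hadj, hx, map_zero]
    · intro hx
      refine hr _ fun y' => ?_
      rw [hadj]
      exact hx _ ⟨_, ⟨y', rfl⟩, rfl⟩
  rw [h, LinearEquiv.finrank_eq (Submodule.equivMapOfInjective p hp (LinearMap.range f')),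
    add_comm, Subspace.finrank_add_finrank_dualCoannihilator_eq]

theorem finrank_ker_add_finrank_of_adjoint [FiniteDimensional F Y'] {p : X' →ₗ[F] X →ₗ[F] F}
    {r : Y' →ₗ[F] Y →ₗ[F] F} (hp : Function.Injective p)
    (hr : ∀ y, (∀ y', r y' y = 0) → y = 0) {f : X →ₗ[F] Y} {f' : Y' →ₗ[F] X'}
    (hadj : ∀ y' x, r y' (f x) = p (f' y') x) :
    finrank F (LinearMap.ker f) + finrank F Y' = finrank F X + finrank F (LinearMap.ker f') := by
  have h1 := finrank_ker_add_finrank_range_of_adjoint hp hr hadj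
  have h2 := LinearMap.finrank_range_add_finrank_ker f'
  omega

end Duality

section CoeffMat

variable {F : Type} [Field F] {l m r : Type*}

/-- The matrix of coefficients of `t ^ k`. -/
noncomputable def coeffMat (F : Type) [Field F] (l m : Type*) (n k : ℕ) :
    Matrix l m (TruncRing F n) →ₗ[F] Matrix l m F where
  toFun x := x.map (truncCoeff F n k)
  map_add' x y := by ext; simp
  map_smul' c x := by ext; simp

theorem coeffMat_apply (n k : ℕ) (x : Matrix l m (TruncRing F n)) (a : l) (b : m) :
    coeffMat F l m n k x a b = truncCoeff F n k (x a b) := rfl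

theorem coeffMat_of_le {n k : ℕ} (hk : n ≤ k) (x : Matrix l m (TruncRing F n)) :
    coeffMat F l m n k x = 0 := by
  ext
  rw [coeffMat_apply, truncCoeff_of_le hk]
  rfl

theorem coeffMat_mul [Fintype m] {n k : ℕ} (hk : k < n) (x : Matrix l m (TruncRing F n))
    (y : Matrix m r (TruncRing F n)) :
    coeffMat F l r n k (x * y) = ∑ p ∈ Finset.HasAntidiagonal.antidiagonal k,
      coeffMat F l m n p.1 x * coeffMat F m r n p.2 y := by
  ext a b
  rw [coeffMat_apply, Matrix.mul_apply, map_sum, Matrix.sum_apply]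
  simp only [truncCoeff_mul hk, Matrix.mul_apply, coeffMat_apply]
  rw [Finset.sum_comm]

theorem coeffMat_ext {n : ℕ} {x y : Matrix l m (TruncRing F n)}
    (h : ∀ k < n, coeffMat F l m n k x = coeffMat F l m n k y) : x = y := by
  ext a b
  rw [← sub_eq_zero]
  refine eq_zero_of_truncCoeff fun k hk => ?_
  rw [map_sub, sub_eq_zero]
  exact congrFun (congrFun (h k hk) a) b

theorem exists_coeffMat_eq {n : ℕ} (v : Fin n → Matrix l m F) :
    ∃ x : Matrix l m (TruncRing F n), ∀ k : Fin n, coeffMat F l m n k x = v k := by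
  refine ⟨Matrix.of fun a b => (truncEquiv F n).symm fun k => v k a b, fun k => ?_⟩
  ext a b
  rw [coeffMat_apply, ← truncEquiv_apply, Matrix.of_apply, LinearEquiv.apply_symm_apply]

end CoeffMat

section BlockIncl

variable {F : Type*} [Field F] {V : Type*} [DecidableEq V] {d : V → ℕ}

/-- The inclusion of the coordinates of colour `j`. -/
def inclMat (F : Type*) [Field F] {V : Type*} [DecidableEq V] (d : V → ℕ) (j : V) :
    Matrix (Σ i, Fin (d i)) (Fin (d j)) F :=
  (1 : Matrix (Σ i, Fin (d i)) (Σ i, Fin (d i)) F).submatrix id fun r => ⟨j, r⟩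

theorem transpose_inclMat_mul [Fintype V] (j : V) :
    (inclMat F d j).transpose * inclMat F d j = 1 := by
  ext a b
  simp [inclMat, Matrix.mul_apply, Matrix.one_apply, eq_comm]

theorem inclMat_mul_transpose (j : V) :
    inclMat F d j * (inclMat F d j).transpose = colorIdem F Sigma.fst j := by
  ext ⟨a, a'⟩ ⟨b, b'⟩
  rw [Matrix.mul_apply, colorIdem, Matrix.diagonal_apply]
  by_cases h : a = j
  · subst h
    rw [Finset.sum_eq_single a']
    · simp only [inclMat, Matrix.transpose_apply, Matrix.submatrix_apply, id_eq, Matrix.one_apply,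
        if_true, mul_ite, mul_one, mul_zero]
      exact if_congr eq_comm rfl rfl
    · intro x _ hx
      simp [inclMat, Matrix.one_apply, hx.symm]
    · simp
  · have : ∀ x : Fin (d j), (⟨a, a'⟩ : Σ i, Fin (d i)) ≠ ⟨j, x⟩ := fun x hx =>
      h (congrArg Sigma.fst hx)
    simp [inclMat, Matrix.one_apply, h, this]

/-- The inclusion of block diagonal matrices. -/
def blockIncl (F : Type*) [Field F] {V : Type*} [DecidableEq V] (d : V → ℕ) :
    (∀ i, Matrix (Fin (d i)) (Fin (d i)) F) →ₗ[F]
      Matrix (Σ i, Fin (d i)) (Σ i, Fin (d i)) F where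
  toFun ξ := Matrix.blockDiagonal' ξ
  map_add' := Matrix.blockDiagonal'_add
  map_smul' := Matrix.blockDiagonal'_smul

theorem blockIncl_apply (ξ : ∀ i, Matrix (Fin (d i)) (Fin (d i)) F) :
    blockIncl F d ξ = Matrix.blockDiagonal' ξ := rfl

theorem blockIncl_mul_inclMat [Fintype V] (ξ : ∀ i, Matrix (Fin (d i)) (Fin (d i)) F) (j : V) :
    blockIncl F d ξ * inclMat F d j = inclMat F d j * ξ j := by
  ext ⟨a, a'⟩ b
  have h1 : (blockIncl F d ξ * inclMat F d j) ⟨a, a'⟩ b = blockIncl F d ξ ⟨a, a'⟩ ⟨j, b⟩ := by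
    simp [inclMat, Matrix.mul_apply, Matrix.one_apply]
  rw [h1, blockIncl_apply, Matrix.mul_apply]
  by_cases h : a = j
  · subst h
    simp [inclMat, Matrix.one_apply, Matrix.blockDiagonal'_apply_eq]
  · have : ∀ x : Fin (d j), (⟨a, a'⟩ : Σ i, Fin (d i)) ≠ ⟨j, x⟩ := fun x hx =>
      h (congrArg Sigma.fst hx)
    rw [Matrix.blockDiagonal'_apply_ne _ _ _ h]
    simp [inclMat, this]

theorem blockIncl_transpose (ξ : ∀ i, Matrix (Fin (d i)) (Fin (d i)) F) :
    (blockIncl F d ξ).transpose = blockIncl F d fun i => (ξ i).transpose :=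
  Matrix.blockDiagonal'_transpose ξ

theorem transpose_inclMat_mul_blockIncl [Fintype V]
    (ξ : ∀ i, Matrix (Fin (d i)) (Fin (d i)) F) (j : V) :
    (inclMat F d j).transpose * blockIncl F d ξ = ξ j * (inclMat F d j).transpose := by
  have h := congrArg Matrix.transpose
    (blockIncl_mul_inclMat (F := F) (fun i => (ξ i).transpose) j)
  rwa [Matrix.transpose_mul, Matrix.transpose_mul, blockIncl_transpose] at h

theorem colorIdem_mul_blockIncl [Fintype V] (ξ : ∀ i, Matrix (Fin (d i)) (Fin (d i)) F) (j : V) :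
    colorIdem F Sigma.fst j * blockIncl F d ξ = blockIncl F d ξ * colorIdem F Sigma.fst j := by
  rw [← inclMat_mul_transpose, ← Matrix.mul_assoc, blockIncl_mul_inclMat, Matrix.mul_assoc,
    transpose_inclMat_mul_blockIncl, Matrix.mul_assoc]

theorem colorIdem_mul_mem_range_blockIncl [Fintype V] (i : V)
    (z : Matrix (Σ i, Fin (d i)) (Σ i, Fin (d i)) F) :
    colorIdem F Sigma.fst i * z * colorIdem F Sigma.fst i ∈ LinearMap.range (blockIncl F d) := by
  refine ⟨Pi.single i ((inclMat F d i).transpose * z * inclMat F d i), ?_⟩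
  have h : ∀ w, blockIncl F d (Pi.single i w) = inclMat F d i * w * (inclMat F d i).transpose := by
    intro w
    rw [← Matrix.mul_one (blockIncl F d _), ← sum_colorIdem Sigma.fst, Finset.mul_sum,
      Finset.sum_eq_single i]
    · rw [← inclMat_mul_transpose, ← Matrix.mul_assoc, blockIncl_mul_inclMat, Pi.single_eq_same]
    · intro b _ hb
      rw [← inclMat_mul_transpose, ← Matrix.mul_assoc, blockIncl_mul_inclMat,
        Pi.single_eq_of_ne hb, Matrix.mul_zero, Matrix.zero_mul]
    · simp
  rw [h, ← inclMat_mul_transpose]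
  simp only [Matrix.mul_assoc]

theorem blockIncl_injective : Function.Injective (blockIncl F d) :=
  Matrix.blockDiagonal'_injective

end BlockIncl

section Conversion

variable {F : Type} [Field F] {V : Type*} {d : V → ℕ} {n : ℕ}

/-- The sequence of coefficients of a family of square matrices over `F[t]/(t^n)`. -/
noncomputable def jets (ξ : ∀ i, Matrix (Fin (d i)) (Fin (d i)) (TruncRing F n)) :
    Fin n → ∀ i, Matrix (Fin (d i)) (Fin (d i)) F :=
  fun k i => coeffMat F _ _ n k (ξ i)

theorem jets_bijective : Function.Bijective
    (jets : (∀ i, Matrix (Fin (d i)) (Fin (d i)) (TruncRing F n)) → _) := by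
  constructor
  · intro ξ ξ' h
    ext1 i
    exact coeffMat_ext fun k hk => congrFun (congrFun h ⟨k, hk⟩) i
  · intro v
    choose ξ hξ using fun i => exists_coeffMat_eq fun k => v k i
    exact ⟨ξ, funext fun k => funext fun i => hξ i k⟩

variable [DecidableEq V] [Fintype V]

theorem coeff_jetSeries_jets (ξ : ∀ i, Matrix (Fin (d i)) (Fin (d i)) (TruncRing F n)) (k : ℕ) :
    PowerSeries.coeff k (jetSeries (blockIncl F d) (jets ξ)) =
      blockIncl F d fun i => coeffMat F _ _ n k (ξ i) := by
  by_cases h : k < n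
  · rw [jetSeries, coeff_seqPS_of_lt _ h]
    rfl
  · rw [jetSeries, coeff_seqPS_of_le _ (not_lt.1 h)]
    have : (fun i => coeffMat F (Fin (d i)) (Fin (d i)) n k (ξ i)) = 0 :=
      funext fun i => coeffMat_of_le (not_lt.1 h) _
    rw [this, map_zero]

/-- The commutation defect of a rectangular matrix. -/
noncomputable def intertwine (F : Type*) {R l m : Type*} [Field F] [CommRing R] [Algebra F R]
    [Fintype l] [Fintype m] (u : Matrix l l R) (v : Matrix m m R) :
    Matrix l m R →ₗ[F] Matrix l m R where
  toFun y := u * y - y * v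
  map_add' y z := by rw [Matrix.mul_add, Matrix.add_mul, add_sub_add_comm]
  map_smul' c y := by
    rw [RingHom.id_apply, Matrix.mul_smul, Matrix.smul_mul, smul_sub]

theorem intertwine_apply {F R l m : Type*} [Field F] [CommRing R] [Algebra F R]
    [Fintype l] [Fintype m] (u : Matrix l l R) (v : Matrix m m R) (y : Matrix l m R) :
    intertwine F u v y = u * y - y * v := rfl

/-- The sequence of coefficients of a rectangular block, as matrices on all coordinates. -/
noncomputable def blockJets (F : Type) [Field F] {V : Type*} [DecidableEq V] [Fintype V]
    (d : V → ℕ) (n : ℕ) (j i : V) :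
    Matrix (Fin (d j)) (Fin (d i)) (TruncRing F n) →ₗ[F]
      (Fin n → Matrix (Σ i, Fin (d i)) (Σ i, Fin (d i)) F) where
  toFun x k := inclMat F d j * coeffMat F _ _ n k x * (inclMat F d i).transpose
  map_add' x y := by
    ext1 k
    rw [map_add, Matrix.mul_add, Matrix.add_mul]
    rfl
  map_smul' c x := by
    ext1 k
    rw [map_smul, Matrix.mul_smul, Matrix.smul_mul]
    rfl

theorem inclMat_mul_mul_injective (j i : V) {x y : Matrix (Fin (d j)) (Fin (d i)) F}
    (h : inclMat F d j * x * (inclMat F d i).transpose =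
      inclMat F d j * y * (inclMat F d i).transpose) : x = y := by
  have key : ∀ z : Matrix (Fin (d j)) (Fin (d i)) F, (inclMat F d j).transpose *
      (inclMat F d j * z * (inclMat F d i).transpose) * inclMat F d i = z := by
    intro z
    rw [Matrix.mul_assoc, Matrix.mul_assoc (inclMat F d j * z), transpose_inclMat_mul,
      Matrix.mul_one, ← Matrix.mul_assoc, transpose_inclMat_mul, Matrix.one_mul]
  rw [← key x, h, key]

theorem blockJets_injective (j i : V) : Function.Injective (blockJets F d n j i) := by
  intro x y h
  refine coeffMat_ext fun k hk => ?_
  exact inclMat_mul_mul_injective j i (congrFun h ⟨k, hk⟩)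

theorem coeff_seqPS_blockJets (j i : V) (x : Matrix (Fin (d j)) (Fin (d i)) (TruncRing F n))
    (k : ℕ) : PowerSeries.coeff k (seqPS (blockJets F d n j i x)) =
      inclMat F d j * coeffMat F _ _ n k x * (inclMat F d i).transpose := by
  by_cases h : k < n
  · rw [coeff_seqPS_of_lt _ h]
    rfl
  · rw [coeff_seqPS_of_le _ (not_lt.1 h), coeffMat_of_le (not_lt.1 h), Matrix.mul_zero,
      Matrix.zero_mul]

theorem coeff_commutator_blockJets (ξ : ∀ i, Matrix (Fin (d i)) (Fin (d i)) (TruncRing F n))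
    (j i : V) (x : Matrix (Fin (d j)) (Fin (d i)) (TruncRing F n)) {k : ℕ} (hk : k < n) :
    PowerSeries.coeff k (jetSeries (blockIncl F d) (jets ξ) * seqPS (blockJets F d n j i x) -
      seqPS (blockJets F d n j i x) * jetSeries (blockIncl F d) (jets ξ)) =
      inclMat F d j * coeffMat F _ _ n k (intertwine F (ξ j) (ξ i) x) *
        (inclMat F d i).transpose := by
  rw [intertwine_apply, map_sub, map_sub, Matrix.mul_sub, Matrix.sub_mul, PowerSeries.coeff_mul,
    PowerSeries.coeff_mul, coeffMat_mul hk, coeffMat_mul hk]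
  simp only [coeff_jetSeries_jets, coeff_seqPS_blockJets, Matrix.mul_sum, Matrix.sum_mul]
  congr 1
  · refine Finset.sum_congr rfl fun p _ => ?_
    rw [← Matrix.mul_assoc, ← Matrix.mul_assoc, blockIncl_mul_inclMat]
    simp only [Matrix.mul_assoc]
  · refine Finset.sum_congr rfl fun p _ => ?_
    rw [Matrix.mul_assoc, transpose_inclMat_mul_blockIncl]
    simp only [Matrix.mul_assoc]

theorem map_blockJets_ker (ξ : ∀ i, Matrix (Fin (d i)) (Fin (d i)) (TruncRing F n)) (j i : V) :
    (LinearMap.ker (intertwine F (ξ j) (ξ i))).map (blockJets F d n j i) =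
      solSpace F (jetSeries (blockIncl F d) (jets ξ)) (colorIdem F Sigma.fst j)
        (colorIdem F Sigma.fst i) n := by
  ext y
  constructor
  · rintro ⟨x, hx, rfl⟩
    refine ⟨fun k => ?_, fun k hk => ?_⟩
    · change colorIdem F Sigma.fst j *
        (inclMat F d j * coeffMat F _ _ n k x * (inclMat F d i).transpose) *
          colorIdem F Sigma.fst i = inclMat F d j * coeffMat F _ _ n k x *
            (inclMat F d i).transpose
      rw [← inclMat_mul_transpose, ← inclMat_mul_transpose, Matrix.mul_assoc,
        Matrix.mul_assoc _ (inclMat F d i).transpose, ← Matrix.mul_assoc _ (inclMat F d i),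
        transpose_inclMat_mul, Matrix.one_mul, ← Matrix.mul_assoc, ← Matrix.mul_assoc,
        Matrix.mul_assoc _ _ (inclMat F d j), transpose_inclMat_mul, Matrix.mul_one]
    · rw [coeff_commutator_blockJets ξ j i x hk, LinearMap.mem_ker.1 hx, map_zero,
        Matrix.mul_zero, Matrix.zero_mul]
  · rintro ⟨h1, h2⟩
    obtain ⟨x, hx⟩ := exists_coeffMat_eq
      fun k => (inclMat F d j).transpose * y k * inclMat F d i
    have hxy : blockJets F d n j i x = y := by
      ext1 k
      change inclMat F d j * coeffMat F _ _ n k x * (inclMat F d i).transpose = y k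
      have := h1 k
      rw [← inclMat_mul_transpose, ← inclMat_mul_transpose] at this
      rw [hx]
      simpa only [Matrix.mul_assoc] using this
    subst hxy
    refine ⟨x, LinearMap.mem_ker.2 (coeffMat_ext fun k hk => ?_), rfl⟩
    have := h2 k hk
    rw [coeff_commutator_blockJets ξ j i x hk] at this
    refine inclMat_mul_mul_injective j i ?_
    rw [this, map_zero, Matrix.mul_zero, Matrix.zero_mul]

theorem finrank_ker_intertwine (ξ : ∀ i, Matrix (Fin (d i)) (Fin (d i)) (TruncRing F n))
    (j i : V) :
    finrank F (LinearMap.ker (intertwine F (ξ j) (ξ i))) = ∑ k ∈ Finset.range n,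
      finrank F (matBlock Sigma.fst
        (stage F (jetSeries (blockIncl F d) (jets ξ)) (k + 1)) i j) := by
  have hc : ∀ i k, colorIdem F Sigma.fst i *
      PowerSeries.coeff k (jetSeries (blockIncl F d) (jets ξ)) =
      PowerSeries.coeff k (jetSeries (blockIncl F d) (jets ξ)) * colorIdem F Sigma.fst i := by
    intro i k
    rw [coeff_jetSeries_jets, colorIdem_mul_blockIncl]
  rw [LinearEquiv.finrank_eq (Submodule.equivMapOfInjective _ (blockJets_injective j i) _),
    map_blockJets_ker, finrank_solSpace (isIdempotentElem_colorIdem _ _)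
      (isIdempotentElem_colorIdem _ _) (hc j) (hc i)]
  rfl

end Conversion

section TracePairing

variable {F : Type} [Field F] {l m : Type*} [Fintype l] [Fintype m]

/-- The pairing of rectangular matrices over `F[t]/(t^(n+1))` by the top coefficient of the
trace of the product. -/
noncomputable def tracePairing (F : Type) [Field F] (n : ℕ) (l m : Type*) [Fintype l] [Fintype m] :
    Matrix l m (TruncRing F (n + 1)) →ₗ[F] Matrix m l (TruncRing F (n + 1)) →ₗ[F] F :=
  LinearMap.mk₂ F (fun z y => truncCoeff F (n + 1) n (z * y).trace)
    (fun z z' y => by rw [Matrix.add_mul, Matrix.trace_add, map_add])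
    (fun c z y => by rw [Matrix.smul_mul, Matrix.trace_smul, map_smul])
    (fun z y y' => by rw [Matrix.mul_add, Matrix.trace_add, map_add])
    (fun c z y => by rw [Matrix.mul_smul, Matrix.trace_smul, map_smul])

theorem tracePairing_apply {n : ℕ} (z : Matrix l m (TruncRing F (n + 1)))
    (y : Matrix m l (TruncRing F (n + 1))) :
    tracePairing F n l m z y = truncCoeff F (n + 1) n (z * y).trace := rfl

theorem tracePairing_comm {n : ℕ} (z : Matrix l m (TruncRing F (n + 1)))
    (y : Matrix m l (TruncRing F (n + 1))) :
    tracePairing F n l m z y = tracePairing F n m l y z := by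
  rw [tracePairing_apply, tracePairing_apply, Matrix.trace_mul_comm]

theorem eq_zero_of_tracePairing {n : ℕ} {y : Matrix m l (TruncRing F (n + 1))}
    (h : ∀ z, tracePairing F n l m z y = 0) : y = 0 := by
  classical
  ext a b
  refine eq_zero_of_truncCoeff_mul fun r => ?_
  have := h (Matrix.single b a r)
  rwa [tracePairing_apply, Matrix.trace_single_mul, smul_eq_mul, mul_comm] at this

theorem tracePairing_injective (n : ℕ) : Function.Injective (tracePairing F n l m) := by
  refine (injective_iff_map_eq_zero _).2 fun z hz => ?_
  refine eq_zero_of_tracePairing (l := m) (m := l) fun y => ?_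
  rw [← tracePairing_comm, hz, LinearMap.zero_apply]

theorem finrank_ker_intertwine_comm {n : ℕ} (u : Matrix l l (TruncRing F n))
    (v : Matrix m m (TruncRing F n)) :
    finrank F (LinearMap.ker (intertwine F u v)) =
      finrank F (LinearMap.ker (intertwine F v u)) := by
  classical
  cases n with
  | zero =>
    have h1 := Submodule.finrank_le (LinearMap.ker (intertwine F u v))
    have h2 := Submodule.finrank_le (LinearMap.ker (intertwine F v u))
    rw [finrank_matrix, finrank_truncRing, mul_zero] at h1 h2
    omega
  | succ n =>
    have h := finrank_ker_add_finrank_of_adjoint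
      (tracePairing_injective (F := F) (l := m) (m := l) n)
      (fun y => eq_zero_of_tracePairing) (f := intertwine F u v) (f' := -intertwine F v u) ?_
    · have hk : LinearMap.ker (-intertwine F v u) = LinearMap.ker (intertwine F v u) := by
        ext x
        simp
      rw [hk, finrank_matrix, finrank_matrix, mul_comm (Fintype.card m)] at h
      omega
    · intro z x
      rw [tracePairing_apply, tracePairing_apply, LinearMap.neg_apply, intertwine_apply,
        intertwine_apply, neg_sub, Matrix.mul_sub, Matrix.sub_mul, Matrix.trace_sub,
        Matrix.trace_sub, ← Matrix.mul_assoc, ← Matrix.mul_assoc, Matrix.mul_assoc v,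
        Matrix.trace_mul_comm v]

end TracePairing

section StageSymmetry

variable {F : Type} [Field F] {V : Type*} [DecidableEq V] [Fintype V] {d : V → ℕ} {n : ℕ}

theorem sum_finrank_matBlock_stage_comm (ζ : Fin n → ∀ i, Matrix (Fin (d i)) (Fin (d i)) F)
    (i j : V) :
    ∑ k ∈ Finset.range n,
      finrank F (matBlock Sigma.fst (stage F (jetSeries (blockIncl F d) ζ) (k + 1)) i j) =
    ∑ k ∈ Finset.range n,
      finrank F (matBlock Sigma.fst (stage F (jetSeries (blockIncl F d) ζ) (k + 1)) j i) := by
  obtain ⟨ξ, rfl⟩ := jets_bijective.2 ζ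
  rw [← finrank_ker_intertwine, ← finrank_ker_intertwine, finrank_ker_intertwine_comm]

theorem finrank_matBlock_stage_comm (ζ : Fin n → ∀ i, Matrix (Fin (d i)) (Fin (d i)) F)
    (η : ∀ i, Matrix (Fin (d i)) (Fin (d i)) F) (i j : V) :
    finrank F (matBlock Sigma.fst (stage F (jetSeries (blockIncl F d)
      (Fin.snoc ζ η : Fin (n + 1) → ∀ i, Matrix (Fin (d i)) (Fin (d i)) F)) (n + 1)) i j) =
    finrank F (matBlock Sigma.fst (stage F (jetSeries (blockIncl F d)
      (Fin.snoc ζ η : Fin (n + 1) → ∀ i, Matrix (Fin (d i)) (Fin (d i)) F)) (n + 1)) j i) := by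
  have h := sum_finrank_matBlock_stage_comm
    (Fin.snoc ζ η : Fin (n + 1) → ∀ i, Matrix (Fin (d i)) (Fin (d i)) F) i j
  have h' := sum_finrank_matBlock_stage_comm ζ i j
  rw [Finset.sum_range_succ, Finset.sum_range_succ] at h
  have key : ∀ i j, ∑ k ∈ Finset.range n, finrank F (matBlock Sigma.fst
      (stage F (jetSeries (blockIncl F d)
        (Fin.snoc ζ η : Fin (n + 1) → ∀ i, Matrix (Fin (d i)) (Fin (d i)) F)) (k + 1)) i j) =
      ∑ k ∈ Finset.range n,
        finrank F (matBlock Sigma.fst (stage F (jetSeries (blockIncl F d) ζ) (k + 1)) i j) := by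
    intro i j
    refine Finset.sum_congr rfl fun k hk => ?_
    rw [stage_jetSeries_snoc _ (Nat.succ_le_of_lt (Finset.mem_range.1 hk))]
  rw [key, key] at h
  omega

theorem finrank_matBlock_top (i j : V) :
    finrank F (matBlock Sigma.fst (⊤ : Subalgebra F
      (Matrix (Σ i, Fin (d i)) (Σ i, Fin (d i)) F)) i j) = d i * d j := by
  have h := finrank_ker_intertwine (F := F) (d := d) (n := 1) 0 j i
  have h0 : intertwine F ((0 : ∀ i, Matrix (Fin (d i)) (Fin (d i)) (TruncRing F 1)) j)
      ((0 : ∀ i, Matrix (Fin (d i)) (Fin (d i)) (TruncRing F 1)) i) = 0 := by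
    ext1 y
    simp [intertwine_apply]
  have hs : stage F (jetSeries (blockIncl F d)
      (jets (0 : ∀ i, Matrix (Fin (d i)) (Fin (d i)) (TruncRing F 1)))) (0 + 1) = ⊤ := by
    refine eq_top_iff.2 fun a _ => mem_stage_of_commute (fun k => ?_) _
    rw [coeff_jetSeries_jets]
    have : (fun i => coeffMat F (Fin (d i)) (Fin (d i)) 1 k
        ((0 : ∀ i, Matrix (Fin (d i)) (Fin (d i)) (TruncRing F 1)) i)) = 0 :=
      funext fun i => map_zero _
    rw [this, map_zero, mul_zero, zero_mul]
  rw [Finset.sum_range_one, hs, h0, LinearMap.ker_zero, finrank_top, finrank_matrix,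
    finrank_truncRing, mul_one, Fintype.card_fin, Fintype.card_fin, mul_comm] at h
  exact h.symm

end StageSymmetry

section JetEstimate

variable {F : Type} [Field F] {G : FinQuiver} {d : G.V → ℕ}

/-- The total dimension of the blocks of a subalgebra indexed by the arrows. -/
noncomputable def arrowRank (F : Type) [Field F] (G : FinQuiver) (d : G.V → ℕ)
    (A : Subalgebra F (Matrix (Σ i, Fin (d i)) (Σ i, Fin (d i)) F)) : ℕ :=
  ∑ a : G.E, finrank F (matBlock Sigma.fst A (G.s a) (G.t a))

theorem arrowRank_top : arrowRank F G d ⊤ = ∑ a : G.E, d (G.s a) * d (G.t a) :=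
  Finset.sum_congr rfl fun _ _ => finrank_matBlock_top _ _

theorem finrank_squareMatrices {V : Type*} [Fintype V] (d : V → ℕ) (R : Type*) [CommRing R]
    [Algebra F R] [FiniteDimensional F R] :
    finrank F (∀ i, Matrix (Fin (d i)) (Fin (d i)) R) =
      (∑ i, d i * d i) * finrank F R := by
  rw [finrank_pi_fintype, Finset.sum_mul]
  refine Finset.sum_congr rfl fun i _ => ?_
  rw [finrank_matrix, Fintype.card_fin]

theorem finrank_ker_add_arrowRank_le (hP : PropertyP G d) {n : ℕ}
    (ζ : Fin (n + 1) → ∀ i, Matrix (Fin (d i)) (Fin (d i)) F)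
    (η : ∀ i, Matrix (Fin (d i)) (Fin (d i)) F)
    (hζ : ¬ ∃ z, blockIncl F d (ζ 0) = algebraMap F _ z) :
    finrank F (LinearMap.ker (commPairing (blockIncl F d) (stage F (jetSeries (blockIncl F d)
      (Fin.snoc ζ η : Fin (n + 1 + 1) → ∀ i, Matrix (Fin (d i)) (Fin (d i)) F)) (n + 1 + 1)))) +
    arrowRank F G d (stage F (jetSeries (blockIncl F d)
      (Fin.snoc ζ η : Fin (n + 1 + 1) → ∀ i, Matrix (Fin (d i)) (Fin (d i)) F)) (n + 1 + 1)) ≤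
    ∑ a : G.E, d (G.s a) * d (G.t a) := by
  set A := stage F (jetSeries (blockIncl F d)
    (Fin.snoc ζ η : Fin (n + 1 + 1) → ∀ i, Matrix (Fin (d i)) (Fin (d i)) F)) (n + 1 + 1) with hA
  have hmem : ∀ i, colorIdem F Sigma.fst i ∈ A := by
    intro i
    refine mem_stage_of_commute (fun k => ?_) _
    obtain ⟨ξ, hξ⟩ := jets_bijective.2
      (Fin.snoc ζ η : Fin (n + 1 + 1) → ∀ i, Matrix (Fin (d i)) (Fin (d i)) F)
    rw [← hξ, coeff_jetSeries_jets, colorIdem_mul_blockIncl]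
  have h0 : PowerSeries.coeff 0 (jetSeries (blockIncl F d)
      (Fin.snoc ζ η : Fin (n + 1 + 1) → ∀ i, Matrix (Fin (d i)) (Fin (d i)) F)) =
      blockIncl F d (ζ 0) := by
    rw [jetSeries, coeff_seqPS_of_lt _ (Nat.succ_pos _)]
    exact congrArg _ (Fin.snoc_castSucc (α := fun _ => ∀ i, Matrix (Fin (d i)) (Fin (d i)) F)
      η ζ 0)
  have h1 := finrank_ker_commPairing_add_le (β := blockIncl F d) hmem
    colorIdem_mul_mem_range_blockIncl
  have h2 := finrank_commuting_estimate hP hmem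
    (fun i j => finrank_matBlock_stage_comm ζ η i j) (ξ := blockIncl F d (ζ 0))
    (fun a ha => by rw [← h0]; exact commute_of_mem_stage ha) (fun k hk => hζ ⟨k, hk⟩)
  have h3 := finrank_squareMatrices (F := F) d F
  rw [finrank_self, mul_one] at h3
  rw [h3] at h1
  rw [arrowRank]
  omega

theorem card_scalar_blockIncl [Fintype F] (hd : d ≠ 0)
    [DecidablePred fun c : ∀ i, Matrix (Fin (d i)) (Fin (d i)) F =>
      ∃ z, blockIncl F d c = algebraMap F _ z] [Fintype (∀ i, Matrix (Fin (d i)) (Fin (d i)) F)] :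
    (Finset.univ.filter fun c : ∀ i, Matrix (Fin (d i)) (Fin (d i)) F =>
      ∃ z, blockIncl F d c = algebraMap F _ z).card = Fintype.card F := by
  obtain ⟨i, hi⟩ := Function.ne_iff.1 hd
  have key : ∀ z : F, blockIncl F d (fun _ => algebraMap F _ z) = algebraMap F _ z := by
    intro z
    rw [Algebra.algebraMap_eq_smul_one, ← Matrix.blockDiagonal'_one, ← blockIncl_apply, ← map_smul]
    congr 1
    ext1 i
    rw [Algebra.algebraMap_eq_smul_one]
    rfl
  rw [← Finset.card_univ]
  refine (Finset.card_bij (fun z _ _ => algebraMap F _ z) (fun z _ => ?_) (fun z _ w _ h => ?_)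
    fun c hc => ?_).symm
  · exact Finset.mem_filter.2 ⟨Finset.mem_univ _, z, key z⟩
  · have : Nonempty (Fin (d i)) := ⟨⟨0, Nat.pos_of_ne_zero hi⟩⟩
    exact (algebraMap F (Matrix (Fin (d i)) (Fin (d i)) F)).injective (congrFun h i)
  · obtain ⟨z, hz⟩ := (Finset.mem_filter.1 hc).2
    exact ⟨z, Finset.mem_univ _, blockIncl_injective ((key z).trans hz.symm)⟩

theorem exists_tendsto_jetSum_blockIncl [Fintype F]
    [Fintype (∀ i, Matrix (Fin (d i)) (Fin (d i)) F)] (hd : d ≠ 0) (hP : PropertyP G d) :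
    ∃ L : ℝ, Filter.Tendsto (fun n => jetSum (Fintype.card F : ℝ) (blockIncl F d)
      (arrowRank F G d) n / ((Fintype.card F : ℝ) ^ (∑ a : G.E, d (G.s a) * d (G.t a) + 1)) ^ n)
      Filter.atTop (nhds L) := by
  classical
  have hq : (1 : ℝ) < Fintype.card F := by exact_mod_cast Fintype.one_lt_card
  have : Finite (Subalgebra F (Matrix (Σ i, Fin (d i)) (Σ i, Fin (d i)) F)) :=
    Finite.of_injective _ (SetLike.coe_injective (A := Subalgebra F _))
  rw [← arrowRank_top (F := F)]
  refine exists_tendsto_jetSum_div hq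
    (congrArg _ (by convert card_scalar_blockIncl (F := F) hd)) fun n ζ A hζ => ?_
  rcases Finset.eq_empty_or_nonempty (Finset.univ.filter fun η =>
      stage F (jetSeries (blockIncl F d) (Fin.snoc ζ η : Fin (n + 1 + 1) → _)) (n + 1 + 1) = A)
    with h | ⟨η, hη⟩
  · rw [h, Finset.card_empty, Nat.cast_zero, zero_mul]
    positivity
  · have hA := (Finset.mem_filter.1 hη).2
    have h1 := card_filter_stage_le (blockIncl F d) ζ A
    have h2 := finrank_ker_add_arrowRank_le hP ζ η hζ
    rw [hA] at h2
    rw [arrowRank_top]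
    calc _ ≤ (Fintype.card F : ℝ) ^ finrank F (LinearMap.ker (commPairing (blockIncl F d) A)) *
          (Fintype.card F : ℝ) ^ arrowRank F G d A :=
            mul_le_mul_of_nonneg_right (by exact_mod_cast h1) (by positivity)
      _ ≤ _ := by
        rw [← pow_add]
        exact pow_le_pow_right₀ hq.le h2

end JetEstimate

section PiPairing

variable {F ι : Type*} [Field F] [Fintype ι] {X X' : ι → Type*}
  [∀ a, AddCommGroup (X' a)] [∀ a, Module F (X' a)] [∀ a, AddCommGroup (X a)]
  [∀ a, Module F (X a)]

/-- The sum of a finite family of pairings. -/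
def piPairing (p : ∀ a, X' a →ₗ[F] X a →ₗ[F] F) : (∀ a, X' a) →ₗ[F] (∀ a, X a) →ₗ[F] F :=
  ∑ a, (p a).compl₁₂ (LinearMap.proj a) (LinearMap.proj a)

theorem piPairing_apply (p : ∀ a, X' a →ₗ[F] X a →ₗ[F] F) (z : ∀ a, X' a) (y : ∀ a, X a) :
    piPairing p z y = ∑ a, p a (z a) (y a) := by
  simp [piPairing, LinearMap.sum_apply]

theorem piPairing_injective {p : ∀ a, X' a →ₗ[F] X a →ₗ[F] F}
    (hp : ∀ a, Function.Injective (p a)) : Function.Injective (piPairing p) := by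
  classical
  refine (injective_iff_map_eq_zero _).2 fun z hz => funext fun a => ?_
  refine (injective_iff_map_eq_zero (p a)).1 (hp a) _ (LinearMap.ext fun y => ?_)
  have h := LinearMap.congr_fun hz (Pi.single a y)
  rw [piPairing_apply, Finset.sum_eq_single a (fun b _ hb => by
    rw [Pi.single_eq_of_ne hb, map_zero]) (by simp), Pi.single_eq_same] at h
  exact h

theorem eq_zero_of_piPairing {p : ∀ a, X' a →ₗ[F] X a →ₗ[F] F}
    (hp : ∀ a y, (∀ z, p a z y = 0) → y = 0) {y : ∀ a, X a}
    (h : ∀ z, piPairing p z y = 0) : y = 0 := by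
  classical
  refine funext fun a => hp a _ fun z => ?_
  have h := h (Pi.single a z)
  rwa [piPairing_apply, Finset.sum_eq_single a (fun b _ hb => by
    rw [Pi.single_eq_of_ne hb, map_zero, LinearMap.zero_apply]) (by simp), Pi.single_eq_same] at h

end PiPairing

section Moment

variable {F : Type} [Field F] {G : FinQuiver} {d : G.V → ℕ}

theorem sum_trace_mul_sum_cast {R : Type} [CommRing R] (f : G.E → G.V)
    (M : ∀ a, Matrix (Fin (d (f a))) (Fin (d (f a))) R)
    (ξ : ∀ i, Matrix (Fin (d i)) (Fin (d i)) R) :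
    ∑ i, (ξ i * ∑ a : G.E, if h : f a = i then
      cast (congrArg (fun v => Matrix (Fin (d v)) (Fin (d v)) R) h) (M a) else 0).trace =
      ∑ a, (ξ (f a) * M a).trace := by
  simp only [Matrix.mul_sum, Matrix.trace_sum]
  rw [Finset.sum_comm]
  refine Finset.sum_congr rfl fun a _ => ?_
  rw [Finset.sum_eq_single (f a)]
  · rw [dif_pos rfl, cast_eq]
  · intro i _ hi
    rw [dif_neg (Ne.symm hi), Matrix.mul_zero, Matrix.trace_zero]
  · simp

theorem sum_trace_mul_momentMap {R : Type} [CommRing R] (x : QRep G R d) (y : QCoRep G R d)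
    (ξ : ∀ i, Matrix (Fin (d i)) (Fin (d i)) R) :
    ∑ i, (ξ i * momentMap G x y i).trace =
      ∑ a, ((ξ (G.t a) * x a - x a * ξ (G.s a)) * y a).trace := by
  simp only [momentMap, Matrix.mul_sub, Matrix.sub_mul, Matrix.trace_sub, Finset.sum_sub_distrib]
  rw [sum_trace_mul_sum_cast G.t, sum_trace_mul_sum_cast G.s]
  congr 1
  · simp only [Matrix.mul_assoc]
  · refine Finset.sum_congr rfl fun a _ => ?_
    rw [← Matrix.mul_assoc, Matrix.trace_mul_comm, Matrix.mul_assoc]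

/-- The moment map, as a linear function of its second argument. -/
noncomputable def momentLin (F : Type) [Field F] {R : Type} [CommRing R] [Algebra F R]
    (x : QRep G R d) : QCoRep G R d →ₗ[F] ∀ i, Matrix (Fin (d i)) (Fin (d i)) R where
  toFun y := momentMap G x y
  map_add' y z := by
    have hc : ∀ {i j : G.V} (h : i = j) (u v : Matrix (Fin (d i)) (Fin (d i)) R),
        cast (congrArg (fun v => Matrix (Fin (d v)) (Fin (d v)) R) h) (u + v) =
        cast (congrArg (fun v => Matrix (Fin (d v)) (Fin (d v)) R) h) u +
        cast (congrArg (fun v => Matrix (Fin (d v)) (Fin (d v)) R) h) v := by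
      rintro i _ rfl u v
      rfl
    ext1 i
    simp only [momentMap, Pi.add_apply, Matrix.mul_add, Matrix.add_mul]
    rw [sub_add_sub_comm, ← Finset.sum_add_distrib, ← Finset.sum_add_distrib]
    congr 1 <;> refine Finset.sum_congr rfl fun a _ => ?_ <;> split_ifs with h <;>
      first | exact hc h _ _ | rw [add_zero]
  map_smul' c y := by
    have hc : ∀ {i j : G.V} (h : i = j) (u : Matrix (Fin (d i)) (Fin (d i)) R),
        cast (congrArg (fun v => Matrix (Fin (d v)) (Fin (d v)) R) h) (c • u) =
        c • cast (congrArg (fun v => Matrix (Fin (d v)) (Fin (d v)) R) h) u := by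
      rintro i _ rfl u
      rfl
    ext1 i
    simp only [momentMap, Pi.smul_apply, Matrix.mul_smul, Matrix.smul_mul, RingHom.id_apply]
    rw [smul_sub, Finset.smul_sum, Finset.smul_sum]
    congr 1 <;> refine Finset.sum_congr rfl fun a _ => ?_ <;> split_ifs with h <;>
      first | exact hc h _ | rw [smul_zero]

/-- The infinitesimal action at a representation. -/
noncomputable def actionLin (F : Type) [Field F] {R : Type} [CommRing R] [Algebra F R]
    (x : QRep G R d) : (∀ i, Matrix (Fin (d i)) (Fin (d i)) R) →ₗ[F] QRep G R d where
  toFun ξ a := intertwine F (ξ (G.t a)) (ξ (G.s a)) (x a)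
  map_add' ξ ζ := by
    ext1 a
    simp only [intertwine_apply, Pi.add_apply, Matrix.add_mul, Matrix.mul_add]
    abel
  map_smul' c ξ := by
    ext1 a
    simp only [intertwine_apply, Pi.smul_apply, Matrix.smul_mul, Matrix.mul_smul, smul_sub,
      RingHom.id_apply]

theorem finrank_ker_momentLin_add {n : ℕ} (x : QRep G (TruncRing F (n + 1)) d) :
    finrank F (LinearMap.ker (momentLin F x)) + (∑ i, d i * d i) * (n + 1) =
      (∑ a, d (G.s a) * d (G.t a)) * (n + 1) + finrank F (LinearMap.ker (actionLin F x)) := by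
  have h := finrank_ker_add_finrank_of_adjoint
    (piPairing_injective fun a : G.E => tracePairing_injective (F := F)
      (l := Fin (d (G.t a))) (m := Fin (d (G.s a))) n)
    (fun y => eq_zero_of_piPairing fun (i : G.V) y => eq_zero_of_tracePairing (F := F) (n := n)
      (l := Fin (d i)) (m := Fin (d i)))
    (f := momentLin F x) (f' := actionLin F x) ?_
  · rw [finrank_squareMatrices, finrank_truncRing, finrank_pi_fintype] at h
    rw [h, Finset.sum_mul]
    congr 1
    refine Finset.sum_congr rfl fun a _ => ?_
    rw [finrank_matrix, Fintype.card_fin, Fintype.card_fin, finrank_truncRing]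
  · intro ξ y
    rw [piPairing_apply, piPairing_apply]
    simp only [tracePairing_apply]
    rw [← map_sum, ← map_sum]
    exact congrArg _ (sum_trace_mul_momentMap x y ξ)

variable [Fintype F]

theorem card_ker_momentLin_mul {n : ℕ} (x : QRep G (TruncRing F (n + 1)) d) :
    Nat.card (LinearMap.ker (momentLin F x)) * Fintype.card F ^ ((∑ i, d i * d i) * (n + 1)) =
      Fintype.card F ^ ((∑ a, d (G.s a) * d (G.t a)) * (n + 1)) *
        Nat.card (LinearMap.ker (actionLin F x)) := by
  rw [Module.natCard_eq_pow_finrank (K := F) (V := LinearMap.ker (momentLin F x)),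
    Module.natCard_eq_pow_finrank (K := F) (V := LinearMap.ker (actionLin F x)),
    Nat.card_eq_fintype_card, ← pow_add, ← pow_add, finrank_ker_momentLin_add]

theorem card_commuting_family {n : ℕ}
    (ξ : ∀ i, Matrix (Fin (d i)) (Fin (d i)) (TruncRing F n)) :
    Nat.card {x : QRep G (TruncRing F n) d // actionLin F x ξ = 0} =
      Fintype.card F ^ jetWeight (blockIncl F d) (arrowRank F G d) (jets ξ) := by
  have e : {x : QRep G (TruncRing F n) d // actionLin F x ξ = 0} ≃
      ∀ a, LinearMap.ker (intertwine F (ξ (G.t a)) (ξ (G.s a))) :=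
    (Equiv.subtypeEquivRight fun x => funext_iff).trans (Equiv.subtypePiEquivPi
      (p := fun a y => y ∈ LinearMap.ker (intertwine F (ξ (G.t a)) (ξ (G.s a)))))
  have h : ∀ a, Nat.card (LinearMap.ker (intertwine F (ξ (G.t a)) (ξ (G.s a)))) = _ := fun a =>
    (Module.natCard_eq_pow_finrank (K := F)).trans
      (congrArg₂ _ Nat.card_eq_fintype_card (finrank_ker_intertwine ξ (G.t a) (G.s a)))
  rw [Nat.card_congr e, Nat.card_pi, Finset.prod_congr rfl fun a _ => h a,
    Finset.prod_pow_eq_pow_sum, Finset.sum_comm]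
  rfl

theorem card_momentMap_eq_zero_mul [Fintype (∀ i, Matrix (Fin (d i)) (Fin (d i)) F)] (n : ℕ) :
    (Nat.card {xy : QRep G (TruncRing F (n + 1)) d × QCoRep G (TruncRing F (n + 1)) d //
      ∀ i : G.V, momentMap G xy.1 xy.2 i = 0} : ℝ) *
        (Fintype.card F : ℝ) ^ ((∑ i, d i * d i) * (n + 1)) =
      (Fintype.card F : ℝ) ^ ((∑ a, d (G.s a) * d (G.t a)) * (n + 1)) *
        jetSum (Fintype.card F : ℝ) (blockIncl F d) (arrowRank F G d) (n + 1) := by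
  have := Fintype.ofFinite (QRep G (TruncRing F (n + 1)) d)
  have := Fintype.ofFinite (∀ i, Matrix (Fin (d i)) (Fin (d i)) (TruncRing F (n + 1)))
  have e1 : {xy : QRep G (TruncRing F (n + 1)) d × QCoRep G (TruncRing F (n + 1)) d //
      ∀ i : G.V, momentMap G xy.1 xy.2 i = 0} ≃
      Σ x : QRep G (TruncRing F (n + 1)) d, LinearMap.ker (momentLin F x) :=
    (Equiv.subtypeEquivRight fun xy => funext_iff.symm).trans
      (Equiv.subtypeProdEquivSigmaSubtype fun x y => momentMap G x y = 0)
  have e2 : (Σ x : QRep G (TruncRing F (n + 1)) d, LinearMap.ker (actionLin F x)) ≃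
      Σ ξ : (∀ i, Matrix (Fin (d i)) (Fin (d i)) (TruncRing F (n + 1))),
        {x : QRep G (TruncRing F (n + 1)) d // actionLin F x ξ = 0} :=
    (Equiv.subtypeProdEquivSigmaSubtype fun x ξ => actionLin F x ξ = 0).symm.trans
      (((Equiv.prodComm _ _).subtypeEquiv fun _ => Iff.rfl).trans
        (Equiv.subtypeProdEquivSigmaSubtype fun ξ x => actionLin F x ξ = 0))
  have h : Nat.card {xy : QRep G (TruncRing F (n + 1)) d × QCoRep G (TruncRing F (n + 1)) d //
      ∀ i : G.V, momentMap G xy.1 xy.2 i = 0} *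
        Fintype.card F ^ ((∑ i, d i * d i) * (n + 1)) =
      Fintype.card F ^ ((∑ a, d (G.s a) * d (G.t a)) * (n + 1)) *
        ∑ ξ : (∀ i, Matrix (Fin (d i)) (Fin (d i)) (TruncRing F (n + 1))),
          Fintype.card F ^ jetWeight (blockIncl F d) (arrowRank F G d) (jets ξ) := by
    rw [Nat.card_congr e1, Nat.card_sigma, Finset.sum_mul,
      Finset.sum_congr rfl fun x _ => card_ker_momentLin_mul x, ← Finset.mul_sum,
      ← Nat.card_sigma, Nat.card_congr e2, Nat.card_sigma,
      Finset.sum_congr rfl fun ξ _ => card_commuting_family ξ]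
  have hs : jetSum (Fintype.card F : ℝ) (blockIncl F d) (arrowRank F G d) (n + 1) =
      ∑ ξ : (∀ i, Matrix (Fin (d i)) (Fin (d i)) (TruncRing F (n + 1))),
        (Fintype.card F : ℝ) ^ jetWeight (blockIncl F d) (arrowRank F G d) (jets ξ) :=
    (Fintype.sum_bijective jets jets_bijective _ _ fun _ => rfl).symm
  rw [hs]
  exact_mod_cast h

end Moment

/-- Let `Q` be a finite quiver and `d ∈ ℕ^{Q₀} ∖ {0}` such that `(Q,d)`
has property (P).  Set `D := Σ_i d_i² − 1 + 2(1 − ⟨d,d⟩)`.  Then there is a finite set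
`S` of primes such that for every prime `p ∉ S` and every power `q` of `p` (i.e. every
finite field of characteristic `p`), the sequence
`n ↦ q^{−nD} · #{(x,y) over 𝔽_q[t]/(t^n) : μ(x,y) = 0}` converges as `n → ∞`. -/
theorem jet_count_convergence (G : FinQuiver) (d : G.V → ℕ) (hd : d ≠ 0)
    (hP : PropertyP G d) :
    ∃ S : Finset ℕ, ∀ p : ℕ, p.Prime → p ∉ S →
      ∀ (F : Type) [Field F] [Fintype F], ringChar F = p →
        ∃ L : ℝ, Filter.Tendsto (fun n : ℕ =>
            (Fintype.card F : ℝ) ^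
                (-(n : ℤ) * ((∑ i : G.V, (d i : ℤ) ^ 2) - 1 + 2 * (1 - eulerForm G d d))) *
              (Nat.card {xy : QRep G (TruncRing F n) d × QCoRep G (TruncRing F n) d //
                  ∀ i : G.V, momentMap G xy.1 xy.2 i = 0} : ℝ))
          Filter.atTop (nhds L) := by
  refine ⟨∅, fun p _ _ F _ _ _ => ?_⟩
  have := Fintype.ofFinite (∀ i, Matrix (Fin (d i)) (Fin (d i)) F)
  obtain ⟨L, hL⟩ := exists_tendsto_jetSum_blockIncl (F := F) hd hP
  refine ⟨L, hL.congr' ?_⟩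
  filter_upwards [Filter.eventually_gt_atTop 0] with n hn
  obtain ⟨n, rfl⟩ := Nat.exists_eq_succ_of_ne_zero hn.ne'
  have hq : (Fintype.card F : ℝ) ≠ 0 := by exact_mod_cast Fintype.card_ne_zero
  have h := card_momentMap_eq_zero_mul (F := F) (G := G) (d := d) n
  set N := (Nat.card {xy : QRep G (TruncRing F (n + 1)) d × QCoRep G (TruncRing F (n + 1)) d //
    ∀ i : G.V, momentMap G xy.1 xy.2 i = 0} : ℝ)
  set J := jetSum (Fintype.card F : ℝ) (blockIncl F d) (arrowRank F G d) (n + 1)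
  set q := (Fintype.card F : ℝ)
  have hexp : -((n + 1 : ℕ) : ℤ) * ((∑ i : G.V, (d i : ℤ) ^ 2) - 1 + 2 * (1 - eulerForm G d d)) =
      (((∑ i, d i * d i) * (n + 1) : ℕ) : ℤ) -
        (((∑ a, d (G.s a) * d (G.t a)) * (n + 1) : ℕ) : ℤ) -
        (((∑ a, d (G.s a) * d (G.t a) + 1) * (n + 1) : ℕ) : ℤ) := by
    rw [eulerForm]
    push_cast
    simp only [sq]
    ring
  change J / (q ^ (∑ a, d (G.s a) * d (G.t a) + 1)) ^ (n + 1) = _ * N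
  rw [Nat.succ_eq_add_one, hexp, zpow_sub₀ hq, zpow_sub₀ hq, zpow_natCast, zpow_natCast,
    zpow_natCast, ← pow_mul, eq_comm, div_mul_eq_mul_div]
  congr 1
  rw [div_mul_eq_mul_div, div_eq_iff (pow_ne_zero _ hq), mul_comm _ N, h, mul_comm]
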